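/- Let n ≥ 1 and p ∈ [1,2], and let ν_pⁿ be the probability measure on ℝⁿ with density c_pⁿ·exp(−Σ_{i=1}ⁿ |x_i|^p / p) with respect to Lebesgue measure. Let μ = exp(−U)·ν_pⁿ be a second probability measure on ℝⁿ, where U : ℝⁿ → ℝ is convex and unconditional, meaning U(±x₁,…,±x_n) = U(x₁,…,x_n) for all x ∈ ℝⁿ and all choices of signs. Then for every k ≥ 1, λ_k^Lip(ℝⁿ,|·|,μ) ≥ λ_k^Lip(ℝⁿ,|·|,ν_pⁿ). -/

import Mathlib

open MeasureTheory Filter Topology ENNReal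

/-- The local Lipschitz constant `|∇f|(x) = limsup_{y→x} |f(y)-f(x)|/d(y,x)`
(equal to `0` at isolated points, by the convention `Real.sInf ∅ = 0`). -/
noncomputable def localLip {Ω : Type*} [PseudoMetricSpace Ω] (f : Ω → ℝ) (x : Ω) : ℝ :=
  Filter.limsup (fun y => |f y - f x| / dist y x) (nhdsWithin x {x}ᶜ)

/-- Membership in the metric Sobolev space `W^{1,2}_Lip(Ω,d,μ)`. -/
def memW12Lip {Ω : Type*} [PseudoMetricSpace Ω] [MeasurableSpace Ω]
    (μ : Measure Ω) (f : Ω → ℝ) : Prop :=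
  LocallyLipschitz f ∧
    (∫⁻ x, ENNReal.ofReal ((f x) ^ 2) ∂μ) + (∫⁻ x, ENNReal.ofReal ((localLip f x) ^ 2) ∂μ) < ⊤

/-- The `k`-th metric eigenvalue `λ_k^Lip(Ω,d,μ)`: the infimum over `k`-dimensional
linear subspaces `F ⊆ W^{1,2}_Lip` of the supremum of the Rayleigh quotient over `F`. -/
noncomputable def lambdaLip {Ω : Type*} [PseudoMetricSpace Ω] [MeasurableSpace Ω]
    (μ : Measure Ω) (k : ℕ) : ℝ :=
  sInf { a : ℝ | ∃ F : Submodule ℝ (Ω → ℝ), Module.finrank ℝ F = k ∧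
    (∀ f ∈ F, memW12Lip μ f) ∧
    a = sSup { r : ℝ | ∃ f ∈ F, (∫ x, (f x) ^ 2 ∂μ) ≠ 0 ∧
      r = (∫ x, (localLip f x) ^ 2 ∂μ) / (∫ x, (f x) ^ 2 ∂μ) } }

/-- The `p`-exponential probability measure `ν_pⁿ` on `ℝⁿ`, with density proportional
to `exp(-∑ᵢ |xᵢ|^p / p)` with respect to Lebesgue measure, normalized to mass one. -/
noncomputable def nuP (n : ℕ) (p : ℝ) : Measure (EuclideanSpace ℝ (Fin n)) :=
  ((volume.withDensity fun x : EuclideanSpace ℝ (Fin n) =>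
      ENNReal.ofReal (Real.exp (-(∑ i, |x i| ^ p) / p))) Set.univ)⁻¹ •
    volume.withDensity fun x : EuclideanSpace ℝ (Fin n) =>
      ENNReal.ofReal (Real.exp (-(∑ i, |x i| ^ p) / p))

namespace SC

section spectral
variable {Ω : Type*} [MetricSpace Ω] [MeasurableSpace Ω] [BorelSpace Ω]
  [hNB : ∀ x : Ω, (𝓝[≠] x).NeBot]

lemma lip_cobdd (f : Ω → ℝ) (x : Ω) :
    IsCoboundedUnder (· ≤ ·) (𝓝[≠] x) (fun y => |f y - f x| / dist y x) :=
  IsBoundedUnder.isCoboundedUnder_le ⟨0, by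
    simp only [eventually_map]; exact Eventually.of_forall fun y => by positivity⟩

lemma lip_bdd {f : Ω → ℝ} (hf : LocallyLipschitz f) (x : Ω) :
    IsBoundedUnder (· ≤ ·) (𝓝[≠] x) (fun y => |f y - f x| / dist y x) := by
  obtain ⟨K, t, ht, hK⟩ := hf x
  refine ⟨K, ?_⟩
  simp only [eventually_map]
  filter_upwards [mem_nhdsWithin_of_mem_nhds ht] with y hy
  have := hK.dist_le_mul y hy x (mem_of_mem_nhds ht)
  rw [Real.dist_eq] at this
  exact div_le_of_le_mul₀ dist_nonneg K.2 this

lemma localLip_le {f : Ω → ℝ} {x : Ω} {c : ℝ} (hc : 0 ≤ c)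
    (h : ∀ᶠ y in 𝓝 x, |f y - f x| ≤ c * dist y x) : localLip f x ≤ c := by
  refine limsup_le_of_le (lip_cobdd f x) ?_
  filter_upwards [mem_nhdsWithin_of_mem_nhds h] with y hy
  exact div_le_of_le_mul₀ dist_nonneg hc hy

lemma ev_of_localLip_lt {f : Ω → ℝ} (hf : LocallyLipschitz f) {x : Ω} {c : ℝ}
    (h : localLip f x < c) : ∀ᶠ y in 𝓝 x, |f y - f x| ≤ c * dist y x := by
  have := eventually_lt_of_limsup_lt h (lip_bdd hf x)
  rw [eventually_nhdsWithin_iff] at this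
  filter_upwards [this] with y hy
  by_cases hyx : y = x
  · simp [hyx]
  · have h1 := hy hyx
    have : 0 < dist y x := dist_pos.2 hyx
    rw [div_lt_iff₀ this] at h1
    exact h1.le

lemma localLip_nonneg {f : Ω → ℝ} (hf : LocallyLipschitz f) (x : Ω) : 0 ≤ localLip f x := by
  refine le_limsup_of_frequently_le (Eventually.frequently ?_) (lip_bdd hf x)
  exact Eventually.of_forall fun y => by positivity

lemma localLip_comp_le {f : Ω → ℝ} (hf : LocallyLipschitz f) {T : Ω → Ω} (hT : LipschitzWith 1 T)
    (x : Ω) : localLip (f ∘ T) x ≤ localLip f (T x) := by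
  refine le_of_forall_gt_imp_ge_of_dense fun c hc => ?_
  have hc0 : 0 ≤ c := (localLip_nonneg hf _).trans hc.le
  refine localLip_le hc0 ?_
  have := hT.continuous.continuousAt.eventually (ev_of_localLip_lt hf hc)
  filter_upwards [this] with y hy
  refine hy.trans (mul_le_mul_of_nonneg_left ?_ hc0)
  simpa using hT.dist_le_mul y x

lemma localLip_add_le {f g : Ω → ℝ} (hf : LocallyLipschitz f) (hg : LocallyLipschitz g) (x : Ω) :
    localLip (f + g) x ≤ localLip f x + localLip g x := by
  refine le_of_forall_pos_le_add fun e he => ?_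
  have h1 := ev_of_localLip_lt hf (show localLip f x < localLip f x + e/2 by linarith)
  have h2 := ev_of_localLip_lt hg (show localLip g x < localLip g x + e/2 by linarith)
  refine localLip_le ?_ ?_
  · have := localLip_nonneg hf x
    have := localLip_nonneg hg x
    linarith
  · filter_upwards [h1, h2] with y h1 h2
    have : (f + g) y - (f + g) x = (f y - f x) + (g y - g x) := by simp; ring
    rw [this]
    refine (abs_add_le _ _).trans ?_
    linarith

lemma localLip_smul_le {f : Ω → ℝ} (hf : LocallyLipschitz f) (a : ℝ) (x : Ω) :
    localLip (a • f) x ≤ |a| * localLip f x := by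
  have key : ∀ e > 0, localLip (a • f) x ≤ |a| * (localLip f x + e) := by
    intro e he
    have h1 := ev_of_localLip_lt hf (show localLip f x < localLip f x + e by linarith)
    refine localLip_le ?_ ?_
    · have := localLip_nonneg hf x
      positivity
    · filter_upwards [h1] with y h1
      have : (a • f) y - (a • f) x = a * (f y - f x) := by simp; ring
      rw [this, abs_mul, mul_assoc]
      exact mul_le_mul_of_nonneg_left h1 (abs_nonneg _)
  refine le_of_forall_pos_le_add fun e he => ?_
  have h := key (e / (|a| + 1)) (by positivity)
  refine h.trans ?_
  rw [mul_add]
  have : |a| * (e / (|a| + 1)) ≤ e := by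
    rw [mul_div_assoc', div_le_iff₀ (by positivity)]
    nlinarith [abs_nonneg a]
  linarith

lemma measurable_localLip {f : Ω → ℝ} (hf : LocallyLipschitz f) : Measurable (localLip f) := by
  refine measurable_of_Ioi fun c => ?_
  let S : ℚ → ℕ → Set Ω := fun a m =>
    {x | ∃ y, 0 < dist y x ∧ dist y x < 1 / ((m : ℝ) + 1) ∧ (a : ℝ) * dist y x < |f y - f x|}
  have hS : ∀ a m, IsOpen (S a m) := by
    intro a m
    have : S a m = ⋃ y, {x | 0 < dist y x ∧ dist y x < 1 / ((m : ℝ) + 1) ∧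
        (a : ℝ) * dist y x < |f y - f x|} := by
      ext x; simp [S]
    rw [this]
    refine isOpen_iUnion fun y => ?_
    have hfc := hf.continuous
    have o1 : IsOpen {x : Ω | 0 < dist y x} := isOpen_lt (by fun_prop) (by fun_prop)
    have o2 : IsOpen {x : Ω | dist y x < 1 / ((m : ℝ) + 1)} := isOpen_lt (by fun_prop) (by fun_prop)
    have o3 : IsOpen {x : Ω | (a : ℝ) * dist y x < |f y - f x|} :=
      isOpen_lt (by fun_prop) (by fun_prop)
    exact o1.inter (o2.inter o3)
  have : localLip f ⁻¹' Set.Ioi c = ⋃ a : {a : ℚ // c < a}, ⋂ m, S a m := by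
    ext x
    simp only [Set.mem_preimage, Set.mem_Ioi, Set.mem_iUnion, Set.mem_iInter]
    constructor
    · intro h
      obtain ⟨a, ha1, ha2⟩ := exists_rat_btwn h
      refine ⟨⟨a, ha1⟩, fun m => ?_⟩
      have hfr := frequently_lt_of_lt_limsup (lip_cobdd f x) ha2
      have hm : ∀ᶠ y in 𝓝[≠] x, dist y x < 1 / ((m : ℝ) + 1) ∧ y ≠ x := by
        have h1 : ∀ᶠ y in 𝓝[≠] x, dist y x < 1 / ((m : ℝ) + 1) :=
          mem_nhdsWithin_of_mem_nhds (Metric.ball_mem_nhds x (by positivity))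
        have h2 : ∀ᶠ y in 𝓝[≠] x, y ≠ x := self_mem_nhdsWithin
        exact h1.and h2
      obtain ⟨y, hy1, hy2, hy3⟩ := (hfr.and_eventually hm).exists
      have hd : 0 < dist y x := dist_pos.2 hy3
      exact ⟨y, hd, hy2, by rwa [lt_div_iff₀ hd] at hy1⟩
    · rintro ⟨⟨a, ha⟩, h⟩
      refine lt_of_lt_of_le ha ?_
      refine le_limsup_of_frequently_le ?_ (lip_bdd hf x)
      rw [frequently_nhdsWithin_iff, Metric.nhds_basis_ball.frequently_iff]
      intro r hr
      obtain ⟨m, hm⟩ := exists_nat_one_div_lt hr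
      obtain ⟨y, h0, h1, h2⟩ := h m
      refine ⟨y, h1.trans hm, ?_, dist_pos.1 h0⟩
      rw [le_div_iff₀ h0]
      exact h2.le
  rw [this]
  exact MeasurableSet.iUnion fun a => MeasurableSet.iInter fun m => (hS a m).measurableSet

lemma memW_int {μ : Measure Ω} {f : Ω → ℝ} (h : memW12Lip μ f) :
    Integrable (fun x => f x ^ 2) μ ∧ Integrable (fun x => localLip f x ^ 2) μ := by
  obtain ⟨hf, h⟩ := h
  rw [ENNReal.add_lt_top] at h
  refine ⟨⟨(hf.continuous.pow 2).measurable.aestronglyMeasurable, ?_⟩,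
    ⟨((measurable_localLip hf).pow_const 2).aestronglyMeasurable, ?_⟩⟩
  · rw [hasFiniteIntegral_iff_ofReal (Eventually.of_forall fun x => by positivity)]; exact h.1
  · rw [hasFiniteIntegral_iff_ofReal (Eventually.of_forall fun x => by positivity)]; exact h.2

lemma memW_comp {ν μ : Measure Ω} {T : Ω → Ω} (hT : LipschitzWith 1 T) (hmap : ν.map T = μ)
    {f : Ω → ℝ} (h : memW12Lip μ f) : memW12Lip ν (f ∘ T) ∧
      (∫ x, (f ∘ T) x ^ 2 ∂ν) = ∫ x, f x ^ 2 ∂μ ∧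
      (∫ x, localLip (f ∘ T) x ^ 2 ∂ν) ≤ ∫ x, localLip f x ^ 2 ∂μ := by
  have hTm : Measurable T := hT.continuous.measurable
  obtain ⟨i1, i2⟩ := memW_int h
  have hf := h.1
  have hfT : LocallyLipschitz (f ∘ T) := hf.comp hT.locallyLipschitz
  have hle : ∀ x, localLip (f ∘ T) x ^ 2 ≤ localLip f (T x) ^ 2 := fun x =>
    pow_le_pow_left₀ (localLip_nonneg hfT x) (localLip_comp_le hf hT x) 2
  have e1 : (∫⁻ x, ENNReal.ofReal ((f ∘ T) x ^ 2) ∂ν) = ∫⁻ x, ENNReal.ofReal (f x ^ 2) ∂μ := by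
    rw [← hmap, lintegral_map _ hTm]
    · rfl
    · exact ((hf.continuous.pow 2).measurable).ennreal_ofReal
  have e2 : (∫⁻ x, ENNReal.ofReal (localLip f (T x) ^ 2) ∂ν)
      = ∫⁻ x, ENNReal.ofReal (localLip f x ^ 2) ∂μ := by
    rw [← hmap, lintegral_map _ hTm]
    exact ((measurable_localLip hf).pow_const 2).ennreal_ofReal
  refine ⟨⟨hfT, ?_⟩, ?_, ?_⟩
  · refine lt_of_le_of_lt (add_le_add e1.le ?_) h.2
    rw [← e2]
    exact lintegral_mono fun x => ENNReal.ofReal_le_ofReal (hle x)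
  · rw [← hmap, integral_map hTm.aemeasurable]
    · rfl
    · exact (hf.continuous.pow 2).measurable.aestronglyMeasurable
  · have hm : AEStronglyMeasurable (fun x => localLip f x ^ 2) (ν.map T) :=
      ((measurable_localLip hf).pow_const 2).aestronglyMeasurable
    have i2' : Integrable (fun x => localLip f x ^ 2) (ν.map T) := by rw [hmap]; exact i2
    rw [← hmap, integral_map hTm.aemeasurable hm]
    refine integral_mono_of_nonneg (Eventually.of_forall fun x => by positivity) ?_
      (Eventually.of_forall hle)
    exact (integrable_map_measure hm hTm.aemeasurable).1 i2'

lemma int_sq_zero {μ : Measure Ω} [μ.IsOpenPosMeasure] {f : Ω → ℝ} (hf : Continuous f)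
    (hi : Integrable (fun x => f x ^ 2) μ) (h : ∫ x, f x ^ 2 ∂μ = 0) : f = 0 := by
  rw [integral_eq_zero_iff_of_nonneg (fun x => by positivity) hi] at h
  have := (Continuous.ae_eq_iff_eq μ (hf.pow 2) continuous_const).1 h
  funext x
  have h3 : f x ^ 2 = 0 := congrFun this x
  exact pow_eq_zero_iff (two_ne_zero) |>.1 h3

/-- Rayleigh quotients are bounded on finite dimensional spaces. -/
lemma rayleigh_bdd {μ : Measure Ω} [μ.IsOpenPosMeasure] (F : Submodule ℝ (Ω → ℝ))
    [FiniteDimensional ℝ F] (hF : ∀ f ∈ F, memW12Lip μ f) :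
    BddAbove { r : ℝ | ∃ f ∈ F, (∫ x, (f x) ^ 2 ∂μ) ≠ 0 ∧
      r = (∫ x, (localLip f x) ^ 2 ∂μ) / (∫ x, (f x) ^ 2 ∂μ) } := by
  classical
  let b := Module.finBasis ℝ F
  let m := Module.finrank ℝ F
  let B : Fin m → Ω → ℝ := fun i => (b i : Ω → ℝ)
  have hB : ∀ i, memW12Lip μ (B i) := fun i => hF _ (b i).2
  let comb : (Fin m → ℝ) → Ω → ℝ := fun c => ∑ i, c i • B i
  have hcomb : ∀ c, comb c ∈ F := fun c => F.sum_mem fun i _ => F.smul_mem _ (b i).2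
  have hLL : ∀ (s : Finset (Fin m)) (c : Fin m → ℝ) (x : Ω),
      LocallyLipschitz (∑ i ∈ s, c i • B i) ∧
      localLip (∑ i ∈ s, c i • B i) x ≤ ∑ i ∈ s, |c i| * localLip (B i) x := by
    intro s c x
    have hll : ∀ s : Finset (Fin m), LocallyLipschitz (∑ i ∈ s, c i • B i) := fun s =>
      (hF _ (F.sum_mem fun i _ => F.smul_mem _ (b i).2)).1
    induction s using Finset.induction_on with
    | empty =>
      refine ⟨hll _, ?_⟩
      simp only [Finset.sum_empty]
      exact localLip_le le_rfl (Eventually.of_forall fun y => by simp)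
    | insert a s ha ih =>
      refine ⟨hll _, ?_⟩
      rw [Finset.sum_insert ha, Finset.sum_insert ha]
      refine (localLip_add_le ?_ ih.1 x).trans (add_le_add (localLip_smul_le (hB a).1 _ _) ih.2)
      exact (hF _ (F.smul_mem _ (b a).2)).1
  let q : (Fin m → ℝ) → ℝ := fun c => ∫ x, comb c x ^ 2 ∂μ
  have hprod : ∀ i j, Integrable (fun x => B i x * B j x) μ := by
    intro i j
    have h1 := (memW_int (hB i)).1
    have h2 := (memW_int (hB j)).1
    refine (h1.add h2).mono' ?_ (Eventually.of_forall fun x => ?_)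
    · exact ((hB i).1.continuous.mul (hB j).1.continuous).measurable.aestronglyMeasurable
    · simp only [Real.norm_eq_abs, Pi.add_apply, abs_mul]
      nlinarith [sq_abs (B i x), sq_abs (B j x), sq_nonneg (|B i x| - |B j x|),
        sq_nonneg (|B i x| + |B j x|)]
  have hq : ∀ c, q c = ∑ i, ∑ j, c i * c j * ∫ x, B i x * B j x ∂μ := by
    intro c
    have : ∀ x, comb c x ^ 2 = ∑ i, ∑ j, c i * c j * (B i x * B j x) := by
      intro x
      simp only [comb, Finset.sum_apply, Pi.smul_apply, smul_eq_mul, sq, Finset.sum_mul_sum]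
      exact Finset.sum_congr rfl fun i _ => Finset.sum_congr rfl fun j _ => by ring
    simp only [q, this]
    rw [integral_finsetSum _ (fun i _ => integrable_finsetSum _
      fun j _ => (hprod i j).const_mul _)]
    refine Finset.sum_congr rfl fun i _ => ?_
    rw [integral_finsetSum _ (fun j _ => (hprod i j).const_mul _)]
    exact Finset.sum_congr rfl fun j _ => integral_const_mul _ _
  have hqc : Continuous q := by
    have : q = fun c => ∑ i, ∑ j, c i * c j * ∫ x, B i x * B j x ∂μ := funext hq
    rw [this]; fun_prop
  have hqpos : ∀ c, c ≠ 0 → 0 < q c := by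
    intro c hc
    have h0 : 0 ≤ q c := integral_nonneg fun x => by positivity
    refine lt_of_le_of_ne h0 fun h => hc ?_
    have hz := int_sq_zero (hF _ (hcomb c)).1.continuous (memW_int (hF _ (hcomb c))).1 h.symm
    have : (∑ i, c i • b i : F) = 0 := by
      apply Subtype.ext
      simpa [comb, B] using hz
    funext i
    exact (Fintype.linearIndependent_iff.1 b.linearIndependent c this) i
  have hqs : ∀ (a : ℝ) c, q (a • c) = a ^ 2 * q c := by
    intro a c
    rw [hq, hq, Finset.mul_sum]
    refine Finset.sum_congr rfl fun i _ => ?_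
    rw [Finset.mul_sum]
    refine Finset.sum_congr rfl fun j _ => ?_
    simp; ring
  obtain ⟨k, hk, hkq⟩ : ∃ k > 0, ∀ c, k * ‖c‖ ^ 2 ≤ q c := by
    rcases (Metric.sphere (0 : Fin m → ℝ) 1).eq_empty_or_nonempty with he | hne
    · refine ⟨1, one_pos, fun c => ?_⟩
      have : c = 0 := by
        by_contra hc
        have : (‖c‖⁻¹ • c) ∈ Metric.sphere (0 : Fin m → ℝ) 1 := by
          simp [norm_smul, hc]
        rw [he] at this; exact this
      simp [this, hq]
    · obtain ⟨c0, hc0, hmin⟩ := (isCompact_sphere (0 : Fin m → ℝ) 1).exists_isMinOn hne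
        hqc.continuousOn
      refine ⟨q c0, hqpos _ ?_, fun c => ?_⟩
      · rintro rfl; simp at hc0
      · by_cases hc : c = 0
        · simp [hc, hq]
        · have hmem : (‖c‖⁻¹ • c) ∈ Metric.sphere (0 : Fin m → ℝ) 1 := by
            simp [norm_smul, hc]
          have h1 : q c0 ≤ q (‖c‖⁻¹ • c) := hmin hmem
          rw [hqs] at h1
          have hn : 0 < ‖c‖ := norm_pos_iff.2 hc
          calc q c0 * ‖c‖ ^ 2 ≤ (‖c‖⁻¹ ^ 2 * q c) * ‖c‖ ^ 2 := by gcongr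
            _ = q c := by field_simp
  let S : Ω → ℝ := fun x => ∑ i, localLip (B i) x ^ 2
  have hSint : Integrable S μ := integrable_finsetSum _ fun i _ => (memW_int (hB i)).2
  refine ⟨m * (∫ x, S x ∂μ) / k, ?_⟩
  rintro r ⟨f, hf, hne, rfl⟩
  obtain ⟨c, rfl⟩ : ∃ c, comb c = f := by
    refine ⟨fun i => b.repr ⟨f, hf⟩ i, ?_⟩
    have := congrArg Subtype.val (b.sum_repr ⟨f, hf⟩)
    rw [Submodule.coe_sum] at this
    exact this
  have hqp : 0 < q c := lt_of_le_of_ne (integral_nonneg fun x => by positivity) (Ne.symm hne)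
  change _ / q c ≤ _
  have hbound : (∫ x, localLip (comb c) x ^ 2 ∂μ) ≤ (m * ‖c‖ ^ 2) * ∫ x, S x ∂μ := by
    rw [← integral_const_mul]
    refine integral_mono (memW_int (hF _ (hcomb c))).2 (hSint.const_mul _) fun x => ?_
    have h1 := (hLL Finset.univ c x).2
    have h0 := localLip_nonneg (hLL Finset.univ c x).1 x
    have h2 : ∑ i, |c i| * localLip (B i) x ≤ ∑ i, ‖c‖ * localLip (B i) x :=
      Finset.sum_le_sum fun i _ => mul_le_mul_of_nonneg_right (norm_le_pi_norm c i)
        (localLip_nonneg (hB i).1 x)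
    have h3 : (∑ i, ‖c‖ * localLip (B i) x) ^ 2 ≤ m * ∑ i, (‖c‖ * localLip (B i) x) ^ 2 := by
      have := sq_sum_le_card_mul_sum_sq (s := Finset.univ) (f := fun i => ‖c‖ * localLip (B i) x)
      simpa using this
    have h4 : localLip (comb c) x ^ 2 ≤ (∑ i, ‖c‖ * localLip (B i) x) ^ 2 :=
      pow_le_pow_left₀ h0 (h1.trans h2) 2
    refine (h4.trans h3).trans (le_of_eq ?_)
    simp only [S, mul_pow, ← Finset.mul_sum]
    ring
  have hI : 0 ≤ ∫ x, S x ∂μ := integral_nonneg fun x => Finset.sum_nonneg fun i _ => by positivity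
  rw [div_le_div_iff₀ hqp hk]
  calc (∫ x, localLip (comb c) x ^ 2 ∂μ) * k ≤ ((m * ‖c‖ ^ 2) * ∫ x, S x ∂μ) * k := by gcongr
    _ = (m * ∫ x, S x ∂μ) * (k * ‖c‖ ^ 2) := by ring
    _ ≤ (m * ∫ x, S x ∂μ) * q c := by gcongr; exact hkq c

theorem spectral_of_contraction {ν μ : Measure Ω} [μ.IsOpenPosMeasure]
    {T : Ω → Ω} (hT : LipschitzWith 1 T) (hmap : ν.map T = μ) (k : ℕ) (hk : 1 ≤ k)
    (hne : ∃ F : Submodule ℝ (Ω → ℝ), Module.finrank ℝ F = k ∧ (∀ f ∈ F, memW12Lip μ f)) :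
    lambdaLip ν k ≤ lambdaLip μ k := by
  unfold lambdaLip
  refine le_csInf ?_ ?_
  · obtain ⟨F, h1, h2⟩ := hne
    exact ⟨_, F, h1, h2, rfl⟩
  rintro a ⟨F, hFk, hF, rfl⟩
  have : FiniteDimensional ℝ F := Module.finite_of_finrank_pos (by omega)
  let L : (Ω → ℝ) →ₗ[ℝ] (Ω → ℝ) := LinearMap.funLeft ℝ ℝ T
  have hL : ∀ f, L f = f ∘ T := fun f => rfl
  have hinj : Function.Injective (L.domRestrict F) := by
    rw [← LinearMap.ker_eq_bot, LinearMap.ker_eq_bot']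
    rintro ⟨f, hf⟩ h
    have h' : f ∘ T = 0 := h
    obtain ⟨_, h2, _⟩ := memW_comp hT hmap (hF f hf)
    rw [h'] at h2
    apply Subtype.ext
    refine int_sq_zero (hF f hf).1.continuous (memW_int (hF f hf)).1 ?_
    rw [← h2]; simp
  have hfin : Module.finrank ℝ (F.map L) = k := by
    rw [← hFk, ← LinearMap.range_domRestrict]
    exact LinearMap.finrank_range_of_inj hinj
  have hFL : ∀ f ∈ F.map L, memW12Lip ν f := by
    rintro _ ⟨f, hf, rfl⟩
    exact (memW_comp hT hmap (hF f hf)).1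
  refine csInf_le_of_le (b := sSup { r : ℝ | ∃ f ∈ F.map L, (∫ x, (f x) ^ 2 ∂ν) ≠ 0 ∧
      r = (∫ x, (localLip f x) ^ 2 ∂ν) / (∫ x, (f x) ^ 2 ∂ν) }) ?_ ⟨F.map L, hfin, hFL, rfl⟩ ?_
  · refine ⟨0, ?_⟩
    rintro a ⟨G, -, -, rfl⟩
    refine Real.sSup_nonneg ?_
    rintro r ⟨f, -, -, rfl⟩
    exact div_nonneg (integral_nonneg fun x => by positivity) (integral_nonneg fun x => by positivity)
  · refine Real.sSup_le ?_ ?_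
    · rintro r ⟨_, ⟨f, hf, rfl⟩, hne, rfl⟩
      obtain ⟨_, h2, h3⟩ := memW_comp hT hmap (hF f hf)
      rw [hL] at hne ⊢
      rw [h2] at hne ⊢
      refine le_trans ?_ (le_csSup (rayleigh_bdd F hF) ⟨f, hf, hne, rfl⟩)
      exact div_le_div_of_nonneg_right h3 (integral_nonneg fun x => by positivity)
    · refine Real.sSup_nonneg ?_
      rintro r ⟨f, -, -, rfl⟩
      exact div_nonneg (integral_nonneg fun x => by positivity)
        (integral_nonneg fun x => by positivity)

end spectral

end SC

namespace SC

/-! ### Prékopa–Leindler -/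

open scoped Pointwise in
lemma vol_affine_image {a : ℝ} (ha : 0 < a) (c : ℝ) (K : Set ℝ) :
    volume ((fun x => c + a * x) '' K) = ENNReal.ofReal a * volume K := by
  have : (fun x => c + a * x) '' K = (fun x => c + x) '' (a • K) := by
    rw [← Set.image_smul, Set.image_image]; simp
  rw [this, Set.image_add_left, measure_preimage_add, Measure.addHaar_smul]
  simp [abs_of_pos ha]

/-- one dimensional Brunn–Minkowski for compact sets -/
lemma bm_compact {K L : Set ℝ} (hK : IsCompact K) (hL : IsCompact L) (hK0 : K.Nonempty)
    (hL0 : L.Nonempty) {a b : ℝ} (ha : 0 < a) (hb : 0 < b) {C : Set ℝ}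
    (hC : ∀ x ∈ K, ∀ y ∈ L, a * x + b * y ∈ C) :
    ENNReal.ofReal a * volume K + ENNReal.ofReal b * volume L ≤ volume C := by
  obtain ⟨M, hM, hM'⟩ := hK.exists_isGreatest hK0
  obtain ⟨m, hm, hm'⟩ := hL.exists_isLeast hL0
  rw [← vol_affine_image ha (b * m) K, ← vol_affine_image hb (a * M) L]
  have hQc : MeasurableSet ((fun x => a * M + b * x) '' L) :=
    (hL.image (by fun_prop)).measurableSet
  rw [← measure_union₀ hQc.nullMeasurableSet]
  · refine measure_mono ?_
    rintro z (⟨x, hx, rfl⟩ | ⟨y, hy, rfl⟩)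
    · have := hC x hx m hm
      simpa [add_comm] using this
    · exact hC M hM y hy
  · refine measure_mono_null (t := {a * M + b * m}) ?_ (by simp)
    rintro z ⟨⟨x, hx, rfl⟩, ⟨y, hy, h⟩⟩
    have h1 : x ≤ M := hM' hx
    have h2 : m ≤ y := hm' hy
    simp only [Set.mem_singleton_iff] at h ⊢
    nlinarith

lemma bm_one {A B C : Set ℝ} (hA : MeasurableSet A) (hB : MeasurableSet B) (hA0 : A.Nonempty)
    (hB0 : B.Nonempty) {a b : ℝ} (ha : 0 < a) (hb : 0 < b)
    (hC : ∀ x ∈ A, ∀ y ∈ B, a * x + b * y ∈ C) :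
    ENNReal.ofReal a * volume A + ENNReal.ofReal b * volume B ≤ volume C := by
  obtain ⟨x0, hx0⟩ := hA0
  obtain ⟨y0, hy0⟩ := hB0
  have key : ∀ S : Set ℝ, MeasurableSet S →
      volume S = ⨆ K : {K : Set ℝ // K ⊆ S ∧ IsCompact K}, volume (K : Set ℝ) := by
    intro S hS
    rw [hS.measure_eq_iSup_isCompact, iSup_subtype]
    simp only [iSup_and]
  have : Nonempty {K : Set ℝ // K ⊆ A ∧ IsCompact K} := ⟨∅, by simp⟩
  have : Nonempty {K : Set ℝ // K ⊆ B ∧ IsCompact K} := ⟨∅, by simp⟩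
  rw [key A hA, key B hB]
  simp only [ENNReal.mul_iSup]
  refine ENNReal.iSup_add_iSup_le ?_
  rintro ⟨K, hK, hKc⟩ ⟨L, hL, hLc⟩
  have h := bm_compact (hKc.insert x0) (hLc.insert y0) (Set.insert_nonempty _ _)
    (Set.insert_nonempty _ _) ha hb (C := C) (fun x hx y hy =>
      hC x (Set.insert_subset hx0 hK hx) y (Set.insert_subset hy0 hL hy))
  refine le_trans ?_ h
  gcongr <;> exact Set.subset_insert _ _

lemma pl_core {f g h : ℝ → ℝ} (hf : Measurable f) (hg : Measurable g) (hh : Measurable h)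
    (f0 : ∀ x, 0 ≤ f x) (g0 : ∀ x, 0 ≤ g x) (h0 : ∀ x, 0 ≤ h x) (f1 : ∀ x, f x ≤ 1)
    (g1 : ∀ x, g x ≤ 1) (fs : ∀ t < 1, ∃ x, t < f x) (gs : ∀ t < 1, ∃ x, t < g x)
    {a b : ℝ} (ha : 0 < a) (hb : 0 < b) (hab : a + b = 1)
    (H : ∀ x y, f x ^ a * g y ^ b ≤ h (a * x + b * y)) :
    ENNReal.ofReal a * (∫⁻ x, ENNReal.ofReal (f x)) + ENNReal.ofReal b *
      (∫⁻ x, ENNReal.ofReal (g x)) ≤ ∫⁻ x, ENNReal.ofReal (h x) := by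
  rw [lintegral_eq_lintegral_meas_lt volume (Eventually.of_forall f0) hf.aemeasurable,
    lintegral_eq_lintegral_meas_lt volume (Eventually.of_forall g0) hg.aemeasurable,
    lintegral_eq_lintegral_meas_lt volume (Eventually.of_forall h0) hh.aemeasurable]
  have am : ∀ u : ℝ → ℝ, Measurable fun t => (volume {x | t < u x} : ℝ≥0∞) := by
    intro u
    refine Antitone.measurable fun s t hst => measure_mono fun x hx => ?_
    exact lt_of_le_of_lt hst hx
  rw [← lintegral_const_mul _ (am f), ← lintegral_const_mul _ (am g),
    ← lintegral_add_left ((am f).const_mul _)]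
  refine setLIntegral_mono (am h) fun t ht => ?_
  have ht0 : (0 : ℝ) < t := ht
  rcases lt_or_ge t 1 with h1 | h1
  · refine bm_one (measurableSet_lt measurable_const hf) (measurableSet_lt measurable_const hg)
      (fs t h1) (gs t h1) ha hb ?_
    intro x hx y hy
    refine lt_of_lt_of_le ?_ (H x y)
    calc t = t ^ a * t ^ b := by rw [← Real.rpow_add ht0, hab, Real.rpow_one]
      _ < f x ^ a * g y ^ b := by
        have := Real.rpow_lt_rpow ht0.le hx ha
        have := Real.rpow_lt_rpow ht0.le hy hb
        gcongr
  · have e1 : {x | t < f x} = ∅ := by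
      ext x; simp only [Set.mem_ofPred_eq, Set.mem_empty_iff_false, iff_false, not_lt]
      exact (f1 x).trans h1
    have e2 : {x | t < g x} = ∅ := by
      ext x; simp only [Set.mem_ofPred_eq, Set.mem_empty_iff_false, iff_false, not_lt]
      exact (g1 x).trans h1
    simp [e1, e2]

lemma enn_amgm {a b : ℝ} (ha : 0 < a) (hb : 0 < b) (hab : a + b = 1) (x y : ℝ≥0∞) :
    x ^ a * y ^ b ≤ ENNReal.ofReal a * x + ENNReal.ofReal b * y := by
  have pa : ENNReal.ofReal a ≠ 0 := by simpa using ha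
  have pb : ENNReal.ofReal b ≠ 0 := by simpa using hb
  induction x with
  | top => simp [ENNReal.mul_top pa]
  | coe x =>
  induction y with
  | top => simp [ENNReal.mul_top pb]
  | coe y =>
  have := NNReal.geom_mean_le_arith_mean2_weighted a.toNNReal b.toNNReal x y (by
    rw [← Real.toNNReal_add ha.le hb.le, hab]; simp)
  rw [Real.coe_toNNReal _ ha.le, Real.coe_toNNReal _ hb.le] at this
  rw [← ENNReal.coe_rpow_of_nonneg _ ha.le, ← ENNReal.coe_rpow_of_nonneg _ hb.le]
  rw [ENNReal.ofReal, ENNReal.ofReal]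
  exact_mod_cast this

/-- Prékopa–Leindler property (for bounded functions) -/
def PL {X : Type*} [AddCommGroup X] [Module ℝ X] [MeasurableSpace X] (κ : Measure X) : Prop :=
  ∀ (a b : ℝ), 0 < a → 0 < b → a + b = 1 → ∀ f g h : X → ℝ≥0∞, Measurable f → Measurable g →
    Measurable h → (∃ M : NNReal, ∀ x, f x ≤ M ∧ g x ≤ M) →
    (∀ x y, f x ^ a * g y ^ b ≤ h (a • x + b • y)) →
    (∫⁻ x, f x ∂κ) ^ a * (∫⁻ x, g x ∂κ) ^ b ≤ ∫⁻ x, h x ∂κ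

lemma sup_norm_aux {f : ℝ → ℝ≥0∞} {F : ℝ≥0∞} (hF : F = ⨆ x, f x) (F0 : F ≠ 0) (Ft : F ≠ ⊤) :
    (∀ x, f x / F ≤ 1) ∧ ∀ t : ℝ, t < 1 → ∃ x, t < (f x / F).toReal := by
  have h1 : ∀ x, f x / F ≤ 1 := fun x =>
    ENNReal.div_le_of_le_mul (by rw [one_mul, hF]; exact le_iSup f x)
  refine ⟨h1, fun t ht => ?_⟩
  by_contra! hcon
  have h2 : ∀ x, f x ≤ ENNReal.ofReal t * F := by
    intro x
    have := ENNReal.le_ofReal_iff_toReal_le (ne_top_of_le_ne_top one_ne_top (h1 x))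
      (ENNReal.toReal_nonneg.trans (hcon x)) |>.2 (hcon x)
    rwa [ENNReal.div_le_iff F0 Ft] at this
  have h3 : F ≤ ENNReal.ofReal t * F := by
    conv_lhs => rw [hF]
    exact iSup_le h2
  have h4 : ENNReal.ofReal t * F < 1 * F := by
    rw [ENNReal.mul_lt_mul_iff_left F0 Ft]
    exact ENNReal.ofReal_lt_one.2 ht
  rw [one_mul] at h4
  exact absurd h3 (not_le.2 h4)

lemma pl_volume : PL (volume : Measure ℝ) := by
  rintro a b ha hb hab f g h hf hg hh ⟨M, hM⟩ H
  obtain ⟨F, hF⟩ : ∃ F, F = ⨆ x, f x := ⟨_, rfl⟩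
  obtain ⟨G, hG⟩ : ∃ G, G = ⨆ x, g x := ⟨_, rfl⟩
  have Ft : F ≠ ⊤ := ne_top_of_le_ne_top coe_ne_top (hF.le.trans (iSup_le fun x => (hM x).1))
  have Gt : G ≠ ⊤ := ne_top_of_le_ne_top coe_ne_top (hG.le.trans (iSup_le fun x => (hM x).2))
  by_cases F0 : F = 0
  · have : ∀ x, f x = 0 := fun x => by
      have := le_iSup f x
      rw [← hF, F0] at this; simpa using this
    simp [this, ha]
  by_cases G0 : G = 0
  · have : ∀ x, g x = 0 := fun x => by
      have := le_iSup g x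
      rw [← hG, G0] at this; simpa using this
    simp [this, hb]
  obtain ⟨f1, fs⟩ := sup_norm_aux hF F0 Ft
  obtain ⟨g1, gs⟩ := sup_norm_aux hG G0 Gt
  have fa0 : F ^ a ≠ 0 := by simp [ENNReal.rpow_eq_zero_iff, F0, ha, Ft]
  have ga0 : G ^ b ≠ 0 := by simp [ENNReal.rpow_eq_zero_iff, G0, hb, Gt]
  have fat : F ^ a ≠ ⊤ := ENNReal.rpow_ne_top_of_nonneg ha.le Ft
  have gat : G ^ b ≠ ⊤ := ENNReal.rpow_ne_top_of_nonneg hb.le Gt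
  let P := F ^ a * G ^ b
  have P0 : P ≠ 0 := mul_ne_zero fa0 ga0
  have Pt : P ≠ ⊤ := ENNReal.mul_ne_top fat gat
  have hnt : ∀ x, min (h x / P) 1 ≠ ⊤ := fun x => ne_top_of_le_ne_top one_ne_top (min_le_right _ _)
  have H' : ∀ x y, (f x / F) ^ a * (g y / G) ^ b ≤ min (h (a * x + b * y) / P) 1 := by
    intro x y
    refine le_min ?_ ?_
    · rw [ENNReal.div_rpow_of_nonneg _ _ ha.le, ENNReal.div_rpow_of_nonneg _ _ hb.le,
        ← ENNReal.mul_div_mul_comm (Or.inl fa0) (Or.inl fat)]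
      exact ENNReal.div_le_div_right (H x y) _
    · calc (f x / F) ^ a * (g y / G) ^ b ≤ 1 ^ a * 1 ^ b := by
            gcongr
            exacts [f1 x, g1 y]
        _ = 1 := by simp
  have core := pl_core (f := fun x => (f x / F).toReal) (g := fun x => (g x / G).toReal)
    (h := fun x => (min (h x / P) 1).toReal) (hf.div_const F).ennreal_toReal
    (hg.div_const G).ennreal_toReal ((hh.div_const P).min measurable_const).ennreal_toReal
    (fun _ => ENNReal.toReal_nonneg) (fun _ => ENNReal.toReal_nonneg)
    (fun _ => ENNReal.toReal_nonneg)
    (fun x => ENNReal.toReal_le_of_le_ofReal zero_le_one (by simpa using f1 x))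
    (fun x => ENNReal.toReal_le_of_le_ofReal zero_le_one (by simpa using g1 x)) fs gs ha hb hab
    (fun x y => by
      rw [ENNReal.toReal_rpow, ENNReal.toReal_rpow, ← ENNReal.toReal_mul]
      exact ENNReal.toReal_mono (hnt _) (H' x y))
  simp only [ENNReal.ofReal_toReal (hnt _),
    ENNReal.ofReal_toReal (ne_top_of_le_ne_top one_ne_top (f1 _)),
    ENNReal.ofReal_toReal (ne_top_of_le_ne_top one_ne_top (g1 _))] at core
  have h3 := (enn_amgm ha hb hab _ _).trans core
  have h4 : (∫⁻ x, min (h x / P) 1) ≤ ∫⁻ x, h x / P := lintegral_mono fun x => min_le_left _ _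
  have h5 := h3.trans h4
  simp only [div_eq_mul_inv] at h5
  rw [lintegral_mul_const _ hf, lintegral_mul_const _ hg, lintegral_mul_const _ hh] at h5
  simp only [← div_eq_mul_inv] at h5
  rw [ENNReal.div_rpow_of_nonneg _ _ ha.le, ENNReal.div_rpow_of_nonneg _ _ hb.le,
        ← ENNReal.mul_div_mul_comm (Or.inl fa0) (Or.inl fat)] at h5
  rw [ENNReal.div_le_iff P0 Pt, ENNReal.div_mul_cancel P0 Pt] at h5
  exact h5

lemma pl_withDensity {κ : Measure ℝ} (hκ : PL κ) {ρ : ℝ → ℝ≥0∞} (hρ : Measurable ρ)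
    {R : NNReal} (hR : ∀ x, ρ x ≤ R)
    (hlc : ∀ a b : ℝ, 0 < a → 0 < b → a + b = 1 → ∀ x y, ρ x ^ a * ρ y ^ b ≤ ρ (a * x + b * y)) :
    PL (κ.withDensity ρ) := by
  rintro a b ha hb hab f g h hf hg hh ⟨M, hM⟩ H
  rw [lintegral_withDensity_eq_lintegral_mul _ hρ hf, lintegral_withDensity_eq_lintegral_mul _ hρ hg,
    lintegral_withDensity_eq_lintegral_mul _ hρ hh]
  refine hκ a b ha hb hab _ _ _ (hρ.mul hf) (hρ.mul hg) (hρ.mul hh) ⟨R * M, fun x => ?_⟩ ?_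
  · simp only [Pi.mul_apply, ENNReal.coe_mul]
    exact ⟨mul_le_mul' (hR x) (hM x).1, mul_le_mul' (hR x) (hM x).2⟩
  · intro x y
    simp only [Pi.mul_apply]
    rw [ENNReal.mul_rpow_of_nonneg _ _ ha.le, ENNReal.mul_rpow_of_nonneg _ _ hb.le,
      mul_mul_mul_comm]
    exact mul_le_mul' (hlc a b ha hb hab x y) (H x y)

lemma pl_gaussian : PL (ProbabilityTheory.gaussianReal 0 1) := by
  rw [ProbabilityTheory.gaussianReal_of_var_ne_zero _ one_ne_zero]
  obtain ⟨c, hc, hpdf⟩ : ∃ c : ℝ, 0 < c ∧ ∀ x, ProbabilityTheory.gaussianPDF 0 1 x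
      = ENNReal.ofReal (c * Real.exp (-x ^ 2 / 2)) := by
    refine ⟨(√(2 * Real.pi * 1))⁻¹, by positivity, fun x => ?_⟩
    simp [ProbabilityTheory.gaussianPDF, ProbabilityTheory.gaussianPDFReal]
  refine pl_withDensity pl_volume (ProbabilityTheory.measurable_gaussianPDF 0 1)
    (R := c.toNNReal) ?_ ?_
  · intro x
    rw [hpdf]
    refine ENNReal.ofReal_le_ofReal ?_
    have : Real.exp (-x ^ 2 / 2) ≤ 1 := Real.exp_le_one_iff.2 (by nlinarith [sq_nonneg x])
    nlinarith
  · intro a b ha hb hab x y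
    rw [hpdf, hpdf, hpdf, ENNReal.ofReal_rpow_of_pos (by positivity),
      ENNReal.ofReal_rpow_of_pos (by positivity), ← ENNReal.ofReal_mul (by positivity)]
    refine ENNReal.ofReal_le_ofReal ?_
    rw [Real.mul_rpow hc.le (Real.exp_pos _).le, Real.mul_rpow hc.le (Real.exp_pos _).le,
      mul_mul_mul_comm, ← Real.rpow_add hc, hab, Real.rpow_one, ← Real.exp_mul, ← Real.exp_mul,
      ← Real.exp_add]
    gcongr
    have : b = 1 - a := by linarith
    subst this
    nlinarith [mul_nonneg (mul_nonneg ha.le hb.le) (sq_nonneg (x - y))]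

lemma pl_prod {X Y : Type*} [AddCommGroup X] [Module ℝ X] [MeasurableSpace X]
    [AddCommGroup Y] [Module ℝ Y] [MeasurableSpace Y] {κ : Measure X} {η : Measure Y}
    [IsProbabilityMeasure κ] [IsProbabilityMeasure η] (h1 : PL κ) (h2 : PL η) :
    PL (κ.prod η) := by
  rintro a b ha hb hab f g h hf hg hh ⟨M, hM⟩ H
  rw [lintegral_prod _ hf.aemeasurable, lintegral_prod _ hg.aemeasurable,
    lintegral_prod _ hh.aemeasurable]
  refine h1 a b ha hb hab _ _ _ hf.lintegral_prod_right' hg.lintegral_prod_right'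
    hh.lintegral_prod_right' ⟨M, fun x => ⟨?_, ?_⟩⟩ ?_
  · refine (lintegral_mono fun y => (hM (x, y)).1).trans ?_
    simp
  · refine (lintegral_mono fun y => (hM (x, y)).2).trans ?_
    simp
  · intro x y
    exact h2 a b ha hb hab _ _ _ (hf.comp measurable_prodMk_left) (hg.comp measurable_prodMk_left)
      (hh.comp measurable_prodMk_left) ⟨M, fun z => ⟨(hM _).1, (hM _).2⟩⟩
      (fun z w => H (x, z) (y, w))

lemma pl_map {X Y : Type*} [AddCommGroup X] [Module ℝ X] [MeasurableSpace X]
    [AddCommGroup Y] [Module ℝ Y] [MeasurableSpace Y] {κ : Measure X}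
    (h1 : PL κ) (T : X → Y) (hT : Measurable T)
    (hlin : ∀ (a b : ℝ) x y, T (a • x + b • y) = a • T x + b • T y) :
    PL (κ.map T) := by
  rintro a b ha hb hab f g h hf hg hh ⟨M, hM⟩ H
  rw [lintegral_map hf hT, lintegral_map hg hT, lintegral_map hh hT]
  exact h1 a b ha hb hab _ _ _ (hf.comp hT) (hg.comp hT) (hh.comp hT)
    ⟨M, fun x => hM (T x)⟩ (fun x y => by rw [hlin]; exact H _ _)

lemma pl_pi (n : ℕ) : PL (Measure.pi fun _ : Fin n => ProbabilityTheory.gaussianReal 0 1) := by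
  induction n with
  | zero =>
    rintro a b ha hb hab f g h hf hg hh ⟨M, hM⟩ H
    rw [Measure.pi_of_empty _ (fun i : Fin 0 => i.elim0), lintegral_dirac, lintegral_dirac,
      lintegral_dirac]
    convert H _ _
  | succ n ih =>
    have := (measurePreserving_piFinSuccAbove
      (fun _ : Fin (n + 1) => ProbabilityTheory.gaussianReal 0 1) 0).symm
    rw [← this.map_eq]
    refine pl_map (pl_prod pl_gaussian ih) _ this.measurable ?_
    intro a b x y
    ext i
    refine Fin.cases ?_ (fun j => ?_) i <;>
    simp [MeasurableEquiv.piFinSuccAbove]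

theorem pl_std (n : ℕ) : PL (ProbabilityTheory.stdGaussian (EuclideanSpace ℝ (Fin n))) := by
  rw [← ProbabilityTheory.map_pi_eq_stdGaussian]
  exact pl_map (pl_pi n) _ (by fun_prop) (fun a b x y => by simp)

end SC

namespace SC

section relcalc
variable {X : Type} [NormedAddCommGroup X] [NormedSpace ℝ X]

/-- relative bounds for the first three derivatives -/
def RB (A : ℝ) (f : X → ℝ) : Prop :=
  ∀ i : ℕ, 1 ≤ i → i ≤ 3 → ∀ x, ‖iteratedFDeriv ℝ i f x‖ ≤ A * f x

/-- universal constant for the logarithm -/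
noncomputable def clog : ℝ :=
  6 * ∑ i ∈ Finset.range 4, ‖iteratedFDerivWithin ℝ i Real.log (Set.Ioi 0) 1‖

/-- universal constant for the exponential -/
noncomputable def cexp : ℝ := 6 * ∑ i ∈ Finset.range 4, ‖iteratedFDeriv ℝ i Real.exp 0‖

lemma clog_nonneg : 0 ≤ clog := by unfold clog; positivity
lemma cexp_nonneg : 0 ≤ cexp := by unfold cexp; positivity

lemma fact_le_six {i : ℕ} (hi : i ≤ 3) : (i.factorial : ℝ) ≤ 6 := by
  have : i.factorial ≤ (3).factorial := Nat.factorial_le hi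
  have h : (3 : ℕ).factorial = 6 := rfl
  rw [h] at this
  exact_mod_cast this

lemma cast_le3 {i : ℕ} (hi : i ≤ 3) : (i : WithTop ℕ∞) ≤ 3 := by exact_mod_cast hi

lemma iter_add_const {f : X → ℝ} (hf : ContDiff ℝ 3 f) (c : ℝ) {i : ℕ} (h1 : 1 ≤ i) (hi : i ≤ 3)
    (x : X) : iteratedFDeriv ℝ i (fun y => f y + c) x = iteratedFDeriv ℝ i f x := by
  have := iteratedFDeriv_add_apply (𝕜 := ℝ) (i := i) (f := f) (g := fun _ => c) (x := x)
    ((hf.of_le (cast_le3 hi)).contDiffAt) contDiff_const.contDiffAt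
  have h2 : iteratedFDeriv ℝ i (fun _ : X => c) x = 0 := by
    rw [iteratedFDeriv_const_of_ne (by omega)]; rfl
  rw [h2, add_zero] at this
  exact this

lemma iter_const_mul {f : X → ℝ} (hf : ContDiff ℝ 3 f) (c : ℝ) {i : ℕ} (hi : i ≤ 3)
    (x : X) : ‖iteratedFDeriv ℝ i (fun y => c * f y) x‖ = |c| * ‖iteratedFDeriv ℝ i f x‖ := by
  have := iteratedFDeriv_const_smul_apply (𝕜 := ℝ) (i := i) (f := f) (a := c) (x := x)
    ((hf.of_le (cast_le3 hi)).contDiffAt)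
  have h2 : (fun y => c * f y) = c • f := by ext y; simp
  rw [h2, this, norm_smul, Real.norm_eq_abs]

lemma log_bd {A : ℝ} (hA : 1 ≤ A) {f : X → ℝ} (hf : ContDiff ℝ 3 f) (pos : ∀ x, 0 < f x)
    (h : RB A f) {i : ℕ} (h1 : 1 ≤ i) (h3 : i ≤ 3) (x : X) :
    ‖iteratedFDeriv ℝ i (fun y => Real.log (f y)) x‖ ≤ clog * A ^ 3 := by
  let c := f x
  have hc : 0 < c := pos x
  have hg : ContDiff ℝ 3 fun y => c⁻¹ * f y := contDiff_const.mul hf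
  have hgp : ∀ y, 0 < c⁻¹ * f y := fun y => mul_pos (inv_pos.2 hc) (pos y)
  have hl : ContDiff ℝ 3 fun y => Real.log (c⁻¹ * f y) := hg.log fun y => (hgp y).ne'
  have e : (fun y => Real.log (f y)) = fun y => Real.log (c⁻¹ * f y) + Real.log c := by
    funext y
    rw [Real.log_mul (by positivity) (pos y).ne', Real.log_inv]; ring
  rw [e, iter_add_const hl _ h1 h3]
  have hlog : ContDiffOn ℝ 3 Real.log (Set.Ioi 0) := fun y hy =>
    (Real.contDiffAt_log.2 (ne_of_gt hy)).contDiffWithinAt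
  have key := norm_iteratedFDeriv_comp_le' (𝕜 := ℝ) (g := Real.log) (f := fun y => c⁻¹ * f y)
    (n := i) (N := 3) (t := Set.Ioi 0) (by rintro _ ⟨y, rfl⟩; exact hgp y)
    isOpen_Ioi.uniqueDiffOn hlog hg (cast_le3 h3) x
    (C := ∑ i ∈ Finset.range 4, ‖iteratedFDerivWithin ℝ i Real.log (Set.Ioi 0) 1‖) (D := A)
    (by
      intro j hj
      have : c⁻¹ * f x = 1 := inv_mul_cancel₀ hc.ne'
      rw [this]
      exact Finset.single_le_sum (f := fun i => ‖iteratedFDerivWithin ℝ i Real.log (Set.Ioi 0) 1‖)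
        (fun _ _ => norm_nonneg _) (Finset.mem_range.2 (by omega)))
    (by
      intro j hj1 hj
      rw [iter_const_mul hf _ (by omega), abs_of_pos (inv_pos.2 hc), inv_mul_le_iff₀ hc, mul_comm]
      refine (h j hj1 (by omega) x).trans ?_
      have : A ≤ A ^ j := le_self_pow₀ hA (by omega)
      gcongr)
  refine key.trans ?_
  unfold clog
  have := fact_le_six h3
  gcongr

lemma exp_bd {B : ℝ} (hB : 1 ≤ B) {w : X → ℝ} (hw : ContDiff ℝ 3 w)
    (h : ∀ i : ℕ, 1 ≤ i → i ≤ 3 → ∀ x, ‖iteratedFDeriv ℝ i w x‖ ≤ B) :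
    RB (cexp * B ^ 3) (fun x => Real.exp (w x)) := by
  intro i h1 h3 x
  have hg : ContDiff ℝ 3 fun y => w y + (- w x) := hw.add contDiff_const
  have hl : ContDiff ℝ 3 fun y => Real.exp (w y + (- w x)) := hg.exp
  have e : (fun y => Real.exp (w y)) = fun y => Real.exp (w x) * Real.exp (w y + (- w x)) := by
    funext y
    rw [← Real.exp_add]; ring_nf
  rw [e, iter_const_mul hl _ h3, abs_of_pos (Real.exp_pos _)]
  have key := norm_iteratedFDeriv_comp_le (𝕜 := ℝ) (g := Real.exp) (f := fun y => w y + (- w x))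
    (n := i) (N := 3) Real.contDiff_exp hg (cast_le3 h3) x
    (C := ∑ i ∈ Finset.range 4, ‖iteratedFDeriv ℝ i Real.exp 0‖) (D := B)
    (by
      intro j hj
      have : w x + (- w x) = 0 := by ring
      rw [this]
      exact Finset.single_le_sum (f := fun i => ‖iteratedFDeriv ℝ i Real.exp 0‖)
        (fun _ _ => norm_nonneg _) (Finset.mem_range.2 (by omega)))
    (by
      intro j hj1 hj
      rw [iter_add_const hw _ hj1 (by omega)]
      exact (h j hj1 (by omega) x).trans (le_self_pow₀ hB (by omega)))
  have : ‖iteratedFDeriv ℝ i (fun y => Real.exp (w y + (- w x))) x‖ ≤ cexp * B ^ 3 := by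
    refine key.trans ?_
    unfold cexp
    have := fact_le_six h3
    gcongr
  have h5 : Real.exp (w x) * Real.exp (w x + (- w x)) = Real.exp (w x) := by simp
  simp only [h5]
  rw [mul_comm (cexp * B ^ 3)]
  gcongr

/-! composition with a map which is almost a contraction -/

lemma comp_one {W : Type} [NormedAddCommGroup W] [NormedSpace ℝ W] {G : X → W} {D : X → X}
    {N : WithTop ℕ∞} (hN : N ≠ 0)
    (hG : ContDiff ℝ N G) (hD : ContDiff ℝ N D) : fderiv ℝ (fun x => G (D x)) =
    fun x => ContinuousLinearMap.compL ℝ X X W (fderiv ℝ G (D x)) (fderiv ℝ D x) := by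
  funext x
  have := fderiv_comp x ((hG.differentiable hN) (D x)) ((hD.differentiable hN) x)
  simpa [Function.comp_def] using this

lemma comp_d1 {W : Type} [NormedAddCommGroup W] [NormedSpace ℝ W] {G : X → W} {D : X → X}
    (hG : ContDiff ℝ 1 G) (hD : ContDiff ℝ 1 D) {q : ℝ} (hD1 : ∀ x, ‖fderiv ℝ D x‖ ≤ q) (x : X) :
    ‖iteratedFDeriv ℝ 1 (fun x => G (D x)) x‖ ≤ ‖iteratedFDeriv ℝ 1 G (D x)‖ * q := by
  rw [norm_iteratedFDeriv_one, norm_iteratedFDeriv_one, comp_one one_ne_zero hG hD]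
  exact (ContinuousLinearMap.opNorm_comp_le _ _).trans (by gcongr; exact hD1 x)

lemma comp_d2 {W : Type} [NormedAddCommGroup W] [NormedSpace ℝ W] {G : X → W} {D : X → X}
    (hG : ContDiff ℝ 2 G) (hD : ContDiff ℝ 2 D) (hD1 : ∀ x, ‖fderiv ℝ D x‖ ≤ 1)
    {η : ℝ} (hD2 : ∀ x, ‖iteratedFDeriv ℝ 2 D x‖ ≤ η) (x : X) :
    ‖iteratedFDeriv ℝ 2 (fun x => G (D x)) x‖ ≤
      ‖iteratedFDeriv ℝ 2 G (D x)‖ + η * ‖iteratedFDeriv ℝ 1 G (D x)‖ := by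
  rw [← norm_iteratedFDeriv_fderiv, comp_one two_ne_zero hG hD]
  have hG' : ContDiff ℝ 1 (fderiv ℝ G) := hG.fderiv_right (by norm_num)
  have hD' : ContDiff ℝ 1 (fderiv ℝ D) := hD.fderiv_right (by norm_num)
  have key := (ContinuousLinearMap.compL ℝ X X W).norm_iteratedFDeriv_le_of_bilinear_of_le_one
    (f := fun x => fderiv ℝ G (D x)) (g := fderiv ℝ D) (N := 1)
    (hG'.comp (hD.of_le (by norm_num))) hD' x (n := 1) le_rfl
    (ContinuousLinearMap.norm_compL_le ℝ X X W)
  refine key.trans ?_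
  rw [Finset.sum_range_succ, Finset.sum_range_one]
  simp only [norm_iteratedFDeriv_zero, Nat.choose_zero_right, Nat.choose_self, Nat.sub_zero,
    Nat.cast_one, one_mul]
  have t1 := comp_d1 hG' (hD.of_le (by norm_num)) hD1 x
  rw [norm_iteratedFDeriv_fderiv] at *
  rw [mul_one] at t1
  rw [norm_iteratedFDeriv_one G]
  have e3 : ‖iteratedFDeriv ℝ (1 - 1) (fderiv ℝ D) x‖ ≤ 1 := by
    rw [norm_iteratedFDeriv_fderiv, norm_iteratedFDeriv_one]; exact hD1 x
  have := hD2 x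
  have := hD1 x
  have a1 : ‖fderiv ℝ G (D x)‖ * ‖iteratedFDeriv ℝ (1 + 1) D x‖ ≤ η * ‖fderiv ℝ G (D x)‖ := by
    rw [mul_comm]; gcongr
  have a2 : ‖iteratedFDeriv ℝ 1 (fun x => fderiv ℝ G (D x)) x‖ *
      ‖iteratedFDeriv ℝ (1 - 1) (fderiv ℝ D) x‖ ≤
    ‖iteratedFDeriv ℝ 2 G (D x)‖ * 1 := by gcongr
  linarith

lemma comp_d3 {G : X → ℝ} {D : X → X}
    (hG : ContDiff ℝ 3 G) (hD : ContDiff ℝ 3 D) (hD1 : ∀ x, ‖fderiv ℝ D x‖ ≤ 1)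
    {η : ℝ} (hD2 : ∀ x, ‖iteratedFDeriv ℝ 2 D x‖ ≤ η) (hD3 : ∀ x, ‖iteratedFDeriv ℝ 3 D x‖ ≤ η)
    (x : X) :
    ‖iteratedFDeriv ℝ 3 (fun x => G (D x)) x‖ ≤
      ‖iteratedFDeriv ℝ 3 G (D x)‖ + 3 * η * ‖iteratedFDeriv ℝ 2 G (D x)‖
        + η * ‖iteratedFDeriv ℝ 1 G (D x)‖ := by
  rw [← norm_iteratedFDeriv_fderiv, comp_one three_ne_zero hG hD]
  have hG' : ContDiff ℝ 2 (fderiv ℝ G) := hG.fderiv_right (by norm_num)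
  have hD' : ContDiff ℝ 2 (fderiv ℝ D) := hD.fderiv_right (by norm_num)
  have hDt : ContDiff ℝ 2 D := hD.of_le (by norm_num)
  have key := (ContinuousLinearMap.compL ℝ X X ℝ).norm_iteratedFDeriv_le_of_bilinear_of_le_one
    (f := fun x => fderiv ℝ G (D x)) (g := fderiv ℝ D) (N := 2)
    (hG'.comp hDt) hD' x (n := 2) le_rfl
    (ContinuousLinearMap.norm_compL_le ℝ X X ℝ)
  refine key.trans ?_
  rw [Finset.sum_range_succ, Finset.sum_range_succ, Finset.sum_range_one]
  have t1 := comp_d1 (hG'.of_le (by norm_num)) (hD.of_le (by norm_num)) hD1 x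
  have t2 := comp_d2 hG' hDt hD1 hD2 x
  have b0 : ‖iteratedFDeriv ℝ 0 (fun x => fderiv ℝ G (D x)) x‖ = ‖iteratedFDeriv ℝ 1 G (D x)‖ := by
    rw [norm_iteratedFDeriv_zero, norm_iteratedFDeriv_one]
  rw [b0]
  have e1 : ‖iteratedFDeriv ℝ (2 - 0) (fderiv ℝ D) x‖ ≤ η := by
    rw [norm_iteratedFDeriv_fderiv]; exact hD3 x
  have e2 : ‖iteratedFDeriv ℝ (2 - 1) (fderiv ℝ D) x‖ ≤ η := by
    rw [norm_iteratedFDeriv_fderiv]; exact hD2 x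
  have e3 : ‖iteratedFDeriv ℝ (2 - 2) (fderiv ℝ D) x‖ ≤ 1 := by
    rw [norm_iteratedFDeriv_fderiv, norm_iteratedFDeriv_one]; exact hD1 x
  rw [norm_iteratedFDeriv_fderiv, mul_one] at t1
  rw [norm_iteratedFDeriv_fderiv, norm_iteratedFDeriv_fderiv] at t2
  simp only [Nat.choose_zero_right, Nat.choose_self, Nat.cast_one, one_mul,
    Nat.choose_one_right, Nat.cast_ofNat]
  have a1 : ‖iteratedFDeriv ℝ 1 G (D x)‖ * ‖iteratedFDeriv ℝ (2 - 0) (fderiv ℝ D) x‖ ≤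
      ‖iteratedFDeriv ℝ 1 G (D x)‖ * η := by gcongr
  have a2 : 2 * ‖iteratedFDeriv ℝ 1 (fun x => fderiv ℝ G (D x)) x‖ *
      ‖iteratedFDeriv ℝ (2 - 1) (fderiv ℝ D) x‖ ≤ 2 * ‖iteratedFDeriv ℝ 2 G (D x)‖ * η := by gcongr
  have a3 : ‖iteratedFDeriv ℝ 2 (fun x => fderiv ℝ G (D x)) x‖ *
      ‖iteratedFDeriv ℝ (2 - 2) (fderiv ℝ D) x‖ ≤ (‖iteratedFDeriv ℝ 3 G (D x)‖ +
        η * ‖iteratedFDeriv ℝ 2 G (D x)‖) * 1 := by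
    refine mul_le_mul t2 e3 (norm_nonneg _) ((norm_nonneg _).trans t2)
  linarith

lemma RB_comp {A : ℝ} (hA : 0 ≤ A) {f : X → ℝ} {D : X → X} (pos : ∀ x, 0 < f x)
    (hf : ContDiff ℝ 3 f) (h : RB A f) (hD : ContDiff ℝ 3 D) (hD1 : ∀ x, ‖fderiv ℝ D x‖ ≤ 1)
    {η : ℝ} (hη : 0 ≤ η)
    (hD2 : ∀ x, ‖iteratedFDeriv ℝ 2 D x‖ ≤ η) (hD3 : ∀ x, ‖iteratedFDeriv ℝ 3 D x‖ ≤ η) :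
    RB (A * (1 + 4 * η)) (fun x => f (D x)) := by
  intro i h1 h3 x
  have p := pos (D x)
  have k1 := h 1 le_rfl (by norm_num) (D x)
  have k2 := h 2 (by norm_num) (by norm_num) (D x)
  have k3 := h 3 (by norm_num) le_rfl (D x)
  have hpos : 0 ≤ A * f (D x) := by positivity
  have hpos2 : 0 ≤ η * (A * f (D x)) := by positivity
  have m1 : η * ‖iteratedFDeriv ℝ 1 f (D x)‖ ≤ η * (A * f (D x)) := by gcongr
  have m2 : η * ‖iteratedFDeriv ℝ 2 f (D x)‖ ≤ η * (A * f (D x)) := by gcongr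
  interval_cases i
  · have := comp_d1 (hf.of_le (by norm_num)) (hD.of_le (by norm_num)) hD1 x
    linarith
  · have := comp_d2 (hf.of_le (by norm_num)) (hD.of_le (by norm_num)) hD1 hD2 x
    linarith
  · have := comp_d3 hf hD hD1 hD2 hD3 x
    linarith

end relcalc

end SC

namespace SC

section noise
variable {X : Type} [NormedAddCommGroup X] [NormedSpace ℝ X] [FiniteDimensional ℝ X]
  [MeasurableSpace X] [BorelSpace X] (κ : Measure X) [IsProbabilityMeasure κ]

/-- averaging with noise -/
noncomputable def noise {W : Type} [NormedAddCommGroup W] [NormedSpace ℝ W]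
    (c : ℝ) (G : X → W) (x : X) : W := ∫ z, G (x + c • z) ∂κ

variable {W : Type} [NormedAddCommGroup W] [NormedSpace ℝ W]

lemma noise_meas {c : ℝ} {G : X → W} (hG : Continuous G) (x : X) :
    AEStronglyMeasurable (fun z => G (x + c • z)) κ := by
  have := FiniteDimensional.proper ℝ X
  have : Continuous fun z => G (x + c • z) := by fun_prop
  exact this.aestronglyMeasurable

lemma noise_int {c : ℝ} {G : X → W} (hG : Continuous G) {K : ℝ} (hK : ∀ x, ‖G x‖ ≤ K) (x : X) :
    Integrable (fun z => G (x + c • z)) κ :=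
  Integrable.of_bound (noise_meas κ hG x) K (Eventually.of_forall fun z => hK _)

lemma noise_hasFDerivAt [CompleteSpace W] {c : ℝ} {G : X → W} (hG : ContDiff ℝ 1 G) {K K' : ℝ}
    (hK : ∀ x, ‖G x‖ ≤ K) (hK' : ∀ x, ‖fderiv ℝ G x‖ ≤ K') (x : X) :
    HasFDerivAt (noise κ c G) (noise κ c (fderiv ℝ G) x) x := by
  have hc : Continuous (fderiv ℝ G) := hG.continuous_fderiv one_ne_zero
  refine hasFDerivAt_integral_of_dominated_of_fderiv_le (s := Set.univ) (bound := fun _ => K')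
    (F := fun x z => G (x + c • z)) (F' := fun x z => fderiv ℝ G (x + c • z)) univ_mem ?_
    (noise_int κ hG.continuous hK x) (noise_meas κ hc x)
    (Eventually.of_forall fun z y _ => hK' _) (integrable_const _)
    (Eventually.of_forall fun z y _ => ?_)
  · exact Eventually.of_forall fun y => noise_meas κ hG.continuous y
  · have h1 : HasFDerivAt G (fderiv ℝ G (y + c • z)) (y + c • z) :=
      (hG.differentiable one_ne_zero _).hasFDerivAt
    have h2 : HasFDerivAt (fun y : X => y + c • z) (ContinuousLinearMap.id ℝ X) y :=
      (hasFDerivAt_id y).add_const _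
    have := h1.comp y h2
    simpa [Function.comp_def] using this

lemma noise_contDiff {c : ℝ} (k : ℕ) : ∀ {W : Type} [NormedAddCommGroup W] [NormedSpace ℝ W]
    [CompleteSpace W] {G : X → W}, ContDiff ℝ k G →
    (∃ K, ∀ i ≤ k, ∀ x, ‖iteratedFDeriv ℝ i G x‖ ≤ K) →
    ContDiff ℝ k (noise κ c G) ∧ ∀ i ≤ k, ∀ x, ‖iteratedFDeriv ℝ i (noise κ c G) x‖ ≤
      noise κ c (fun y => ‖iteratedFDeriv ℝ i G y‖) x := by
  induction k with
  | zero =>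
    intro W _ _ _ G hG ⟨K, hK⟩
    have hGc : Continuous G := hG.continuous
    have hb : ∀ x, ‖G x‖ ≤ K := fun x => by
      have := hK 0 le_rfl x
      rwa [norm_iteratedFDeriv_zero] at this
    constructor
    · rw [Nat.cast_zero, contDiff_zero]
      refine continuous_of_dominated (bound := fun _ => K) (fun x => noise_meas κ hGc x)
        (fun x => Eventually.of_forall fun z => hb _) (integrable_const _)
        (Eventually.of_forall fun z => ?_)
      fun_prop
    · intro i hi x
      obtain rfl : i = 0 := by omega
      simp only [norm_iteratedFDeriv_zero]
      exact norm_integral_le_integral_norm _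
  | succ k ih =>
    intro W _ _ _ G hG ⟨K, hK⟩
    have hb : ∀ x, ‖G x‖ ≤ K := fun x => by
      have := hK 0 (by omega) x
      rwa [norm_iteratedFDeriv_zero] at this
    have hb' : ∀ x, ‖fderiv ℝ G x‖ ≤ K := fun x => by
      have := hK 1 (by omega) x
      rwa [norm_iteratedFDeriv_one] at this
    have hG1 : ContDiff ℝ 1 G := hG.of_le (by push_cast; exact le_add_self)
    have hd := noise_hasFDerivAt κ (c := c) hG1 hb hb'
    have hfd : fderiv ℝ (noise κ c G) = noise κ c (fderiv ℝ G) := funext fun x => (hd x).fderiv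
    have hG' : ContDiff ℝ k (fderiv ℝ G) := hG.fderiv_right (by push_cast; exact le_rfl)
    obtain ⟨i1, i2⟩ := ih hG' ⟨K, fun i hi x => by
      rw [norm_iteratedFDeriv_fderiv]; exact hK (i + 1) (by omega) x⟩
    constructor
    · push_cast
      rw [contDiff_succ_iff_fderiv]
      refine ⟨fun x => (hd x).differentiableAt, fun h => absurd h (by simp), ?_⟩
      rw [hfd]; exact i1
    · intro i hi x
      rcases i with _ | i
      · simp only [norm_iteratedFDeriv_zero]
        exact norm_integral_le_integral_norm _
      · have := i2 i (by omega) x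
        simp only [norm_iteratedFDeriv_fderiv] at this
        rw [← hfd, norm_iteratedFDeriv_fderiv] at this
        exact this

lemma noise_mono {c : ℝ} {f g : X → ℝ} (hf : Continuous f) (hg : Continuous g) {K K' : ℝ}
    (hK : ∀ x, ‖f x‖ ≤ K) (hK' : ∀ x, ‖g x‖ ≤ K') (h : ∀ x, f x ≤ g x) (x : X) :
    noise κ c f x ≤ noise κ c g x :=
  integral_mono (noise_int κ hf hK x) (noise_int κ hg hK' x) fun z => h _

/-- log-concave functions -/
def LC {X : Type} [AddCommGroup X] [Module ℝ X] (f : X → ℝ) : Prop :=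
  ∀ a b : ℝ, 0 < a → 0 < b → a + b = 1 → ∀ x y, f x ^ a * f y ^ b ≤ f (a • x + b • y)

lemma noise_LC (hκ : PL κ) {c : ℝ} {f : X → ℝ} (hf : Continuous f) (pos : ∀ x, 0 < f x) {F : ℝ}
    (hF : ∀ x, f x ≤ F) (h : LC f) : LC (noise κ c f) := by
  have hb : ∀ x, ‖f x‖ ≤ F := fun x => by rw [Real.norm_eq_abs, abs_of_pos (pos x)]; exact hF x
  have hm : Measurable f := hf.measurable
  have hmm : ∀ x, Measurable fun z => f (x + c • z) := fun x => by
    have : Continuous fun z => f (x + c • z) := by fun_prop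
    exact this.measurable
  have key : ∀ x, ENNReal.ofReal (noise κ c f x) = ∫⁻ z, ENNReal.ofReal (f (x + c • z)) ∂κ :=
    fun x => ofReal_integral_eq_lintegral_ofReal (noise_int κ hf hb x)
      (Eventually.of_forall fun z => (pos _).le)
  have nn : ∀ x, 0 ≤ noise κ c f x := fun x => integral_nonneg fun z => (pos _).le
  intro a b ha hb hab x y
  have := hκ a b ha hb hab (fun z => ENNReal.ofReal (f (x + c • z)))
    (fun z => ENNReal.ofReal (f (y + c • z)))
    (fun z => ENNReal.ofReal (f ((a • x + b • y) + c • z))) (hmm x).ennreal_ofReal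
    (hmm y).ennreal_ofReal (hmm _).ennreal_ofReal
    ⟨F.toNNReal, fun z => ⟨ENNReal.ofReal_le_ofReal (hF _), ENNReal.ofReal_le_ofReal (hF _)⟩⟩
    (by
      intro z w
      rw [ENNReal.ofReal_rpow_of_pos (pos _), ENNReal.ofReal_rpow_of_pos (pos _),
        ← ENNReal.ofReal_mul (Real.rpow_nonneg (pos _).le _)]
      refine ENNReal.ofReal_le_ofReal ((h a b ha hb hab _ _).trans (le_of_eq ?_))
      congr 1
      module)
  rw [← key, ← key, ← key, ENNReal.ofReal_rpow_of_nonneg (nn _) ha.le,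
    ENNReal.ofReal_rpow_of_nonneg (nn _) hb.le,
    ← ENNReal.ofReal_mul (Real.rpow_nonneg (nn _) _)] at this
  exact (ENNReal.ofReal_le_ofReal_iff (nn _)).1 this

lemma noise_pos {c : ℝ} {f : X → ℝ} (hf : Continuous f) (pos : ∀ x, 0 < f x) {F : ℝ}
    (hF : ∀ x, f x ≤ F) (x : X) : 0 < noise κ c f x := by
  have hb : ∀ x, ‖f x‖ ≤ F := fun x => by rw [Real.norm_eq_abs, abs_of_pos (pos x)]; exact hF x
  refine (integral_pos_iff_support_of_nonneg (fun z => (pos _).le) (noise_int κ hf hb x)).2 ?_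
  have : Function.support (fun z => f (x + c • z)) = Set.univ := by
    ext z; simp [(pos _).ne']
  rw [this]; simp

lemma noise_le {c : ℝ} {f : X → ℝ} (hf : Continuous f) (pos : ∀ x, 0 < f x) {F : ℝ}
    (hF : ∀ x, f x ≤ F) (x : X) : noise κ c f x ≤ F := by
  have hb : ∀ x, ‖f x‖ ≤ F := fun x => by rw [Real.norm_eq_abs, abs_of_pos (pos x)]; exact hF x
  have := integral_mono (noise_int κ hf hb x) (integrable_const F) fun z => hF (x + c • z)
  simpa [noise] using this

lemma RB_noise {c A F : ℝ} {f : X → ℝ} (hf : ContDiff ℝ 3 f) (pos : ∀ x, 0 < f x)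
    (hF : ∀ x, f x ≤ F) (h : RB A f) (hA : 0 ≤ A) :
    ContDiff ℝ 3 (noise κ c f) ∧ RB A (noise κ c f) := by
  have hF0 : 0 ≤ F := (pos 0).le.trans (hF 0)
  have hb : ∀ x, ‖f x‖ ≤ F := fun x => by rw [Real.norm_eq_abs, abs_of_pos (pos x)]; exact hF x
  obtain ⟨h1, h2⟩ := noise_contDiff κ (c := c) 3 (G := f) (by exact_mod_cast hf)
    ⟨F + A * F, fun i hi x => by
      rcases Nat.eq_zero_or_pos i with rfl | h0
      · rw [norm_iteratedFDeriv_zero]; nlinarith [hb x]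
      · have := h i h0 hi x
        have := mul_le_mul_of_nonneg_left (hF x) hA
        linarith⟩
  refine ⟨by exact_mod_cast h1, fun i hi1 hi3 x => (h2 i hi3 x).trans ?_⟩
  have : A * noise κ c f x = noise κ c (fun y => A * f y) x := by
    simp only [noise]; rw [integral_const_mul]
  rw [this]
  refine noise_mono κ ?_ (by have := hf.continuous; fun_prop) (K := A * F) (K' := A * F) ?_ ?_
    (h i hi1 hi3) x
  · exact (hf.continuous_iteratedFDeriv (cast_le3 hi3)).norm
  · intro y
    rw [norm_norm]
    exact (h i hi1 hi3 y).trans (mul_le_mul_of_nonneg_left (hF y) hA)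
  · intro y
    rw [norm_mul, Real.norm_of_nonneg hA]
    exact mul_le_mul_of_nonneg_left (hb y) hA

lemma noise_fderiv {c F G : ℝ} {f : X → ℝ} (hf : ContDiff ℝ 3 f) (pos : ∀ x, 0 < f x)
    (hF : ∀ x, f x ≤ F) (hG : ∀ x, ‖fderiv ℝ f x‖ ≤ G) (x : X) :
    ‖fderiv ℝ (noise κ c f) x‖ ≤ G := by
  have hb : ∀ x, ‖f x‖ ≤ F := fun x => by rw [Real.norm_eq_abs, abs_of_pos (pos x)]; exact hF x
  rw [(noise_hasFDerivAt κ (hf.of_le (by norm_num)) hb hG x).fderiv]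
  refine (norm_integral_le_of_norm_le_const (Eventually.of_forall fun z => hG _)).trans ?_
  simp

end noise

end SC

namespace SC

/-- Euclidean space -/
abbrev E (n : ℕ) : Type := EuclideanSpace ℝ (Fin n)

/-- conditions on the drift -/
structure Drift (b : ℝ → ℝ) (δ β : ℝ) : Prop where
  smooth : ContDiff ℝ 3 b
  odd : ∀ x, b (-x) = - b x
  dpos : 0 < δ
  lower : ∀ x, δ ≤ deriv b x
  upper : ∀ x, deriv b x ≤ β
  d2 : ∀ x, ‖iteratedFDeriv ℝ 2 b x‖ ≤ β
  d3 : ∀ x, ‖iteratedFDeriv ℝ 3 b x‖ ≤ β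
  conc : ConcaveOn ℝ (Set.Ici 0) b

/-- the vector field -/
noncomputable def Bm {n : ℕ} (b : ℝ → ℝ) (x : E n) : E n := WithLp.toLp 2 fun i => b (x i)

/-- the drift step -/
noncomputable def Dm {n : ℕ} (b : ℝ → ℝ) (h : ℝ) (x : E n) : E n := x + (-h) • Bm b x

section
variable {n : ℕ} {b : ℝ → ℝ} {δ β : ℝ}

lemma Bm_apply (x : E n) (i : Fin n) : Bm b x i = b (x i) := rfl
lemma Dm_apply (h : ℝ) (x : E n) (i : Fin n) : Dm b h x i = x i - h * b (x i) := by
  simp [Dm, Bm, sub_eq_add_neg]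

lemma Drift.zero (hb : Drift b δ β) : b 0 = 0 := by
  have := hb.odd 0
  simp at this; linarith

lemma Drift.beta_pos (hb : Drift b δ β) : 0 < β := hb.dpos.trans_le ((hb.lower 0).trans (hb.upper 0))

lemma Drift.diff (hb : Drift b δ β) : Differentiable ℝ b := hb.smooth.differentiable three_ne_zero

lemma Drift.abs_le (hb : Drift b δ β) (x : ℝ) : |b x| ≤ β * |x| := by
  have := Convex.norm_image_sub_le_of_norm_deriv_le (f := b) (C := β) (s := Set.univ) (x := 0)
    (y := x) (fun x _ => hb.diff x) (fun x _ => by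
      rw [Real.norm_eq_abs, abs_of_pos (hb.dpos.trans_le (hb.lower x))]; exact hb.upper x)
      convex_univ trivial trivial
  simpa [hb.zero] using this

lemma Bm_contDiff (hb : Drift b δ β) : ContDiff ℝ 3 (Bm b : E n → E n) := by
  rw [contDiff_euclidean]
  intro i
  simp only [Bm_apply]
  exact hb.smooth.comp (contDiff_piLp_apply (p := 2))

lemma Dm_contDiff (hb : Drift b δ β) (h : ℝ) : ContDiff ℝ 3 (Dm b h : E n → E n) :=
  contDiff_id.add ((Bm_contDiff hb).const_smul _)

lemma Bm_fderiv (hb : Drift b δ β) (x v : E n) (i : Fin n) :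
    (fderiv ℝ (Bm b) x v) i = deriv b (x i) * v i := by
  have h1 : HasFDerivAt (Bm b : E n → E n) (fderiv ℝ (Bm b) x) x :=
    ((Bm_contDiff hb).differentiable three_ne_zero x).hasFDerivAt
  have h2 := ((EuclideanSpace.proj i : E n →L[ℝ] ℝ).hasFDerivAt (x := Bm b x)).comp x h1
  have h3 : HasFDerivAt (fun y : E n => b (y i))
      (deriv b (x i) • (EuclideanSpace.proj i : E n →L[ℝ] ℝ)) x :=
    ((hb.diff (x i)).hasDerivAt).comp_hasFDerivAt x
      ((EuclideanSpace.proj i : E n →L[ℝ] ℝ).hasFDerivAt (x := x))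
  have h4 := h2.unique h3
  have := congrArg (fun L => L v) h4
  simpa using this

lemma Bm_norm_le (hb : Drift b δ β) (x : E n) : ‖Bm b x‖ ≤ β * ‖x‖ := by
  have h0 := hb.beta_pos
  rw [EuclideanSpace.norm_eq, EuclideanSpace.norm_eq, ← Real.sqrt_sq h0.le,
    ← Real.sqrt_mul (sq_nonneg β)]
  refine Real.sqrt_le_sqrt ?_
  rw [Finset.mul_sum]
  refine Finset.sum_le_sum fun i _ => ?_
  rw [Bm_apply, Real.norm_eq_abs, Real.norm_eq_abs, ← mul_pow]
  exact pow_le_pow_left₀ (abs_nonneg _) (hb.abs_le _) 2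

lemma Dm_fderiv_le (hb : Drift b δ β) {h : ℝ} (h0 : 0 ≤ h) (h1 : h * β ≤ 1) (x : E n) :
    ‖fderiv ℝ (Dm b h) x‖ ≤ 1 - h * δ := by
  have hbd : h * δ ≤ 1 := (mul_le_mul_of_nonneg_left ((hb.lower 0).trans (hb.upper 0)) h0).trans h1
  refine ContinuousLinearMap.opNorm_le_bound _ (by linarith) fun v => ?_
  have hf : fderiv ℝ (Dm b h) x v = v + (-h) • fderiv ℝ (Bm b) x v := by
    have h1 : HasFDerivAt (Bm b : E n → E n) (fderiv ℝ (Bm b) x) x :=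
      ((Bm_contDiff hb).differentiable three_ne_zero x).hasFDerivAt
    have h2 : HasFDerivAt (Dm b h : E n → E n) _ x := (hasFDerivAt_id x).add (h1.const_smul (-h))
    rw [h2.fderiv]; simp
  rw [hf, EuclideanSpace.norm_eq, EuclideanSpace.norm_eq, ← Real.sqrt_sq (by linarith : 0 ≤ 1 - h * δ),
    ← Real.sqrt_mul (sq_nonneg _)]
  refine Real.sqrt_le_sqrt ?_
  rw [Finset.mul_sum]
  refine Finset.sum_le_sum fun i _ => ?_
  simp only [PiLp.add_apply, PiLp.smul_apply, Bm_fderiv hb, smul_eq_mul]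
  have e : v i + -h * (deriv b (x i) * v i) = (1 - h * deriv b (x i)) * v i := by ring
  rw [e, norm_mul, mul_pow]
  gcongr
  have := mul_le_mul_of_nonneg_left (hb.lower (x i)) h0
  have := mul_le_mul_of_nonneg_left (hb.upper (x i)) h0
  rw [Real.norm_eq_abs, abs_of_nonneg (by linarith)]
  linarith

lemma Bm_iter_le (hb : Drift b δ β) {k : ℕ} (hk : k = 2 ∨ k = 3) (x : E n) :
    ‖iteratedFDeriv ℝ k (Bm b) x‖ ≤ n * β := by
  have hk3 : k ≤ 3 := by omega
  have e : (Bm b : E n → E n) = fun x => ∑ i : Fin n,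
      ((ContinuousLinearMap.toSpanSingleton ℝ (EuclideanSpace.single i (1 : ℝ) : E n)) ∘
        (b ∘ (EuclideanSpace.proj i : E n →L[ℝ] ℝ))) x := by
    funext x
    ext j
    simp [Bm_apply, Finset.sum_apply, Pi.single_apply]
  have hbi : ∀ i : Fin n, ContDiff ℝ 3 (b ∘ (EuclideanSpace.proj i : E n →L[ℝ] ℝ)) := fun i =>
    hb.smooth.comp (ContinuousLinearMap.contDiff _)
  have hp : ∀ i : Fin n, ‖(EuclideanSpace.proj i : E n →L[ℝ] ℝ)‖ ≤ 1 := fun i =>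
    ContinuousLinearMap.opNorm_le_bound _ zero_le_one fun v => by
      rw [one_mul]; exact PiLp.norm_apply_le v i
  rw [e, iteratedFDeriv_fun_sum_apply (fun i _ => ((ContinuousLinearMap.contDiff _).comp
    ((hbi i).of_le (cast_le3 hk3))).contDiffAt)]
  refine (norm_sum_le _ _).trans ?_
  have : ∀ i ∈ (Finset.univ : Finset (Fin n)), ‖iteratedFDeriv ℝ k
      ((ContinuousLinearMap.toSpanSingleton ℝ (EuclideanSpace.single i (1 : ℝ) : E n)) ∘
        (b ∘ (EuclideanSpace.proj i : E n →L[ℝ] ℝ))) x‖ ≤ β := by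
    intro i _
    refine (ContinuousLinearMap.norm_iteratedFDeriv_comp_left _ (hbi i).contDiffAt
      (cast_le3 hk3)).trans ?_
    rw [ContinuousLinearMap.norm_toSpanSingleton]
    rw [ContinuousLinearMap.iteratedFDeriv_comp_right _ hb.smooth _ (cast_le3 hk3)]
    have h1 := ContinuousMultilinearMap.norm_compContinuousLinearMap_le
      (iteratedFDeriv ℝ k b ((EuclideanSpace.proj i : E n →L[ℝ] ℝ) x))
      (fun _ => (EuclideanSpace.proj i : E n →L[ℝ] ℝ))
    have h2 : ∏ _j : Fin k, ‖(EuclideanSpace.proj i : E n →L[ℝ] ℝ)‖ ≤ 1 :=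
      Finset.prod_le_one (fun _ _ => norm_nonneg _) fun _ _ => hp i
    have h3 : ‖iteratedFDeriv ℝ k b ((EuclideanSpace.proj i : E n →L[ℝ] ℝ) x)‖ ≤ β := by
      rcases hk with rfl | rfl
      exacts [hb.d2 _, hb.d3 _]
    have h4 := h1.trans (mul_le_mul h3 h2 (by positivity) hb.beta_pos.le)
    have h5 : ‖(EuclideanSpace.single i (1 : ℝ) : E n)‖ = 1 := by simp
    rw [h5, one_mul]
    linarith
  refine (Finset.sum_le_sum this).trans ?_
  simp

lemma Dm_iter_le (hb : Drift b δ β) {h : ℝ} (h0 : 0 ≤ h) {k : ℕ} (hk : k = 2 ∨ k = 3) (x : E n) :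
    ‖iteratedFDeriv ℝ k (Dm b h) x‖ ≤ h * (n * β) := by
  have hk3 : k ≤ 3 := by omega
  have e : (Dm b h : E n → E n) = (fun x => ContinuousLinearMap.id ℝ (E n) x) + (-h) • Bm b := rfl
  have c1 : ContDiffAt ℝ k (fun x => ContinuousLinearMap.id ℝ (E n) x) x :=
    (ContinuousLinearMap.contDiff _).contDiffAt
  have c2 : ContDiffAt ℝ k ((-h) • (Bm b : E n → E n)) x :=
    (((Bm_contDiff hb).of_le (cast_le3 hk3)).const_smul (-h)).contDiffAt
  rw [e, iteratedFDeriv_add_apply c1 c2,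
    iteratedFDeriv_const_smul_apply ((Bm_contDiff hb).of_le (cast_le3 hk3)).contDiffAt]
  have z : iteratedFDeriv ℝ k (fun x => ContinuousLinearMap.id ℝ (E n) x) x = 0 := by
    rw [← norm_eq_zero]
    obtain ⟨m, rfl⟩ : ∃ m, k = m + 2 := ⟨k - 2, by omega⟩
    rw [← norm_iteratedFDeriv_fderiv]
    have : fderiv ℝ (fun x => ContinuousLinearMap.id ℝ (E n) x) =
      fun _ => ContinuousLinearMap.id ℝ (E n) := by
      funext y; exact ContinuousLinearMap.fderiv _
    rw [this, iteratedFDeriv_const_of_ne (by omega)]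
    simp
  rw [z, zero_add, norm_smul, norm_neg, Real.norm_of_nonneg h0]
  exact mul_le_mul_of_nonneg_left (Bm_iter_le hb hk x) h0

/-- unconditional functions -/
def UC {α : Type*} (f : E n → α) : Prop :=
  ∀ (x : E n) (ε : Fin n → ℝ), (∀ i, ε i = 1 ∨ ε i = -1) →
    f (WithLp.toLp 2 fun i => ε i * x i) = f x

lemma UC_Dm {α : Type*} {f : E n → α} (hb : Drift b δ β) (h : ℝ) (hf : UC f) :
    UC (fun x => f (Dm b h x)) := by
  intro x ε hε
  change f (Dm b h _) = f (Dm b h x)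
  rw [← hf (Dm b h x) ε hε]
  congr 1
  ext i
  rw [Dm_apply]
  simp only [Dm_apply]
  rcases hε i with e | e <;> rw [e]
  · simp
  · simp [hb.odd]; ring

/-- the sign change isometry -/
noncomputable def signIso (ε : Fin n → ℝ) : E n ≃ₗᵢ[ℝ] E n :=
  LinearIsometryEquiv.piLpCongrRight 2 fun i =>
    if ε i = 1 then LinearIsometryEquiv.refl ℝ ℝ else LinearIsometryEquiv.neg ℝ

lemma signIso_apply {ε : Fin n → ℝ} (hε : ∀ i, ε i = 1 ∨ ε i = -1) (x : E n) :
    signIso ε x = WithLp.toLp 2 fun i => ε i * x i := by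
  ext i
  rcases hε i with e | e
  · simp [signIso, e]
  · have : ¬ ((-1 : ℝ) = 1) := by norm_num
    simp [signIso, e, this]

/-- the standard Gaussian -/
noncomputable abbrev γ (n : ℕ) : Measure (E n) := ProbabilityTheory.stdGaussian (E n)

lemma UC_noise {f : E n → ℝ} (hc : Continuous f) (c : ℝ) (hf : UC f) : UC (noise (γ n) c f) := by
  intro x ε hε
  have h1 := ProbabilityTheory.stdGaussian_map (signIso ε)
  unfold noise
  rw [← signIso_apply hε]
  have : ∫ z, f (signIso ε x + c • z) ∂(γ n) = ∫ z, f (signIso ε x + c • z) ∂((γ n).map (signIso ε)) := by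
    rw [h1]
  rw [this, integral_map (signIso ε).continuous.measurable.aemeasurable]
  · refine integral_congr_ae (Eventually.of_forall fun z => ?_)
    simp only
    rw [← map_smul, ← map_add, signIso_apply hε, hf _ _ hε]
  · have : Continuous fun z => f (signIso ε x + c • z) := by fun_prop
    exact this.aestronglyMeasurable

lemma LC.min_le {f : E n → ℝ} (hf : LC f) (pos : ∀ x, 0 < f x) {x y : E n} (hxy : f x = f y)
    {a b : ℝ} (ha : 0 ≤ a) (hb : 0 ≤ b) (hab : a + b = 1) : f x ≤ f (a • x + b • y) := by
  rcases ha.eq_or_lt with rfl | ha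
  · have : b = 1 := by linarith
    simp [this, hxy]
  rcases hb.eq_or_lt with rfl | hb
  · have : a = 1 := by linarith
    simp [this]
  have := hf a b ha hb hab x y
  rwa [← hxy, ← Real.rpow_add (pos x), hab, Real.rpow_one] at this

lemma LC_mono_one {f : E n → ℝ} (hf : LC f) (pos : ∀ x, 0 < f x) (hu : UC f) {y z : E n}
    (i : Fin n) (hi : |y i| ≤ |z i|) (hj : ∀ j, j ≠ i → y j = z j) : f z ≤ f y := by
  obtain ⟨a, b, ha, hb, hab, e⟩ : ∃ a b : ℝ, 0 ≤ a ∧ 0 ≤ b ∧ a + b = 1 ∧ y i = a * z i + b * (-z i) := by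
    by_cases h0 : z i = 0
    · refine ⟨1, 0, by norm_num, by norm_num, by norm_num, ?_⟩
      rw [h0, abs_zero] at hi
      have := abs_nonpos_iff.1 hi
      simp [this, h0]
    · have hr : |y i / z i| ≤ 1 := by
        rw [abs_div]; exact div_le_one_of_le₀ hi (abs_nonneg _)
      rw [_root_.abs_le] at hr
      refine ⟨(1 + y i / z i) / 2, (1 - y i / z i) / 2, by linarith, by linarith, by ring, ?_⟩
      field_simp; ring
  have h1 := hu z (fun j => if j = i then -1 else 1) (fun j => by by_cases h : j = i <;> simp [h])
  have h2 := hf.min_le pos h1.symm ha hb hab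
  refine h2.trans (le_of_eq ?_)
  congr 1
  ext j
  by_cases h : j = i
  · subst h; simp [e]
  · simp [h, hj j h, ← add_mul, hab]

lemma LC_mono {f : E n → ℝ} (hf : LC f) (pos : ∀ x, 0 < f x) (hu : UC f) {y z : E n}
    (h : ∀ i, |y i| ≤ |z i|) : f z ≤ f y := by
  classical
  have key : ∀ s : Finset (Fin n), f z ≤ f (WithLp.toLp 2 fun i => if i ∈ s then y i else z i) := by
    intro s
    induction s using Finset.induction_on with
    | empty => simp
    | insert i s his ih =>
      refine ih.trans (LC_mono_one hf pos hu i ?_ ?_)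
      · simpa [his] using h i
      · intro j hj; simp [hj]
  have := key Finset.univ
  simpa using this

lemma drift_abs (hb : Drift b δ β) {h : ℝ} (h0 : 0 ≤ h) (h1 : h * β ≤ 1) {a c : ℝ} (ha : 0 ≤ a)
    (hc : 0 ≤ c) (hac : a + c = 1) (s t : ℝ) :
    |(a * s + c * t) - h * b (a * s + c * t)| ≤ a * |s - h * b s| + c * |t - h * b t| := by
  let d : ℝ → ℝ := fun x => x - h * b x
  have hd : Monotone d := by
    refine monotone_of_deriv_nonneg (by have := hb.diff; fun_prop) fun x => ?_
    have : HasDerivAt d (1 - h * deriv b x) x :=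
      (hasDerivAt_id x).sub ((hb.diff x).hasDerivAt.const_mul h)
    rw [this.deriv]
    have := mul_le_mul_of_nonneg_left (hb.upper x) h0
    linarith
  have d0 : d 0 = 0 := by simp [d, hb.zero]
  have hodd : ∀ x, d (-x) = - d x := fun x => by simp [d, hb.odd]; ring
  have habs : ∀ x, |d x| = d |x| := by
    intro x
    rcases le_total 0 x with hx | hx
    · rw [abs_of_nonneg hx, abs_of_nonneg]; rw [← d0]; exact hd hx
    · rw [abs_of_nonpos hx, hodd, abs_of_nonpos]; rw [← d0]; exact hd hx
  change |d _| ≤ a * |d s| + c * |d t|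
  rw [habs, habs, habs]
  have l1 : |a * s + c * t| ≤ a * |s| + c * |t| := by
    refine (abs_add_le _ _).trans ?_
    rw [abs_mul, abs_mul, abs_of_nonneg ha, abs_of_nonneg hc]
  refine (hd l1).trans ?_
  have := hb.conc.2 (x := |s|) (abs_nonneg s) (y := |t|) (abs_nonneg t) ha hc hac
  simp only [smul_eq_mul] at this
  simp only [d]
  nlinarith [mul_le_mul_of_nonneg_left this h0]

lemma LC_Dm {f : E n → ℝ} (hf : LC f) (pos : ∀ x, 0 < f x) (hu : UC f) (hb : Drift b δ β) {h : ℝ}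
    (h0 : 0 ≤ h) (h1 : h * β ≤ 1) : LC (fun x => f (Dm b h x)) := by
  have habs : ∀ x : E n, f x = f (WithLp.toLp 2 fun i => |x i|) := fun x =>
    le_antisymm (LC_mono hf pos hu fun i => by simp) (LC_mono hf pos hu fun i => by simp)
  intro a c ha hc hac x y
  simp only
  rw [habs (Dm b h x), habs (Dm b h y)]
  refine (hf a c ha hc hac _ _).trans (LC_mono hf pos hu fun i => ?_)
  have := drift_abs hb h0 h1 ha.le hc.le hac (x i) (y i)
  rw [Dm_apply]
  simp only [PiLp.add_apply, PiLp.smul_apply, smul_eq_mul, Dm_apply]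
  exact this.trans (le_abs_self _)

end

end SC

namespace SC

set_option maxSynthPendingDepth 3

section
variable {n : ℕ} {b : ℝ → ℝ} {δ β : ℝ}

lemma norm_fd2 {X W : Type} [NormedAddCommGroup X] [NormedSpace ℝ X] [NormedAddCommGroup W]
    [NormedSpace ℝ W] (f : X → W) (x : X) :
    ‖fderiv ℝ (fderiv ℝ f) x‖ = ‖iteratedFDeriv ℝ 2 f x‖ := by
  rw [← norm_iteratedFDeriv_one, norm_iteratedFDeriv_fderiv]


lemma norm_fd3 {X W : Type} [NormedAddCommGroup X] [NormedSpace ℝ X] [NormedAddCommGroup W]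
    [NormedSpace ℝ W] (f : X → W) (x : X) :
    ‖fderiv ℝ (fderiv ℝ (fderiv ℝ f)) x‖ = ‖iteratedFDeriv ℝ 3 f x‖ := by
  rw [norm_fd2, norm_iteratedFDeriv_fderiv]

/-- the class of densities -/
structure Rc (A F G : ℝ) (f : E n → ℝ) : Prop where
  smooth : ContDiff ℝ 3 f
  pos : ∀ x, 0 < f x
  le : ∀ x, f x ≤ F
  rb : RB A f
  grad : ∀ x, ‖fderiv ℝ f x‖ ≤ G
  uc : UC f
  lc : LC f

/-- one Euler step of the semigroup -/
noncomputable def Qs (b : ℝ → ℝ) (h : ℝ) (f : E n → ℝ) (x : E n) : ℝ :=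
  noise (γ n) (√(2 * h)) f (Dm b h x)

lemma Rc_step (hb : Drift b δ β) {h : ℝ} (h0 : 0 ≤ h) (h1 : h * β ≤ 1) {A F G : ℝ} (hA : 0 ≤ A)
    {f : E n → ℝ} (hf : Rc A F G f) :
    Rc (A * (1 + 4 * (h * (n * β)))) F (G * (1 - h * δ)) (Qs b h f) := by
  obtain ⟨s1, s2⟩ := RB_noise (γ n) (c := √(2 * h)) hf.smooth hf.pos hf.le hf.rb hA
  have hβ := hb.beta_pos
  have p1 : ∀ x, 0 < noise (γ n) (√(2 * h)) f x := noise_pos (γ n) hf.smooth.continuous hf.pos hf.le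
  have u1 : UC (noise (γ n) (√(2 * h)) f) := UC_noise hf.smooth.continuous _ hf.uc
  have l1 : LC (noise (γ n) (√(2 * h)) f) :=
    noise_LC (γ n) (pl_std n) hf.smooth.continuous hf.pos hf.le hf.lc
  refine ⟨s1.comp (Dm_contDiff hb h), fun x => p1 _,
    fun x => noise_le (γ n) hf.smooth.continuous hf.pos hf.le _, ?_, ?_, UC_Dm hb h u1,
    LC_Dm l1 p1 u1 hb h0 h1⟩
  · refine RB_comp hA p1 s1 s2 (Dm_contDiff hb h) (fun x => ?_) (by positivity)
      (Dm_iter_le hb h0 (Or.inl rfl)) (Dm_iter_le hb h0 (Or.inr rfl))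
    refine (Dm_fderiv_le hb h0 h1 x).trans ?_
    nlinarith [hb.dpos]
  · intro x
    have := comp_d1 (s1.of_le (by norm_num)) ((Dm_contDiff (n := n) hb h).of_le (by norm_num))
      (Dm_fderiv_le hb h0 h1) x
    rw [norm_iteratedFDeriv_one, norm_iteratedFDeriv_one] at this
    refine this.trans ?_
    have h2 := noise_fderiv (γ n) (c := √(2 * h)) hf.smooth hf.pos hf.le hf.grad (Dm b h x)
    have h3 : 0 ≤ 1 - h * δ := (norm_nonneg _).trans (Dm_fderiv_le (n := n) hb h0 h1 x)
    exact mul_le_mul_of_nonneg_right h2 h3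

/-- log density -/
noncomputable def lg (f : E n → ℝ) (x : E n) : ℝ := Real.log (f x)

/-- the Riesz map -/
noncomputable def Jm (n : ℕ) : (E n →L[ℝ] ℝ) →L[ℝ] E n :=
  LinearMap.mkContinuous
    { toFun := fun l => (InnerProductSpace.toDual ℝ (E n)).symm l
      map_add' := fun x y => map_add _ x y
      map_smul' := fun c x => by simp } 1 fun x => by
        rw [one_mul]; exact (LinearIsometryEquiv.norm_map _ _).le

lemma Jm_norm : ‖Jm n‖ ≤ 1 := LinearMap.mkContinuous_norm_le _ zero_le_one _

lemma Jm_inner (l : E n →L[ℝ] ℝ) (v : E n) : inner ℝ (Jm n l) v = l v :=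
  InnerProductSpace.toDual_symm_apply

/-- the transport step -/
noncomputable def Tr (h : ℝ) (f : E n → ℝ) (x : E n) : E n :=
  x + h • Jm n (fderiv ℝ (lg f) x)

section Tr
variable {A F G : ℝ} {f : E n → ℝ}

lemma Rc.lg_smooth (hf : Rc A F G f) : ContDiff ℝ 3 (lg f) :=
  hf.smooth.log fun x => (hf.pos x).ne'

lemma Rc.lg_bd (hf : Rc A F G f) (hA : 1 ≤ A) {i : ℕ} (h1 : 1 ≤ i) (h3 : i ≤ 3) (x : E n) :
    ‖iteratedFDeriv ℝ i (lg f) x‖ ≤ clog * A ^ 3 := log_bd hA hf.smooth hf.pos hf.rb h1 h3 x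

lemma Rc.lg_conc (hf : Rc A F G f) (x v : E n) : fderiv ℝ (fderiv ℝ (lg f)) x v v ≤ 0 := by
  have hs := hf.lg_smooth
  have hs1 : ContDiff ℝ 2 (fderiv ℝ (lg f)) := hs.fderiv_right (by norm_num)
  let φ : ℝ → ℝ := fun t => lg f (x + t • v)
  have hl : ∀ t, HasDerivAt (fun t : ℝ => x + t • v) v t := fun t => by
    simpa using ((hasDerivAt_id t).smul_const v).const_add x
  have hφ : ∀ t, HasDerivAt φ (fderiv ℝ (lg f) (x + t • v) v) t := fun t =>
    (hs.differentiable three_ne_zero _).hasFDerivAt.comp_hasDerivAt t (hl t)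
  have hφ2 : HasDerivAt (fun t : ℝ => fderiv ℝ (lg f) (x + t • v) v)
      (fderiv ℝ (fderiv ℝ (lg f)) x v v) (0:ℝ) := by
    have h1 := (hs1.differentiable two_ne_zero (x + (0:ℝ) • v)).hasFDerivAt.comp_hasDerivAt 0 (hl 0)
    have h2 := h1.clm_apply (hasDerivAt_const (0:ℝ) v)
    simpa using h2
  have hc : ConcaveOn ℝ Set.univ φ := by
    refine ⟨convex_univ, fun s _ t _ a c ha hc hac => ?_⟩
    rcases ha.eq_or_lt with rfl | ha
    · have : c = 1 := by linarith
      simp [this]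
    rcases hc.eq_or_lt with rfl | hc
    · have : a = 1 := by linarith
      simp [this]
    have h1 := hf.lc a c ha hc hac (x + s • v) (x + t • v)
    have p1 := hf.pos (x + s • v)
    have p2 := hf.pos (x + t • v)
    have h2 := Real.log_le_log (mul_pos (Real.rpow_pos_of_pos p1 a) (Real.rpow_pos_of_pos p2 c)) h1
    rw [Real.log_mul (Real.rpow_pos_of_pos p1 a).ne' (Real.rpow_pos_of_pos p2 c).ne',
      Real.log_rpow p1, Real.log_rpow p2] at h2
    have e : a • (x + s • v) + c • (x + t • v) = x + (a • s + c • t) • v := by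
      rw [smul_add, smul_add, add_add_add_comm, ← add_smul, hac, one_smul, add_smul]
      simp [smul_smul]
    rw [e] at h2
    exact h2
  have ha : Antitone (deriv φ) := by
    have := hc.antitoneOn_deriv (fun t _ => (hφ t).differentiableAt)
    exact antitoneOn_univ.1 this
  have hd : deriv φ = fun t => fderiv ℝ (lg f) (x + t • v) v := funext fun t => (hφ t).deriv
  have := ha.deriv_nonpos (x := 0)
  rwa [hd, hφ2.deriv] at this

lemma Tr_hasFDerivAt (hf : Rc A F G f) (h : ℝ) (x : E n) :
    HasFDerivAt (Tr h f) (ContinuousLinearMap.id ℝ (E n) +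
      h • ((Jm n).comp (fderiv ℝ (fderiv ℝ (lg f)) x))) x := by
  have hs1 : ContDiff ℝ 2 (fderiv ℝ (lg f)) := hf.lg_smooth.fderiv_right (by norm_num)
  have h1 := (hs1.differentiable two_ne_zero x).hasFDerivAt
  have h2 := ((Jm n).hasFDerivAt (x := fderiv ℝ (lg f) x)).comp x h1
  exact (hasFDerivAt_id x).add (h2.const_smul h)

lemma Tr_fderiv_le (hf : Rc A F G f) (hA : 1 ≤ A) {h : ℝ} (h0 : 0 ≤ h) (h1 : h * (clog * A ^ 3) ≤ 1)
    (x : E n) : ‖fderiv ℝ (Tr h f) x‖ ≤ 1 := by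
  rw [(Tr_hasFDerivAt hf h x).fderiv]
  refine ContinuousLinearMap.opNorm_le_bound _ zero_le_one fun v => ?_
  set D := fderiv ℝ (fderiv ℝ (lg f)) x with hD
  let P : E n → E n := fun v => Jm n (D v)
  have hP : ∀ v w, inner ℝ (P v) w = D v w := fun v w => Jm_inner _ _
  have hsym : ∀ v w, D v w = D w v := fun v w =>
    ((hf.lg_smooth.contDiffAt (x := x)).isSymmSndFDerivAt
      (by simp; norm_num)).eq v w
  have hneg : ∀ v, D v v ≤ 0 := hf.lg_conc x
  have hK : ‖D‖ ≤ clog * A ^ 3 := by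
    rw [hD, norm_fd2]; exact hf.lg_bd hA (by norm_num) (by norm_num) x
  have e1 : D (v + h • P v) (v + h • P v) = D v v + 2 * h * inner ℝ (P v) (P v)
      + h ^ 2 * D (P v) (P v) := by
    simp only [map_add, map_smul, add_apply, smul_apply,
      smul_eq_mul]
    rw [hsym (P v) v, ← hP v (P v)]; ring
  have e2 := hneg (v + h • P v)
  rw [e1] at e2
  have e3 : -(clog * A ^ 3 * ‖P v‖ ^ 2) ≤ D (P v) (P v) := by
    have a1 := D.le_opNorm₂ (P v) (P v)
    have a2 : ‖D‖ * ‖P v‖ * ‖P v‖ ≤ clog * A ^ 3 * ‖P v‖ ^ 2 := by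
      rw [mul_assoc, ← sq]; gcongr
    have a3 := (abs_le.1 (a1.trans a2)).1
    exact a3
  have e4 : inner ℝ (P v) (P v) = ‖P v‖ ^ 2 := real_inner_self_eq_norm_sq _
  rw [e4] at e2
  have e5 : D v v ≤ - (h * ‖P v‖ ^ 2) := by
    have q : 0 ≤ ‖P v‖ ^ 2 := by positivity
    nlinarith [mul_le_mul_of_nonneg_left e3 (sq_nonneg h), mul_le_mul_of_nonneg_right h1 (mul_nonneg h0 q)]
  have e6 : ‖v + h • P v‖ ^ 2 ≤ ‖v‖ ^ 2 := by
    rw [norm_add_sq_real, norm_smul, inner_smul_right, real_inner_comm, hP, mul_pow, Real.norm_eq_abs,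
      sq_abs]
    nlinarith [mul_le_mul_of_nonneg_left e5 h0, mul_nonneg (sq_nonneg h) (sq_nonneg ‖P v‖)]
  rw [one_mul]
  exact (sq_le_sq₀ (norm_nonneg _) (norm_nonneg _)).1 e6

lemma Tr_lip (hf : Rc A F G f) (hA : 1 ≤ A) {h : ℝ} (h0 : 0 ≤ h) (h1 : h * (clog * A ^ 3) ≤ 1) :
    LipschitzWith 1 (Tr h f) :=
  lipschitzWith_of_nnnorm_fderiv_le (fun x => (Tr_hasFDerivAt hf h x).differentiableAt)
    fun x => by exact_mod_cast Tr_fderiv_le hf hA h0 h1 x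


lemma fd2_lip (hf : Rc A F G f) (hA : 1 ≤ A) (x y : E n) :
    ‖fderiv ℝ (fderiv ℝ (lg f)) x - fderiv ℝ (fderiv ℝ (lg f)) y‖ ≤ clog * A ^ 3 * ‖x - y‖ := by
  have hs1 : ContDiff ℝ 2 (fderiv ℝ (lg f)) := hf.lg_smooth.fderiv_right (by norm_num)
  have hs2 : ContDiff ℝ 1 (fderiv ℝ (fderiv ℝ (lg f))) := hs1.fderiv_right (by norm_num)
  exact Convex.norm_image_sub_le_of_norm_fderiv_le (s := Set.univ)
    (fun x _ => hs2.differentiable one_ne_zero x)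
    (fun x _ => by rw [norm_fd3]; exact hf.lg_bd hA (by norm_num) (by norm_num) x) convex_univ
    trivial trivial

lemma Tr_fderiv_lip (hf : Rc A F G f) (hA : 1 ≤ A) {h : ℝ} (h0 : 0 ≤ h) (x y : E n) :
    ‖fderiv ℝ (Tr h f) x - fderiv ℝ (Tr h f) y‖ ≤ h * (clog * A ^ 3) * ‖x - y‖ := by
  have e : ∀ a b : E n →L[ℝ] E n →L[ℝ] ℝ, h • (Jm n).comp a - h • (Jm n).comp b =
      h • (Jm n).comp (a - b) := fun a b => by ext v; simp [mul_sub]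
  rw [(Tr_hasFDerivAt hf h x).fderiv, (Tr_hasFDerivAt hf h y).fderiv, add_sub_add_left_eq_sub,
    e, norm_smul, Real.norm_of_nonneg h0, mul_assoc]
  refine mul_le_mul_of_nonneg_left ?_ h0
  refine (ContinuousLinearMap.opNorm_comp_le _ _).trans ?_
  refine (mul_le_mul Jm_norm (fd2_lip hf hA x y) (norm_nonneg _) zero_le_one).trans (by rw [one_mul])

lemma Tr_zero (hf : Rc A F G f) (h : ℝ) : Tr h f 0 = 0 := by
  have hev : ∀ x, lg f (-x) = lg f x := fun x => by
    have := hf.uc x (fun _ => -1) (fun _ => Or.inr rfl)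
    have e : (WithLp.toLp 2 fun i => (-1 : ℝ) * x i : E n) = -x := by ext i; simp
    rw [e] at this
    rw [lg, lg, this]
  have h1 := (hf.lg_smooth.differentiable three_ne_zero (-0)).hasFDerivAt.comp (0 : E n)
    (hasFDerivAt_id (𝕜 := ℝ) (0 : E n)).neg
  have h2 : lg f ∘ Neg.neg = lg f := funext fun x => hev x
  rw [h2] at h1
  have h3 := h1.fderiv
  have h4 : fderiv ℝ (lg f) 0 = 0 := by
    ext v
    have := congrArg (fun L => L v) h3
    simp at this
    simp
    linarith
  simp [Tr, h4]

end Tr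

/-- test functions -/
structure Test (L M : ℝ) (φ : E n → ℝ) : Prop where
  smooth : ContDiff ℝ 1 φ
  bd : ∀ x, |φ x| ≤ 1
  d1 : ∀ x, ‖fderiv ℝ φ x‖ ≤ L
  d2 : ∀ x y, ‖fderiv ℝ φ x - fderiv ℝ φ y‖ ≤ M * ‖x - y‖

lemma Tr_contDiff {A F G : ℝ} {f : E n → ℝ} (hf : Rc A F G f) (h : ℝ) : ContDiff ℝ 2 (Tr h f) := by
  have hs1 : ContDiff ℝ 2 (fderiv ℝ (lg f)) := hf.lg_smooth.fderiv_right (by norm_num)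
  exact contDiff_id.add (((Jm n).contDiff.comp hs1).const_smul h)

lemma Test.comp {A F G : ℝ} {f : E n → ℝ} (hf : Rc A F G f) (hA : 1 ≤ A) {h : ℝ} (h0 : 0 ≤ h)
    (h1 : h * (clog * A ^ 3) ≤ 1) {L M : ℝ} {φ : E n → ℝ} (hM : 0 ≤ M) (hφ : Test L M φ) :
    Test L (M + h * (clog * A ^ 3) * L) (fun x => φ (Tr h f x)) := by
  have hL : 0 ≤ L := (norm_nonneg _).trans (hφ.d1 0)
  have hd : ∀ x, fderiv ℝ (fun x => φ (Tr h f x)) x = (fderiv ℝ φ (Tr h f x)).comp (fderiv ℝ (Tr h f) x) :=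
    fun x => fderiv_comp x (hφ.smooth.differentiable one_ne_zero _)
      ((Tr_contDiff hf h).differentiable two_ne_zero x)
  have hT := Tr_fderiv_le hf hA h0 h1
  refine ⟨hφ.smooth.comp ((Tr_contDiff hf h).of_le (by norm_num)), fun x => hφ.bd _, fun x => ?_,
    fun x y => ?_⟩
  · rw [hd]
    refine (ContinuousLinearMap.opNorm_comp_le _ _).trans ?_
    exact (mul_le_mul (hφ.d1 _) (hT x) (norm_nonneg _) hL).trans (by rw [mul_one])
  · rw [hd, hd]
    have e : (fderiv ℝ φ (Tr h f x)).comp (fderiv ℝ (Tr h f) x) -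
        (fderiv ℝ φ (Tr h f y)).comp (fderiv ℝ (Tr h f) y) =
        (fderiv ℝ φ (Tr h f x)).comp (fderiv ℝ (Tr h f) x - fderiv ℝ (Tr h f) y) +
        (fderiv ℝ φ (Tr h f x) - fderiv ℝ φ (Tr h f y)).comp (fderiv ℝ (Tr h f) y) := by
      ext v; simp
    rw [e]
    refine (norm_add_le _ _).trans ?_
    have l1 : ‖Tr h f x - Tr h f y‖ ≤ ‖x - y‖ := by
      have := (Tr_lip hf hA h0 h1).dist_le_mul x y
      simpa [dist_eq_norm] using this
    have b1 := (ContinuousLinearMap.opNorm_comp_le (fderiv ℝ φ (Tr h f x))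
      (fderiv ℝ (Tr h f) x - fderiv ℝ (Tr h f) y)).trans
      (mul_le_mul (hφ.d1 _) (Tr_fderiv_lip hf hA h0 x y) (norm_nonneg _) hL)
    have b2 := (ContinuousLinearMap.opNorm_comp_le (fderiv ℝ φ (Tr h f x) - fderiv ℝ φ (Tr h f y))
      (fderiv ℝ (Tr h f) y)).trans
      (mul_le_mul ((hφ.d2 _ _).trans (mul_le_mul_of_nonneg_left l1 hM)) (hT y) (norm_nonneg _) (by positivity))
    nlinarith

end

end SC

namespace SC

set_option maxSynthPendingDepth 3

section
variable {n : ℕ}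

/-- third moment -/
noncomputable def m3 (n : ℕ) : ℝ := ∫ z, ‖z‖ ^ 3 ∂(γ n)

lemma m3_nonneg : 0 ≤ m3 n := integral_nonneg fun z => by positivity

lemma int_pow (k : ℕ) (hk : k ≠ 0) : Integrable (fun z : E n => ‖z‖ ^ k) (γ n) := by
  have := ProbabilityTheory.IsGaussian.memLp_id (γ n) k (by simp)
  exact (this.integrable_norm_pow (by simpa using hk))

lemma int_lin (l : E n →L[ℝ] ℝ) : Integrable (fun z => l z) (γ n) := by
  refine ((int_pow 1 one_ne_zero).const_mul ‖l‖).mono' l.continuous.aestronglyMeasurable ?_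
  exact Eventually.of_forall fun z => by simpa using l.le_opNorm z

lemma int_bil (B : E n →L[ℝ] E n →L[ℝ] ℝ) : Integrable (fun z => B z z) (γ n) := by
  have hc : Continuous fun z => B z z := by fun_prop
  refine ((int_pow 2 two_ne_zero).const_mul ‖B‖).mono' hc.aestronglyMeasurable ?_
  exact Eventually.of_forall fun z => by
    have := B.le_opNorm₂ z z
    rw [sq, ← mul_assoc]; exact this

/-- trace of a bilinear form -/
noncomputable def tr2 (B : E n →L[ℝ] E n →L[ℝ] ℝ) : ℝ :=
  ∑ i, B (EuclideanSpace.single i 1) (EuclideanSpace.single i 1)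

lemma gauss_two (i j : Fin n) : ∫ z : E n, z i * z j ∂(γ n) = if i = j then 1 else 0 := by
  have h := congrArg (fun L => L (EuclideanSpace.single i (1:ℝ)) (EuclideanSpace.single j (1:ℝ)))
    (ProbabilityTheory.covarianceBilin_stdGaussian (E := E n))
  have h1 := ProbabilityTheory.covarianceBilin_apply
    (ProbabilityTheory.IsGaussian.memLp_two_id (μ := γ n))
    (EuclideanSpace.single i (1:ℝ)) (EuclideanSpace.single j (1:ℝ))
  simp only at h
  rw [h1] at h
  simp [EuclideanSpace.inner_single_left] at h
  rw [h]
  change inner ℝ (EuclideanSpace.single i (1:ℝ) : E n) (EuclideanSpace.single j (1:ℝ)) = _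
  simp [EuclideanSpace.inner_single_left, Pi.single_apply]

lemma expand (x : E n) : x = ∑ i, x i • (EuclideanSpace.single i (1:ℝ) : E n) := by
  ext j; simp [Finset.sum_apply, Pi.single_apply]

lemma gauss_tr (B : E n →L[ℝ] E n →L[ℝ] ℝ) : ∫ z, B z z ∂(γ n) = tr2 B := by
  have e : ∀ z : E n, B z z = ∑ i, ∑ j, (z i * z j) *
      B (EuclideanSpace.single i 1) (EuclideanSpace.single j 1) := by
    intro z
    conv_lhs => rw [expand z]
    simp only [map_sum, map_smul, sum_apply, smul_apply, smul_eq_mul,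
      Finset.mul_sum]
    rw [Finset.sum_comm]
    refine Finset.sum_congr rfl fun i _ => Finset.sum_congr rfl fun j _ => by ring
  have hi : ∀ i j : Fin n, Integrable (fun z : E n => z i * z j) (γ n) := fun i j => by
    have hc : Continuous fun z : E n => z i * z j := by fun_prop
    refine (int_pow 2 two_ne_zero).mono' hc.aestronglyMeasurable (Eventually.of_forall fun z => ?_)
    rw [norm_mul, sq]
    exact mul_le_mul (PiLp.norm_apply_le z i) (PiLp.norm_apply_le z j) (norm_nonneg _) (norm_nonneg _)
  simp_rw [e]
  rw [integral_finsetSum _ fun i _ => integrable_finsetSum _ fun j _ => (hi i j).mul_const _]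
  simp_rw [integral_finsetSum _ fun j _ => (hi _ j).mul_const _, integral_mul_const, gauss_two]
  simp [tr2]

lemma tr2_le (B : E n →L[ℝ] E n →L[ℝ] ℝ) : |tr2 B| ≤ n * ‖B‖ := by
  refine (Finset.abs_sum_le_sum_abs _ _).trans ?_
  refine (Finset.sum_le_sum (g := fun _ => ‖B‖) fun i _ => ?_).trans (by simp)
  have := B.le_opNorm₂ (EuclideanSpace.single i 1) (EuclideanSpace.single i 1)
  simpa using this

lemma tr2_sub (B C : E n →L[ℝ] E n →L[ℝ] ℝ) : tr2 B - tr2 C = tr2 (B - C) := by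
  simp [tr2]

lemma taylor1 {W : Type} [NormedAddCommGroup W] [NormedSpace ℝ W] {φ : E n → W}
    (hd : Differentiable ℝ φ) {M : ℝ} (hM : 0 ≤ M)
    (h : ∀ x y, ‖fderiv ℝ φ x - fderiv ℝ φ y‖ ≤ M * ‖x - y‖) (x y : E n) :
    ‖φ (x + y) - φ x - fderiv ℝ φ x y‖ ≤ M * ‖y‖ ^ 2 := by
  have := Convex.norm_image_sub_le_of_norm_fderiv_le' (s := Metric.closedBall x ‖y‖) (f := φ)
    (φ := fderiv ℝ φ x) (C := M * ‖y‖) (x := x) (y := x + y) (fun z _ => hd z) (fun z hz => by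
      refine (h z x).trans (mul_le_mul_of_nonneg_left ?_ hM)
      simpa [dist_eq_norm] using hz) (convex_closedBall _ _) (by simp) (by simp)
  rw [add_sub_cancel_left] at this
  rw [sq, ← mul_assoc]; exact this

lemma taylor2 {f : E n → ℝ} (hf : ContDiff ℝ 3 f) {D : ℝ}
    (h : ∀ x, ‖iteratedFDeriv ℝ 3 f x‖ ≤ D) (x y : E n) :
    |f (x + y) - f x - fderiv ℝ f x y - fderiv ℝ (fderiv ℝ f) x y y / 2| ≤ D * ‖y‖ ^ 3 := by
  have hD : 0 ≤ D := (norm_nonneg _).trans (h 0)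
  have hs1 : ContDiff ℝ 2 (fderiv ℝ f) := hf.fderiv_right (by norm_num)
  have hs2 : ContDiff ℝ 1 (fderiv ℝ (fderiv ℝ f)) := hs1.fderiv_right (by norm_num)
  have hL : ∀ x y, ‖fderiv ℝ (fderiv ℝ f) x - fderiv ℝ (fderiv ℝ f) y‖ ≤ D * ‖x - y‖ := fun x y =>
    Convex.norm_image_sub_le_of_norm_fderiv_le (s := Set.univ)
    (fun x _ => hs2.differentiable one_ne_zero x)
    (fun x _ => by rw [norm_fd3]; exact h x) convex_univ trivial trivial
  have h1 := taylor1 (hs1.differentiable two_ne_zero) hD hL x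
  let φ : ℝ → ℝ := fun t => f (x + t • y) - t * fderiv ℝ f x y - t ^ 2 / 2 * fderiv ℝ (fderiv ℝ f) x y y
  have hl : ∀ t, HasDerivAt (fun t : ℝ => x + t • y) y t := fun t => by
    simpa using ((hasDerivAt_id t).smul_const y).const_add x
  have hφ : ∀ t, HasDerivAt φ (fderiv ℝ f (x + t • y) y - fderiv ℝ f x y -
      fderiv ℝ (fderiv ℝ f) x (t • y) y) t := fun t => by
    have a1 := (hf.differentiable three_ne_zero (x + t • y)).hasFDerivAt.comp_hasDerivAt t (hl t)
    have a2 := (hasDerivAt_id t).mul_const (fderiv ℝ f x y)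
    have a3 := (((hasDerivAt_id t).pow 2).div_const 2).mul_const (fderiv ℝ (fderiv ℝ f) x y y)
    convert! (a1.sub a2).sub a3 using 1
    simp
  have := Convex.norm_image_sub_le_of_norm_hasDerivWithin_le (f := φ) (C := D * ‖y‖ ^ 3)
    (s := Set.Icc 0 1) (x := 0) (y := 1) (fun t _ => (hφ t).hasDerivWithinAt) (fun t ht => by
      have e : fderiv ℝ f (x + t • y) y - fderiv ℝ f x y - fderiv ℝ (fderiv ℝ f) x (t • y) y =
        (fderiv ℝ f (x + t • y) - fderiv ℝ f x - fderiv ℝ (fderiv ℝ f) x (t • y)) y := by simp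
      rw [e]
      refine (ContinuousLinearMap.le_opNorm _ _).trans ?_
      refine (mul_le_mul_of_nonneg_right (h1 (t • y)) (norm_nonneg _)).trans ?_
      rw [norm_smul, Real.norm_of_nonneg ht.1, mul_pow]
      have : t ^ 2 ≤ 1 := pow_le_one₀ ht.1 ht.2
      have q : 0 ≤ D * ‖y‖ ^ 3 := by positivity
      nlinarith) (convex_Icc 0 1) (by simp) (by simp)
  simp only [φ, Real.norm_eq_abs] at this
  simp at this
  convert! this using 2
  ring

lemma noise_taylor {f : E n → ℝ} (hf : ContDiff ℝ 3 f) {D F : ℝ} (hF : ∀ x, ‖f x‖ ≤ F)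
    (h : ∀ x, ‖iteratedFDeriv ℝ 3 f x‖ ≤ D) {s : ℝ} (hs : 0 ≤ s) (x : E n) :
    |noise (γ n) s f x - f x - s ^ 2 / 2 * tr2 (fderiv ℝ (fderiv ℝ f) x)| ≤ D * s ^ 3 * m3 n := by
  have i1 := noise_int (γ n) (c := s) hf.continuous hF x
  have i2 := int_lin (fderiv ℝ f x)
  have i3 := int_bil (fderiv ℝ (fderiv ℝ f) x)
  have e : noise (γ n) s f x - f x - s ^ 2 / 2 * tr2 (fderiv ℝ (fderiv ℝ f) x) =
      ∫ z, (f (x + s • z) - f x - s * fderiv ℝ f x z - s ^ 2 / 2 * fderiv ℝ (fderiv ℝ f) x z z) ∂(γ n) := by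
    rw [integral_sub, integral_sub, integral_sub, integral_const_mul, integral_const_mul,
      ProbabilityTheory.integral_strongDual_stdGaussian, gauss_tr]
    · simp [noise]
    · exact i1
    · exact integrable_const _
    · exact i1.sub (integrable_const _)
    · exact i2.const_mul s
    · exact (i1.sub (integrable_const _)).sub (i2.const_mul s)
    · exact i3.const_mul _
  rw [e, m3, ← integral_const_mul, ← Real.norm_eq_abs]
  refine norm_integral_le_of_norm_le ((int_pow 3 three_ne_zero).const_mul _)
    (Eventually.of_forall fun z => ?_)
  have := taylor2 hf h x (s • z)
  rw [norm_smul, Real.norm_of_nonneg hs] at this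
  rw [Real.norm_eq_abs]
  convert! this using 1
  · simp; ring_nf
  · ring

end
end SC

namespace SC

set_option maxSynthPendingDepth 3

section
variable {n : ℕ} {b v : ℝ → ℝ} {δ β : ℝ}

/-- potentials -/
structure Pot (v b : ℝ → ℝ) (δ : ℝ) : Prop where
  der : ∀ x, HasDerivAt v (b x) x
  low : ∀ x, δ / 2 * x ^ 2 ≤ v x

/-- the reference density -/
noncomputable def rho (v : ℝ → ℝ) (x : E n) : ℝ := Real.exp (-∑ i, v (x i))

lemma rho_pos (x : E n) : 0 < rho v x := Real.exp_pos _

lemma rho_le (hv : Pot v b δ) (x : E n) : rho v x ≤ Real.exp (-(δ / 2) * ‖x‖ ^ 2) := by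
  refine Real.exp_le_exp.2 ?_
  rw [EuclideanSpace.real_norm_sq_eq, neg_mul, Finset.mul_sum]
  exact neg_le_neg (Finset.sum_le_sum fun i _ => hv.low _)

lemma rho_cont (hv : Pot v b δ) : Continuous (rho v : E n → ℝ) := by
  have : Continuous v := continuous_iff_continuousAt.2 fun x => (hv.der x).continuousAt
  unfold rho
  fun_prop

lemma int_gauss {a : ℝ} (ha : 0 < a) : Integrable fun x : E n => Real.exp (-a * ‖x‖ ^ 2) := by
  have := (GaussianFourier.integrable_cexp_neg_mul_sq_norm_add (V := E n) (b := (a : ℂ))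
    (by simpa using ha) 0 0).norm
  refine this.congr (Eventually.of_forall fun x => ?_)
  simp only [Complex.norm_exp]
  congr 1
  simp
  norm_cast
  simp

lemma int_weight (hδ : 0 < δ) (hv : Pot v b δ) :
    Integrable fun x : E n => (1 + ‖x‖) ^ 3 * rho v x := by
  set c := min 1 (δ / 8) with hc
  have c0 : 0 < c := lt_min one_pos (by positivity)
  refine ((int_gauss (n := n) (a := δ / 4) (by positivity)).const_mul (4 / c ^ 2)).mono' ?_ ?_
  · have := rho_cont (n := n) hv
    have : Continuous fun x : E n => (1 + ‖x‖) ^ 3 * rho v x := by fun_prop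
    exact this.aestronglyMeasurable
  · refine Eventually.of_forall fun x => ?_
    rw [Real.norm_of_nonneg (mul_nonneg (by positivity) (rho_pos x).le)]
    set t := ‖x‖
    have t0 : 0 ≤ t := norm_nonneg x
    have h1 : (1 + t) ^ 3 ≤ 4 * (1 + t ^ 2) ^ 2 := by
      nlinarith [sq_nonneg (t - 1), mul_nonneg t0 (sq_nonneg (t - 1)), mul_nonneg t0 t0, sq_nonneg (t^2-t), pow_nonneg t0 3]
    have h2 : c * (1 + t ^ 2) ≤ Real.exp (δ / 8 * t ^ 2) := by
      refine le_trans ?_ (Real.add_one_le_exp _)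
      have := min_le_left 1 (δ / 8)
      have := min_le_right 1 (δ / 8)
      nlinarith [sq_nonneg t]
    have h3 : c ^ 2 * (1 + t ^ 2) ^ 2 ≤ Real.exp (δ / 4 * t ^ 2) := by
      have := pow_le_pow_left₀ (by positivity) h2 2
      rw [mul_pow, ← Real.exp_nat_mul] at this
      refine this.trans (le_of_eq ?_)
      congr 1; push_cast; ring
    have h4 : (1 + t) ^ 3 ≤ 4 / c ^ 2 * Real.exp (δ / 4 * t ^ 2) := by
      refine h1.trans ?_
      rw [div_mul_eq_mul_div, le_div_iff₀ (by positivity)]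
      linarith
    calc (1 + t) ^ 3 * rho v x ≤ 4 / c ^ 2 * Real.exp (δ / 4 * t ^ 2) * Real.exp (-(δ / 2) * t ^ 2) :=
          mul_le_mul h4 (rho_le hv x) (rho_pos x).le (by positivity)
      _ = _ := by
          rw [mul_assoc, ← Real.exp_add]
          congr 2; ring

lemma int_of_le (hδ : 0 < δ) (hv : Pot v b δ) {g : E n → ℝ} (hg : Continuous g) {C : ℝ}
    (h : ∀ x, |g x| ≤ C * (1 + ‖x‖) ^ 3) : Integrable fun x : E n => g x * rho v x := by
  refine ((int_weight hδ hv).const_mul C).mono' ?_ (Eventually.of_forall fun x => ?_)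
  · exact (hg.mul (rho_cont hv)).aestronglyMeasurable
  · rw [norm_mul, Real.norm_eq_abs, Real.norm_of_nonneg (rho_pos x).le, ← mul_assoc]
    exact mul_le_mul_of_nonneg_right (h x) (rho_pos x).le

lemma W_one (x : E n) : 1 ≤ (1 + ‖x‖) ^ 3 := one_le_pow₀ (by simp)
lemma W_lin (x : E n) : 1 + ‖x‖ ≤ (1 + ‖x‖) ^ 3 := le_self_pow₀ (by simp) (by norm_num)
lemma W_nrm (x : E n) : ‖x‖ ≤ (1 + ‖x‖) ^ 3 := by linarith [W_lin x]

lemma rho_hasFDerivAt (hv : Pot v b δ) (x : E n) :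
    HasFDerivAt (rho v) (-(rho v x) • ∑ i, b (x i) • (EuclideanSpace.proj i : E n →L[ℝ] ℝ)) x := by
  have h1 : ∀ i : Fin n, HasFDerivAt (fun y : E n => v (y i))
      (b (x i) • (EuclideanSpace.proj i : E n →L[ℝ] ℝ)) x := fun i =>
    (hv.der (x i)).comp_hasFDerivAt x ((EuclideanSpace.proj i : E n →L[ℝ] ℝ).hasFDerivAt (x := x))
  have h2 := (HasFDerivAt.fun_sum fun i (_ : i ∈ Finset.univ) => h1 i).neg.exp
  convert! h2 using 1
  simp [rho]

/-- the second derivative in coordinates -/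
lemma ibp (hb : Drift b δ β) (hv : Pot v b δ) {φ f : E n → ℝ} {L D : ℝ}
    (hφ : ContDiff ℝ 1 φ) (hφ0 : ∀ x, |φ x| ≤ 1) (hφ1 : ∀ x, ‖fderiv ℝ φ x‖ ≤ L)
    (hf : ContDiff ℝ 3 f) (hf1 : ∀ x, ‖fderiv ℝ f x‖ ≤ D)
    (hf2 : ∀ x, ‖fderiv ℝ (fderiv ℝ f) x‖ ≤ D) (i : Fin n) :
    Integrable (fun x => (fderiv ℝ φ x (EuclideanSpace.single i 1) * fderiv ℝ f x (EuclideanSpace.single i 1)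
      + φ x * fderiv ℝ (fderiv ℝ f) x (EuclideanSpace.single i 1) (EuclideanSpace.single i 1)
      - φ x * (b (x i) * fderiv ℝ f x (EuclideanSpace.single i 1))) * rho v x) ∧
    ∫ x, (fderiv ℝ φ x (EuclideanSpace.single i 1) * fderiv ℝ f x (EuclideanSpace.single i 1)
      + φ x * fderiv ℝ (fderiv ℝ f) x (EuclideanSpace.single i 1) (EuclideanSpace.single i 1)
      - φ x * (b (x i) * fderiv ℝ f x (EuclideanSpace.single i 1))) * rho v x = 0 := by
  set e : E n := EuclideanSpace.single i 1 with he
  have en : ‖e‖ = 1 := by simp [he]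
  have hs1 : ContDiff ℝ 2 (fderiv ℝ f) := hf.fderiv_right (by norm_num)
  have hs2 : ContDiff ℝ 1 (fderiv ℝ (fderiv ℝ f)) := hs1.fderiv_right (by norm_num)
  have c1 : Continuous φ := hφ.continuous
  have c2 : Continuous (fderiv ℝ φ) := hφ.continuous_fderiv one_ne_zero
  have c3 : Continuous (fderiv ℝ f) := hs1.continuous
  have c4 : Continuous (fderiv ℝ (fderiv ℝ f)) := hs2.continuous
  have c5 : Continuous b := hb.smooth.continuous
  have b1 : ∀ x, |fderiv ℝ φ x e| ≤ L := fun x => by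
    have := (fderiv ℝ φ x).le_opNorm e
    rw [en, mul_one] at this; exact this.trans (hφ1 x)
  have b2 : ∀ x, |fderiv ℝ f x e| ≤ D := fun x => by
    have := (fderiv ℝ f x).le_opNorm e
    rw [en, mul_one] at this; exact this.trans (hf1 x)
  have b3 : ∀ x, |fderiv ℝ (fderiv ℝ f) x e e| ≤ D := fun x => by
    have := (fderiv ℝ (fderiv ℝ f) x).le_opNorm₂ e e
    rw [en, mul_one, mul_one] at this; exact this.trans (hf2 x)
  have b4 : ∀ x : E n, |b (x i)| ≤ β * ‖x‖ := fun x => (hb.abs_le _).trans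
    (mul_le_mul_of_nonneg_left (PiLp.norm_apply_le x i) hb.beta_pos.le)
  have hL : 0 ≤ L := (abs_nonneg _).trans (b1 0)
  have hD : 0 ≤ D := (abs_nonneg _).trans (b2 0)
  have hβ := hb.beta_pos
  set Ψ : E n → ℝ := fun x => fderiv ℝ φ x e * fderiv ℝ f x e
      + φ x * fderiv ℝ (fderiv ℝ f) x e e - φ x * (b (x i) * fderiv ℝ f x e) with hΨ
  have cΨ : Continuous Ψ := by
    have : Continuous fun x : E n => b (x i) := by fun_prop
    simp only [hΨ]; fun_prop
  have bΨ : ∀ x, |Ψ x| ≤ (L * D + D + β * D) * (1 + ‖x‖) ^ 3 := by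
    intro x
    have W1 := W_one x
    have W2 := W_nrm x
    have t1 : |fderiv ℝ φ x e * fderiv ℝ f x e| ≤ L * D * (1 + ‖x‖) ^ 3 := by
      rw [abs_mul]
      have := mul_le_mul (b1 x) (b2 x) (abs_nonneg _) hL
      nlinarith [mul_nonneg hL hD]
    have t2 : |φ x * fderiv ℝ (fderiv ℝ f) x e e| ≤ D * (1 + ‖x‖) ^ 3 := by
      rw [abs_mul]
      have := mul_le_mul (hφ0 x) (b3 x) (abs_nonneg _) zero_le_one
      nlinarith
    have t3 : |φ x * (b (x i) * fderiv ℝ f x e)| ≤ β * D * (1 + ‖x‖) ^ 3 := by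
      rw [abs_mul, abs_mul]
      have h1 := mul_le_mul (b4 x) (b2 x) (abs_nonneg _) (by positivity)
      have h2 := mul_le_mul (hφ0 x) h1 (by positivity) zero_le_one
      nlinarith [mul_le_mul_of_nonneg_left W2 (mul_nonneg hβ.le hD)]
    have := abs_sub (fderiv ℝ φ x e * fderiv ℝ f x e + φ x * fderiv ℝ (fderiv ℝ f) x e e)
      (φ x * (b (x i) * fderiv ℝ f x e))
    have := abs_add_le (fderiv ℝ φ x e * fderiv ℝ f x e) (φ x * fderiv ℝ (fderiv ℝ f) x e e)
    simp only [hΨ]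
    linarith
  have iΨ := int_of_le hb.dpos hv cΨ bΨ
  refine ⟨iΨ, ?_⟩
  let g : E n → ℝ := fun x => φ x * fderiv ℝ f x e * rho v x
  have ig : Integrable g := int_of_le (C := D) hb.dpos hv (g := fun x => φ x * fderiv ℝ f x e)
    (by fun_prop) fun x => by
      rw [abs_mul]
      have := mul_le_mul (hφ0 x) (b2 x) (abs_nonneg _) zero_le_one
      nlinarith [W_one x]
  have hg : ∀ x, HasFDerivAt g (fderiv ℝ g x) x ∧ fderiv ℝ g x e = Ψ x * rho v x := by
    intro x
    have d1 := (hφ.differentiable one_ne_zero x).hasFDerivAt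
    have d2 := ((hs1.differentiable two_ne_zero x).hasFDerivAt.clm_apply
      (hasFDerivAt_const e x))
    have d3 := (d1.mul d2).mul (rho_hasFDerivAt hv x)
    have d4 : HasFDerivAt g _ x := d3
    refine ⟨d4.differentiableAt.hasFDerivAt, ?_⟩
    rw [d4.fderiv]
    have hsum : ∑ j, b (x j) * e j = b (x i) := by
      simp [he, Pi.single_apply]
    simp [hΨ, sum_apply, hsum]
    ring
  have key := integral_mul_fderiv_eq_neg_fderiv_mul_of_integrable (μ := volume) (f := fun _ : E n => (1:ℝ))
    (g := g) (v := e) (by simp) (by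
      simp only [one_mul]
      exact iΨ.congr (Eventually.of_forall fun x => ((hg x).2).symm)) (by simpa using ig)
      (fun x _ => by fun_prop) (fun x _ => (hg x).1.differentiableAt)
  simp at key
  rw [← key]
  exact integral_congr_ae (Eventually.of_forall fun x => ((hg x).2).symm)

end
end SC

namespace SC

set_option maxSynthPendingDepth 3

section
variable {n : ℕ} {b v : ℝ → ℝ} {δ β : ℝ}

lemma jm_pair (l m : E n →L[ℝ] ℝ) :
    l (Jm n m) = ∑ i, l (EuclideanSpace.single i 1) * m (EuclideanSpace.single i 1) := by
  conv_lhs => rw [expand (Jm n m)]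
  rw [map_sum]
  refine Finset.sum_congr rfl fun i _ => ?_
  rw [map_smul, smul_eq_mul, mul_comm]
  congr 1
  rw [← Jm_inner]
  simp [EuclideanSpace.inner_single_right]

lemma lin_Bm (l : E n →L[ℝ] ℝ) (x : E n) :
    l (Bm b x) = ∑ i, b (x i) * l (EuclideanSpace.single i 1) := by
  conv_lhs => rw [expand (Bm b x)]
  rw [map_sum]
  exact Finset.sum_congr rfl fun i _ => by rw [map_smul, smul_eq_mul, Bm_apply]

/-- the generator -/
noncomputable def gen (b : ℝ → ℝ) (f : E n → ℝ) (x : E n) : ℝ :=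
  tr2 (fderiv ℝ (fderiv ℝ f) x) - fderiv ℝ f x (Bm b x)

lemma ibp_total (hb : Drift b δ β) (hv : Pot v b δ) {φ f : E n → ℝ} {L D : ℝ}
    (hφ : ContDiff ℝ 1 φ) (hφ0 : ∀ x, |φ x| ≤ 1) (hφ1 : ∀ x, ‖fderiv ℝ φ x‖ ≤ L)
    (hf : ContDiff ℝ 3 f) (hf1 : ∀ x, ‖fderiv ℝ f x‖ ≤ D)
    (hf2 : ∀ x, ‖fderiv ℝ (fderiv ℝ f) x‖ ≤ D) :
    Integrable (fun x => (fderiv ℝ φ x (Jm n (fderiv ℝ f x)) + φ x * gen b f x) * rho v x) ∧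
    ∫ x, (fderiv ℝ φ x (Jm n (fderiv ℝ f x)) + φ x * gen b f x) * rho v x = 0 := by
  have e : (fun x => (fderiv ℝ φ x (Jm n (fderiv ℝ f x)) + φ x * gen b f x) * rho v x) =
    fun x => ∑ i, (fderiv ℝ φ x (EuclideanSpace.single i 1) * fderiv ℝ f x (EuclideanSpace.single i 1)
      + φ x * fderiv ℝ (fderiv ℝ f) x (EuclideanSpace.single i 1) (EuclideanSpace.single i 1)
      - φ x * (b (x i) * fderiv ℝ f x (EuclideanSpace.single i 1))) * rho v x := by
    funext x
    rw [← Finset.sum_mul, Finset.sum_sub_distrib, Finset.sum_add_distrib, ← Finset.mul_sum,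
      ← Finset.mul_sum, jm_pair, gen, lin_Bm, tr2]
    ring
  have h := ibp hb hv hφ hφ0 hφ1 hf hf1 hf2
  rw [e]
  refine ⟨integrable_finsetSum _ fun i _ => (h i).1, ?_⟩
  rw [integral_finsetSum _ fun i _ => (h i).1]
  exact Finset.sum_eq_zero fun i _ => (h i).2

lemma noise_err (hb : Drift b δ β) {f : E n → ℝ} {D F : ℝ} (hF : ∀ x, ‖f x‖ ≤ F)
    (hf : ContDiff ℝ 3 f) (hf2 : ∀ x, ‖iteratedFDeriv ℝ 2 f x‖ ≤ D)
    (hf3 : ∀ x, ‖iteratedFDeriv ℝ 3 f x‖ ≤ D) {r : ℝ} (r0 : 0 ≤ r) (r1 : r ≤ 1) (x : E n) :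
    |Qs b (r ^ 2) f x - f x - r ^ 2 * gen b f x| ≤
      (3 * D * m3 n + D * β ^ 2 + n * D * β) * (r ^ 3 * (1 + ‖x‖) ^ 3) := by
  have hD : 0 ≤ D := (norm_nonneg _).trans (hf2 0)
  have hβ := hb.beta_pos
  have hs1 : ContDiff ℝ 2 (fderiv ℝ f) := hf.fderiv_right (by norm_num)
  have hs2 : ContDiff ℝ 1 (fderiv ℝ (fderiv ℝ f)) := hs1.fderiv_right (by norm_num)
  have hL1 : ∀ x y, ‖fderiv ℝ f x - fderiv ℝ f y‖ ≤ D * ‖x - y‖ := fun x y =>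
    Convex.norm_image_sub_le_of_norm_fderiv_le (s := Set.univ)
    (fun x _ => hs1.differentiable two_ne_zero x)
    (fun x _ => by rw [norm_fd2]; exact hf2 x) convex_univ trivial trivial
  have hL2 : ∀ x y, ‖fderiv ℝ (fderiv ℝ f) x - fderiv ℝ (fderiv ℝ f) y‖ ≤ D * ‖x - y‖ := fun x y =>
    Convex.norm_image_sub_le_of_norm_fderiv_le (s := Set.univ)
    (fun x _ => hs2.differentiable one_ne_zero x)
    (fun x _ => by rw [norm_fd3]; exact hf3 x) convex_univ trivial trivial
  set x' := Dm b (r ^ 2) x with hx'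
  have hB := Bm_norm_le hb x
  have W1 := W_one x
  have W2 := W_nrm x
  have Bp : ‖Bm b x‖ ^ 2 ≤ β ^ 2 * (1 + ‖x‖) ^ 3 := by
    have h1 := pow_le_pow_left₀ (norm_nonneg _) hB 2
    rw [mul_pow] at h1
    have h2 : ‖x‖ ^ 2 ≤ (1 + ‖x‖) ^ 3 := by
      nlinarith [norm_nonneg x, pow_nonneg (norm_nonneg x) 3, sq_nonneg ‖x‖]
    exact h1.trans (mul_le_mul_of_nonneg_left h2 (sq_nonneg β))
  have E1 : |Qs b (r ^ 2) f x - f x' - r ^ 2 * tr2 (fderiv ℝ (fderiv ℝ f) x')| ≤ D * (3 * r ^ 3) * m3 n := by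
    have s0 : (0:ℝ) ≤ √(2 * r ^ 2) := Real.sqrt_nonneg _
    have s2 : √(2 * r ^ 2) ^ 2 = 2 * r ^ 2 := Real.sq_sqrt (by positivity)
    have s3 : √(2 * r ^ 2) ^ 3 ≤ 3 * r ^ 3 := by
      have : √(2 * r ^ 2) ≤ 3 / 2 * r := Real.sqrt_le_iff.2 ⟨by positivity, by nlinarith [sq_nonneg r]⟩
      rw [pow_succ, s2]
      nlinarith [mul_le_mul_of_nonneg_left this (by positivity : 0 ≤ 2 * r ^ 2)]
    have := noise_taylor hf hF hf3 s0 x'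
    rw [s2] at this
    have e : (2 * r ^ 2 / 2 : ℝ) = r ^ 2 := by ring
    rw [e] at this
    refine this.trans ?_
    have := mul_le_mul_of_nonneg_right (mul_le_mul_of_nonneg_left s3 hD) (m3_nonneg (n := n))
    exact this
  have E2 : |f x' - f x + r ^ 2 * fderiv ℝ f x (Bm b x)| ≤ D * (r ^ 4 * ‖Bm b x‖ ^ 2) := by
    have := taylor1 (hf.differentiable three_ne_zero) hD hL1 x ((-(r ^ 2)) • Bm b x)
    rw [norm_smul, mul_pow, norm_neg, Real.norm_of_nonneg (sq_nonneg r), map_smul, smul_eq_mul, neg_mul,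
      sub_neg_eq_add, ← pow_mul] at this
    exact this
  have E3 : |tr2 (fderiv ℝ (fderiv ℝ f) x') - tr2 (fderiv ℝ (fderiv ℝ f) x)| ≤
      n * (D * (r ^ 2 * ‖Bm b x‖)) := by
    rw [tr2_sub]
    refine (tr2_le _).trans (mul_le_mul_of_nonneg_left ((hL2 _ _).trans ?_) (by positivity))
    have : x' - x = (-(r ^ 2)) • Bm b x := by rw [hx', Dm]; abel
    rw [this, norm_smul, norm_neg, Real.norm_of_nonneg (sq_nonneg r)]
  have e : Qs b (r ^ 2) f x - f x - r ^ 2 * gen b f x =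
      (Qs b (r ^ 2) f x - f x' - r ^ 2 * tr2 (fderiv ℝ (fderiv ℝ f) x')) +
      (f x' - f x + r ^ 2 * fderiv ℝ f x (Bm b x)) +
      r ^ 2 * (tr2 (fderiv ℝ (fderiv ℝ f) x') - tr2 (fderiv ℝ (fderiv ℝ f) x)) := by
    rw [gen]; ring
  rw [e]
  refine (abs_add_le _ _).trans ((add_le_add_left (abs_add_le _ _) _).trans ?_)
  rw [abs_mul (r ^ 2), abs_of_nonneg (sq_nonneg r)]
  have r43 : r ^ 4 ≤ r ^ 3 := pow_le_pow_of_le_one r0 r1 (by norm_num)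
  have r3 : 0 ≤ r ^ 3 := by positivity
  have F1 : D * (3 * r ^ 3) * m3 n ≤ 3 * D * m3 n * (r ^ 3 * (1 + ‖x‖) ^ 3) := by
    have := m3_nonneg (n := n)
    have q : 0 ≤ 3 * D * m3 n * r ^ 3 := by positivity
    nlinarith
  have F2 : D * (r ^ 4 * ‖Bm b x‖ ^ 2) ≤ D * β ^ 2 * (r ^ 3 * (1 + ‖x‖) ^ 3) := by
    have := mul_le_mul r43 Bp (by positivity) r3
    have := mul_le_mul_of_nonneg_left this hD
    linarith
  have F3 : r ^ 2 * (n * (D * (r ^ 2 * ‖Bm b x‖))) ≤ n * D * β * (r ^ 3 * (1 + ‖x‖) ^ 3) := by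
    have h1 : ‖Bm b x‖ ≤ β * (1 + ‖x‖) ^ 3 := hB.trans (mul_le_mul_of_nonneg_left W2 hβ.le)
    have := mul_le_mul r43 h1 (by positivity) r3
    have := mul_le_mul_of_nonneg_left this (by positivity : 0 ≤ n * D)
    linarith
  have E3' := mul_le_mul_of_nonneg_left E3 (sq_nonneg r)
  nlinarith

/-- constant of the one step error -/
noncomputable def c1 (n : ℕ) (β D : ℝ) : ℝ := 3 * D * m3 n + D * β ^ 2 + n * D * β

/-- constant of the one step error -/
noncomputable def c2 (n : ℕ) (β D K F L M : ℝ) : ℝ :=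
  M * K ^ 2 * F + L * K * ((n + β) * D + c1 n β D) + c1 n β D

lemma step_pt (hb : Drift b δ β) {A F G L M : ℝ} (hA : 1 ≤ A) (hM : 0 ≤ M) {f φ : E n → ℝ}
    (hf : Rc A F G f) (hφ : Test L M φ) {r : ℝ} (r0 : 0 ≤ r) (r1 : r ≤ 1) (x : E n) :
    |φ (Tr (r ^ 2) f x) * Qs b (r ^ 2) f x - φ x * f x -
      r ^ 2 * (fderiv ℝ φ x (Jm n (fderiv ℝ f x)) + φ x * gen b f x)| ≤
      c2 n β (A * F) (clog * A ^ 3) F L M * (r ^ 3 * (1 + ‖x‖) ^ 3) := by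
  set D := A * F with hDdef
  set K := clog * A ^ 3 with hKdef
  have hβ := hb.beta_pos
  have hF0 : 0 ≤ F := (hf.pos 0).le.trans (hf.le 0)
  have hK0 : 0 ≤ K := mul_nonneg clog_nonneg (by positivity)
  have hL0 : 0 ≤ L := (norm_nonneg _).trans (hφ.d1 0)
  have hfF : ∀ x, ‖f x‖ ≤ F := fun x => by
    rw [Real.norm_eq_abs, abs_of_pos (hf.pos x)]; exact hf.le x
  have hD : ∀ i, 1 ≤ i → i ≤ 3 → ∀ x, ‖iteratedFDeriv ℝ i f x‖ ≤ D := fun i h1 h3 x =>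
    (hf.rb i h1 h3 x).trans (mul_le_mul_of_nonneg_left (hf.le x) (by linarith))
  have hD0 : 0 ≤ D := by positivity
  have c1n : 0 ≤ c1 n β D := by
    have := m3_nonneg (n := n)
    unfold c1; positivity
  have N := noise_err hb hfF hf.smooth (hD 2 (by norm_num) (by norm_num))
    (hD 3 (by norm_num) (by norm_num)) r0 r1 x
  change _ ≤ c1 n β D * _ at N
  have W1 := W_one x
  have W2 := W_lin x
  -- bound on the generator
  have hgen : |gen b f x| ≤ (n + β) * D * (1 + ‖x‖) ^ 3 := by
    have a1 := (tr2_le (fderiv ℝ (fderiv ℝ f) x)).trans (mul_le_mul_of_nonneg_left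
      ((norm_fd2 f x).le.trans (hD 2 (by norm_num) (by norm_num) x)) (by positivity))
    have a2 : |fderiv ℝ f x (Bm b x)| ≤ D * (β * ‖x‖) := by
      refine ((fderiv ℝ f x).le_opNorm _).trans ?_
      refine mul_le_mul ?_ (Bm_norm_le hb x) (norm_nonneg _) hD0
      rw [← norm_iteratedFDeriv_one]; exact hD 1 (by norm_num) (by norm_num) x
    have a3 := abs_sub (tr2 (fderiv ℝ (fderiv ℝ f) x)) (fderiv ℝ f x (Bm b x))
    have a4 := mul_le_mul_of_nonneg_left W1 (by positivity : 0 ≤ n * D)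
    have a5 := mul_le_mul_of_nonneg_left (W_nrm x) (by positivity : 0 ≤ D * β)
    rw [gen]
    linarith
  have hQ : |Qs b (r ^ 2) f x - f x| ≤ ((n + β) * D + c1 n β D) * (r ^ 2 * (1 + ‖x‖) ^ 3) := by
    have e : Qs b (r ^ 2) f x - f x = (Qs b (r ^ 2) f x - f x - r ^ 2 * gen b f x) + r ^ 2 * gen b f x := by
      ring
    rw [e]
    refine (abs_add_le _ _).trans ?_
    rw [abs_mul (r ^ 2), abs_of_nonneg (sq_nonneg r)]
    have r32 : r ^ 3 ≤ r ^ 2 := pow_le_pow_of_le_one r0 r1 (by norm_num)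
    have a1 := mul_le_mul_of_nonneg_left hgen (sq_nonneg r)
    have a2 := mul_le_mul_of_nonneg_left
      (mul_le_mul_of_nonneg_right r32 (by positivity : 0 ≤ (1 + ‖x‖) ^ 3)) c1n
    linarith
  -- transport
  set u' := fderiv ℝ (lg f) x with hu'
  have hu : ‖Jm n u'‖ ≤ K := by
    refine ((Jm n).le_opNorm _).trans ?_
    refine (mul_le_mul Jm_norm ?_ (norm_nonneg _) zero_le_one).trans (one_mul K).le
    rw [← norm_iteratedFDeriv_one]; exact hf.lg_bd hA le_rfl (by norm_num) x
  have hT1 := taylor1 (hφ.smooth.differentiable one_ne_zero) hM hφ.d2 x (r ^ 2 • Jm n u')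
  rw [norm_smul, Real.norm_of_nonneg (sq_nonneg r), map_smul, smul_eq_mul, Real.norm_eq_abs] at hT1
  have eT : Tr (r ^ 2) f x = x + r ^ 2 • Jm n u' := rfl
  rw [← eT] at hT1
  have hT1' : |φ (Tr (r ^ 2) f x) - φ x - r ^ 2 * fderiv ℝ φ x (Jm n u')| ≤ M * K ^ 2 * r ^ 3 := by
    refine hT1.trans ?_
    have r43 : r ^ 4 ≤ r ^ 3 := pow_le_pow_of_le_one r0 r1 (by norm_num)
    have a1 := pow_le_pow_left₀ (norm_nonneg _) hu 2
    have a2 := mul_le_mul r43 a1 (by positivity) (by positivity)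
    have a3 := mul_le_mul_of_nonneg_left a2 hM
    rw [mul_pow, ← pow_mul]
    norm_num
    linarith
  have hT2 : |φ (Tr (r ^ 2) f x) - φ x| ≤ L * K * r ^ 2 := by
    have := Convex.norm_image_sub_le_of_norm_fderiv_le (f := φ) (s := Set.univ) (x := x)
      (y := Tr (r ^ 2) f x) (fun x _ => hφ.smooth.differentiable one_ne_zero x)
      (fun x _ => hφ.d1 x) convex_univ trivial trivial
    rw [eT, add_sub_cancel_left, norm_smul, Real.norm_of_nonneg (sq_nonneg r), ← eT] at this
    refine this.trans ?_
    have := mul_le_mul_of_nonneg_left hu (mul_nonneg hL0 (sq_nonneg r))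
    linarith
  have hfu : fderiv ℝ f x = f x • u' := by
    have h1 := ((hf.smooth.differentiable three_ne_zero x).hasFDerivAt).log (hf.pos x).ne'
    have h2 : u' = (f x)⁻¹ • fderiv ℝ f x := h1.fderiv
    rw [h2, smul_smul, mul_inv_cancel₀ (hf.pos x).ne', one_smul]
  have e : φ (Tr (r ^ 2) f x) * Qs b (r ^ 2) f x - φ x * f x -
      r ^ 2 * (fderiv ℝ φ x (Jm n (fderiv ℝ f x)) + φ x * gen b f x) =
      (φ (Tr (r ^ 2) f x) - φ x - r ^ 2 * fderiv ℝ φ x (Jm n u')) * f x +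
      (φ (Tr (r ^ 2) f x) - φ x) * (Qs b (r ^ 2) f x - f x) +
      φ x * (Qs b (r ^ 2) f x - f x - r ^ 2 * gen b f x) := by
    rw [hfu, map_smul, map_smul, smul_eq_mul]; ring
  rw [e]
  refine (abs_add_le _ _).trans ((add_le_add_left (abs_add_le _ _) _).trans ?_)
  rw [abs_mul, abs_mul, abs_mul]
  have p1 := mul_le_mul hT1' (hfF x) (norm_nonneg _) (by positivity)
  rw [Real.norm_eq_abs] at p1
  have p2 := mul_le_mul hT2 hQ (abs_nonneg _) (by positivity)
  have p3 := mul_le_mul (hφ.bd x) N (abs_nonneg _) zero_le_one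
  have r43 : r ^ 4 ≤ r ^ 3 := pow_le_pow_of_le_one r0 r1 (by norm_num)
  have q1 : M * K ^ 2 * r ^ 3 * F ≤ M * K ^ 2 * F * (r ^ 3 * (1 + ‖x‖) ^ 3) := by
    have := mul_le_mul_of_nonneg_left W1 (by positivity : 0 ≤ M * K ^ 2 * F * r ^ 3)
    linarith
  have q2 : L * K * r ^ 2 * (((n + β) * D + c1 n β D) * (r ^ 2 * (1 + ‖x‖) ^ 3)) ≤
      L * K * ((n + β) * D + c1 n β D) * (r ^ 3 * (1 + ‖x‖) ^ 3) := by
    have := mul_le_mul_of_nonneg_left r43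
      (by positivity : 0 ≤ L * K * ((n + β) * D + c1 n β D) * (1 + ‖x‖) ^ 3)
    linarith
  rw [c2]
  linarith

lemma c2_nonneg {A F G L M : ℝ} (hβ : 0 < β) (hA : 1 ≤ A) (hM : 0 ≤ M) {f φ : E n → ℝ}
    (hf : Rc A F G f) (hφ : Test L M φ) : 0 ≤ c2 n β (A * F) (clog * A ^ 3) F L M := by
  have hF0 : 0 ≤ F := (hf.pos 0).le.trans (hf.le 0)
  have hK0 : 0 ≤ clog := clog_nonneg
  have hL0 : 0 ≤ L := (norm_nonneg _).trans (hφ.d1 0)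
  have := m3_nonneg (n := n)
  unfold c2 c1
  positivity

lemma step_int (hb : Drift b δ β) (hv : Pot v b δ) {A F G L M : ℝ} (hA : 1 ≤ A) (hM : 0 ≤ M)
    {f φ : E n → ℝ} (hf : Rc A F G f) (hφ : Test L M φ) {r : ℝ} (r0 : 0 ≤ r) (r1 : r ≤ 1)
    (hβ : r ^ 2 * β ≤ 1) (hr : r ^ 2 * (clog * A ^ 3) ≤ 1) :
    |(∫ x, φ (Tr (r ^ 2) f x) * Qs b (r ^ 2) f x * rho v x) - ∫ x, φ x * f x * rho v x| ≤
      c2 n β (A * F) (clog * A ^ 3) F L M * (∫ x : E n, (1 + ‖x‖) ^ 3 * rho v x) * r ^ 3 := by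
  have hF0 : 0 ≤ F := (hf.pos 0).le.trans (hf.le 0)
  have bdd : ∀ {φ f : E n → ℝ} {A G L M : ℝ}, Rc A F G f → Test L M φ →
      Integrable fun x => φ x * f x * rho v x := by
    intro φ f A G L M hf hφ
    refine int_of_le hb.dpos hv (C := F) (hφ.smooth.continuous.mul hf.smooth.continuous) fun x => ?_
    rw [abs_mul, abs_of_pos (hf.pos x)]
    have := mul_le_mul (hφ.bd x) (hf.le x) (hf.pos x).le zero_le_one
    nlinarith [W_one x]
  have i1 := bdd (Rc_step hb (sq_nonneg r) hβ (by linarith) hf) (hφ.comp hf hA (sq_nonneg r) hr hM)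
  have i2 := bdd hf hφ
  have hD : ∀ i, 1 ≤ i → i ≤ 3 → ∀ x, ‖iteratedFDeriv ℝ i f x‖ ≤ A * F := fun i h1 h3 x =>
    (hf.rb i h1 h3 x).trans (mul_le_mul_of_nonneg_left (hf.le x) (by linarith))
  obtain ⟨i3, z3⟩ := ibp_total hb hv hφ.smooth hφ.bd hφ.d1 hf.smooth (D := A * F)
    (fun x => by rw [← norm_iteratedFDeriv_one]; exact hD 1 (by norm_num) (by norm_num) x)
    (fun x => by rw [norm_fd2]; exact hD 2 (by norm_num) (by norm_num) x)
  have e : (∫ x, φ (Tr (r ^ 2) f x) * Qs b (r ^ 2) f x * rho v x) - (∫ x, φ x * f x * rho v x) =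
      ∫ x, (φ (Tr (r ^ 2) f x) * Qs b (r ^ 2) f x - φ x * f x -
      r ^ 2 * (fderiv ℝ φ x (Jm n (fderiv ℝ f x)) + φ x * gen b f x)) * rho v x := by
    have : ∀ x, (φ (Tr (r ^ 2) f x) * Qs b (r ^ 2) f x - φ x * f x -
      r ^ 2 * (fderiv ℝ φ x (Jm n (fderiv ℝ f x)) + φ x * gen b f x)) * rho v x =
      φ (Tr (r ^ 2) f x) * Qs b (r ^ 2) f x * rho v x - φ x * f x * rho v x -
      r ^ 2 * ((fderiv ℝ φ x (Jm n (fderiv ℝ f x)) + φ x * gen b f x) * rho v x) := fun x => by ring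
    simp_rw [this]
    have i12 : Integrable fun x => φ (Tr (r ^ 2) f x) * Qs b (r ^ 2) f x * rho v x -
      φ x * f x * rho v x := i1.sub i2
    rw [integral_sub i12 (i3.const_mul _), integral_sub i1 i2, integral_const_mul, z3, mul_zero, sub_zero]
  rw [e, ← Real.norm_eq_abs, mul_right_comm, ← integral_const_mul]
  refine norm_integral_le_of_norm_le ((int_weight hb.dpos hv).const_mul _)
    (Eventually.of_forall fun x => ?_)
  rw [norm_mul, Real.norm_of_nonneg (rho_pos x).le, Real.norm_eq_abs]
  refine (mul_le_mul_of_nonneg_right (step_pt hb hA hM hf hφ r0 r1 x) (rho_pos x).le).trans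
    (le_of_eq ?_)
  ring

end
end SC

namespace SC
set_option maxSynthPendingDepth 3
section
variable {n : ℕ} {b v : ℝ → ℝ} {δ β : ℝ}

lemma Rc.mono {A A' F G : ℝ} {f : E n → ℝ} (h : Rc A F G f) (hA : A ≤ A') : Rc A' F G f :=
  ⟨h.smooth, h.pos, h.le, fun i h1 h3 x => (h.rb i h1 h3 x).trans
    (mul_le_mul_of_nonneg_right hA (h.pos x).le), h.grad, h.uc, h.lc⟩

lemma Test.mono {L M L' M' : ℝ} {φ : E n → ℝ} (h : Test L M φ) (hL : L ≤ L') (hM : M ≤ M') :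
    Test L' M' φ :=
  ⟨h.smooth, h.bd, fun x => (h.d1 x).trans hL, fun x y => (h.d2 x y).trans
    (mul_le_mul_of_nonneg_right hM (norm_nonneg _))⟩

lemma Test.one {L M : ℝ} (hL : 0 ≤ L) (hM : 0 ≤ M) : Test L M (fun _ : E n => (1:ℝ)) :=
  ⟨contDiff_const, fun x => by simp, fun x => by simpa using hL, fun x y => by
    simpa using mul_nonneg hM (norm_nonneg _)⟩

lemma iter (hb : Drift b δ β) (hv : Pot v b δ) {r : ℝ} (r0 : 0 ≤ r) (r1 : r ≤ 1)
    (hβ : r ^ 2 * β ≤ 1) {Ab F L Mb : ℝ} (hr : r ^ 2 * (clog * Ab ^ 3) ≤ 1) (hAb : 1 ≤ Ab)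
    (m : ℕ) : ∀ (A G : ℝ) (f : E n → ℝ), 1 ≤ A → Rc A F G f →
      A * (1 + 4 * (r ^ 2 * (n * β))) ^ m ≤ Ab →
      ∃ (T : E n → E n) (g : E n → ℝ), LipschitzWith 1 T ∧ T 0 = 0 ∧
        Rc Ab F (G * (1 - r ^ 2 * δ) ^ m) g ∧ ∀ (M : ℝ) (φ : E n → ℝ), 0 ≤ M →
          M + m * (r ^ 2 * (clog * Ab ^ 3) * L) ≤ Mb → Test L M φ →
          |(∫ x, φ (T x) * g x * rho v x) - ∫ x, φ x * f x * rho v x| ≤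
            m * (c2 n β (Ab * F) (clog * Ab ^ 3) F L Mb *
              (∫ x : E n, (1 + ‖x‖) ^ 3 * rho v x) * r ^ 3) := by
  have hβ0 := hb.beta_pos
  induction m with
  | zero =>
    intro A G f hA hf hle
    refine ⟨id, f, LipschitzWith.id, rfl, ?_, fun M φ _ _ _ => by simp⟩
    simpa using hf.mono (by simpa using hle)
  | succ m ih =>
    intro A G f hA hf hle
    have hq : 1 ≤ 1 + 4 * (r ^ 2 * (n * β)) := by
      have : 0 ≤ r ^ 2 * (n * β) := by positivity
      linarith
    have hA1 : 1 ≤ A * (1 + 4 * (r ^ 2 * (n * β))) := by nlinarith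
    have hle' : A * (1 + 4 * (r ^ 2 * (n * β))) * (1 + 4 * (r ^ 2 * (n * β))) ^ m ≤ Ab := by
      rw [mul_assoc, ← pow_succ']; exact hle
    have hAAb : A ≤ Ab := by
      refine le_trans ?_ hle
      exact le_mul_of_one_le_right (by linarith) (one_le_pow₀ hq)
    have hf' := hf.mono hAAb
    obtain ⟨T, g, hT, hT0, hg, hi⟩ := ih _ _ _ hA1
      (Rc_step hb (sq_nonneg r) hβ (by linarith) hf) hle'
    refine ⟨Tr (r ^ 2) f ∘ T, g, ?_, ?_, ?_, fun M φ hM hMb hφ => ?_⟩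
    · simpa using (Tr_lip hf' hAb (sq_nonneg r) hr).comp hT
    · simp [hT0, Tr_zero hf]
    · convert! hg using 1
      ring
    · have hL : 0 ≤ L := (norm_nonneg _).trans (hφ.d1 0)
      have hK0 : 0 ≤ clog := clog_nonneg
      have hz : 0 ≤ r ^ 2 * (clog * Ab ^ 3) * L := by positivity
      have hMMb : M ≤ Mb := by
        refine le_trans ?_ hMb
        have : (0:ℝ) ≤ (m + 1 : ℕ) * (r ^ 2 * (clog * Ab ^ 3) * L) := by positivity
        linarith
      have hφ' := hφ.mono le_rfl hMMb
      have s1 := step_int hb hv hAb (hM.trans hMMb) hf' hφ' r0 r1 hβ hr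
      have s2 := hi _ _ (by positivity) (by push_cast at hMb; linarith)
        (hφ.comp hf' hAb (sq_nonneg r) hr hM)
      have := abs_add_le ((∫ x, φ (Tr (r ^ 2) f (T x)) * g x * rho v x) -
        ∫ x, φ (Tr (r ^ 2) f x) * Qs b (r ^ 2) f x * rho v x)
        ((∫ x, φ (Tr (r ^ 2) f x) * Qs b (r ^ 2) f x * rho v x) - ∫ x, φ x * f x * rho v x)
      rw [sub_add_sub_cancel] at this
      refine this.trans ?_
      push_cast
      linarith

lemma int_rho (hδ : 0 < δ) (hv : Pot v b δ) : Integrable fun x : E n => rho v x := by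
  have := int_of_le (n := n) (C := 1) hδ hv (g := fun _ => 1) continuous_const
    fun x => by simpa using W_one x
  simpa using this

lemma int_bdd (hδ : 0 < δ) (hv : Pot v b δ) {g : E n → ℝ} (hg : Continuous g) {C : ℝ}
    (h : ∀ x, |g x| ≤ C) : Integrable fun x => g x * rho v x := by
  refine int_of_le hδ hv hg (C := C) fun x => (h x).trans ?_
  exact le_mul_of_one_le_right ((abs_nonneg _).trans (h 0)) (W_one x)

lemma int_nrm (hδ : 0 < δ) (hv : Pot v b δ) : Integrable fun x : E n => ‖x‖ * rho v x := by
  refine int_of_le hδ hv continuous_norm (C := 1) fun x => ?_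
  rw [abs_of_nonneg (norm_nonneg _), one_mul]
  have : 0 ≤ ‖x‖ := norm_nonneg x
  nlinarith [pow_nonneg this 3, pow_nonneg this 2]

lemma int_pos_rho (hδ : 0 < δ) (hv : Pot v b δ) {g : E n → ℝ} (hg : Continuous g)
    (hp : ∀ x, 0 < g x) {C : ℝ} (h : ∀ x, g x ≤ C) : 0 < ∫ x, g x * rho v x := by
  have hi := int_bdd hδ hv hg (C := C) fun x => by rw [abs_of_pos (hp x)]; exact h x
  rw [integral_pos_iff_support_of_nonneg (fun x => (mul_pos (hp x) (rho_pos x)).le) hi]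
  have : (Function.support fun x => g x * rho v x) = Set.univ := by
    ext x; simp [(hp x).ne', (rho_pos (v := v) x).ne']
  rw [this]
  exact isOpen_univ.measure_pos _ Set.univ_nonempty

/-- closing estimate -/
lemma close_est (hδ : 0 < δ) (hv : Pot v b δ) {A Ab F G G' e L M : ℝ} (hL : 0 ≤ L) (hM : 0 ≤ M)
    {f g : E n → ℝ} (hf : Rc A F G f) (hg : Rc Ab F G' g) {T : E n → E n} (hT : LipschitzWith 1 T)
    (h : ∀ φ : E n → ℝ, Test L M φ →
      |(∫ x, φ (T x) * g x * rho v x) - ∫ x, φ x * f x * rho v x| ≤ e)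
    {φ : E n → ℝ} (hφ : Test L M φ) :
    |(∫ x, φ (T x) * rho v x) / (∫ x : E n, rho v x) -
      (∫ x, φ x * (f x * rho v x)) / (∫ x, f x * rho v x)| ≤
      2 * (e + G' * ∫ x : E n, ‖x‖ * rho v x) / (∫ x, f x * rho v x) := by
  set a := ∫ x, f x * rho v x with ha
  set R := ∫ x : E n, rho v x with hR
  have a0 : 0 < a := int_pos_rho hδ hv hf.smooth.continuous hf.pos hf.le
  have R0 : 0 < R := by
    have := int_pos_rho (n := n) hδ hv (g := fun _ => 1) continuous_const (fun _ => one_pos)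
      (fun _ => le_rfl)
    simpa [hR] using this
  have gl : ∀ x, |g x - g 0| ≤ G' * ‖x‖ := fun x => by
    have := Convex.norm_image_sub_le_of_norm_fderiv_le (s := Set.univ) (f := g) (C := G') (𝕜 := ℝ)
      (x := 0) (y := x) (fun x _ => hg.smooth.differentiable three_ne_zero x)
      (fun x _ => hg.grad x) convex_univ trivial trivial
    simpa using this
  have cl : ∀ φ : E n → ℝ, Test L M φ → |(∫ x, φ (T x) * g x * rho v x) -
      g 0 * ∫ x, φ (T x) * rho v x| ≤ G' * ∫ x : E n, ‖x‖ * rho v x := by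
    intro φ hφ
    have hc : Continuous fun x => φ (T x) := hφ.smooth.continuous.comp hT.continuous
    have j1 : Integrable fun x => φ (T x) * g x * rho v x :=
      int_bdd hδ hv (hc.mul hg.smooth.continuous) (C := F) fun x => by
        rw [abs_mul, abs_of_pos (hg.pos x)]
        have := mul_le_mul (hφ.bd (T x)) (hg.le x) (hg.pos x).le zero_le_one
        linarith
    have j2 : Integrable fun x => φ (T x) * rho v x := int_bdd hδ hv hc fun x => hφ.bd _
    rw [← integral_const_mul, ← integral_sub j1 (j2.const_mul _), ← Real.norm_eq_abs,
      ← integral_const_mul]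
    refine norm_integral_le_of_norm_le ((int_nrm hδ hv).const_mul _) (Eventually.of_forall fun x => ?_)
    have : φ (T x) * g x * rho v x - g 0 * (φ (T x) * rho v x) =
      φ (T x) * (g x - g 0) * rho v x := by ring
    rw [this, norm_mul, norm_mul, Real.norm_eq_abs, Real.norm_eq_abs, Real.norm_of_nonneg (rho_pos x).le,
      ← mul_assoc]
    refine mul_le_mul_of_nonneg_right ?_ (rho_pos x).le
    have := mul_le_mul (hφ.bd (T x)) (gl x) (abs_nonneg _) zero_le_one
    linarith
  have c1 := cl _ (Test.one hL hM)
  have c2 := cl _ hφ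
  have d1 := h _ (Test.one hL hM)
  have d2 := h _ hφ
  simp only [one_mul] at c1 d1
  rw [← ha] at d1
  rw [← hR] at c1
  set P := ∫ x, φ (T x) * rho v x with hP
  have hP1 : |P| ≤ R := by
    rw [hP, ← Real.norm_eq_abs]
    refine norm_integral_le_of_norm_le (int_rho hδ hv) (Eventually.of_forall fun x => ?_)
    rw [norm_mul, Real.norm_eq_abs, Real.norm_of_nonneg (rho_pos x).le]
    exact (mul_le_mul_of_nonneg_right (hφ.bd _) (rho_pos x).le).trans (by rw [one_mul])
  simp only [mul_assoc] at d2 c2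
  set X := ∫ x, φ x * (f x * rho v x) with hX
  set Y := ∫ x, φ (T x) * (g x * rho v x)
  set N := ∫ x : E n, ‖x‖ * rho v x
  have e1 : |a - g 0 * R| ≤ e + G' * N := by
    rw [abs_le] at *; constructor <;> linarith
  have e2 : |g 0 * P - X| ≤ e + G' * N := by
    rw [abs_le] at *; constructor <;> linarith
  have hq : |P / R| ≤ 1 := by
    rw [abs_div, abs_of_pos R0]; exact (div_le_one R0).2 hP1
  have e3 : P / R - X / a = ((a - g 0 * R) * (P / R) + (g 0 * P - X)) / a := by
    field_simp; ring
  rw [e3, abs_div, abs_of_pos a0]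
  refine div_le_div_of_nonneg_right ?_ a0.le
  refine (abs_add_le _ _).trans ?_
  rw [abs_mul]
  have := mul_le_mul e1 hq (abs_nonneg _) ((abs_nonneg _).trans e1)
  linarith

theorem approx_tr (hb : Drift b δ β) (hv : Pot v b δ) {A F G : ℝ} (hA : 1 ≤ A) {f : E n → ℝ}
    (hf : Rc A F G f) {ε L M : ℝ} (hε : 0 < ε) (hL : 0 ≤ L) (hM : 0 ≤ M) :
    ∃ T : E n → E n, LipschitzWith 1 T ∧ T 0 = 0 ∧ ∀ φ : E n → ℝ, Test L M φ →
      |(∫ x, φ (T x) * rho v x) / (∫ x : E n, rho v x) -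
      (∫ x, φ x * (f x * rho v x)) / (∫ x, f x * rho v x)| ≤ ε := by
  have hδ := hb.dpos
  have hβ0 := hb.beta_pos
  set a := ∫ x, f x * rho v x with ha
  have a0 : 0 < a := int_pos_rho hδ hv hf.smooth.continuous hf.pos hf.le
  set R1 := ∫ x : E n, ‖x‖ * rho v x with hR1
  have R10 : 0 ≤ R1 := integral_nonneg fun x => mul_nonneg (norm_nonneg _) (rho_pos x).le
  have G0 : 0 ≤ G := (norm_nonneg _).trans (hf.grad 0)
  obtain ⟨t, ht0, ht⟩ : ∃ t : ℝ, 0 < t ∧ G * Real.exp (-(δ * t)) * R1 ≤ ε * a / 4 := by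
    have h1 : Tendsto (fun t : ℝ => G * Real.exp (-(δ * t)) * R1) atTop (𝓝 (G * 0 * R1)) := by
      refine ((Real.tendsto_exp_atBot.comp ?_).const_mul G).mul_const R1
      exact tendsto_neg_atTop_atBot.comp (tendsto_id.const_mul_atTop hδ)
    rw [mul_zero, zero_mul] at h1
    have h2 := h1.eventually (ge_mem_nhds (show (0:ℝ) < ε * a / 4 by positivity))
    obtain ⟨t, h3, h4⟩ := (h2.and (eventually_gt_atTop 0)).exists
    exact ⟨t, h4, h3⟩
  set Ab := A * Real.exp (4 * t * (n * β)) with hAbd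
  have hAb : 1 ≤ Ab := by
    have : 1 ≤ Real.exp (4 * t * (n * β)) := Real.one_le_exp (by positivity)
    rw [hAbd]; nlinarith
  set Mb := M + t * (clog * Ab ^ 3) * L with hMb
  set C := c2 n β (Ab * F) (clog * Ab ^ 3) F L Mb * (∫ x : E n, (1 + ‖x‖) ^ 3 * rho v x) with hC
  have hlim : Tendsto (fun N : ℕ => √(t / N)) atTop (𝓝 0) := by
    have : Tendsto (fun N : ℕ => t / (N:ℝ)) atTop (𝓝 0) := tendsto_const_div_atTop_nhds_zero_nat t
    simpa using this.sqrt
  have l1 : ∀ᶠ N : ℕ in atTop, √(t / N) ≤ 1 := hlim.eventually (ge_mem_nhds one_pos)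
  have l2 : ∀ (c : ℝ), ∀ᶠ N : ℕ in atTop, √(t / N) ^ 2 * c ≤ 1 := fun c => by
    have := (hlim.pow 2).mul_const c
    simp only [ne_eq, OfNat.ofNat_ne_zero, not_false_eq_true, zero_pow, zero_mul] at this
    exact this.eventually (ge_mem_nhds one_pos)
  have l3 : ∀ᶠ N : ℕ in atTop, t * C * √(t / N) ≤ ε * a / 4 := by
    have := hlim.const_mul (t * C)
    rw [mul_zero] at this
    exact this.eventually (ge_mem_nhds (by positivity))
  obtain ⟨N, k1, k2, k3, k4, k5, k6⟩ := (l1.and ((l2 β).and ((l2 (clog * Ab ^ 3)).and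
    (l3.and ((l2 δ).and (eventually_gt_atTop 0)))))).exists
  set r := √(t / N) with hr
  have r0 : 0 ≤ r := Real.sqrt_nonneg _
  have hN : (0:ℝ) < N := by exact_mod_cast k6
  have r2 : r ^ 2 = t / N := Real.sq_sqrt (by positivity)
  have Nr2 : N * r ^ 2 = t := by rw [r2]; field_simp
  have hA1 : A * (1 + 4 * (r ^ 2 * (n * β))) ^ N ≤ Ab := by
    refine mul_le_mul_of_nonneg_left ?_ (by linarith)
    have : 1 + 4 * (r ^ 2 * (n * β)) ≤ Real.exp (4 * (r ^ 2 * (n * β))) := by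
      linarith [Real.add_one_le_exp (4 * (r ^ 2 * (n * β)))]
    refine (pow_le_pow_left₀ (by positivity) this N).trans (le_of_eq ?_)
    rw [← Real.exp_nat_mul, ← Nr2]
    congr 1; ring
  obtain ⟨T, g, hT, hT0, hg, hi⟩ := iter hb hv r0 k1 k2 (L := L) (Mb := Mb) k3 hAb N A G f hA hf hA1
  refine ⟨T, hT, hT0, fun φ hφ => ?_⟩
  refine (close_est hδ hv hL hM hf hg hT (fun φ hφ => hi M φ hM ?_ hφ) hφ).trans ?_
  · rw [hMb, ← Nr2]; apply le_of_eq; ring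
  · rw [← hC, ← hR1, ← ha, div_le_iff₀ a0]
    have e1 : N * (C * r ^ 3) = t * C * r := by rw [← Nr2]; ring
    have e2 : G * (1 - r ^ 2 * δ) ^ N ≤ G * Real.exp (-(δ * t)) := by
      refine mul_le_mul_of_nonneg_left ?_ G0
      have : 1 - r ^ 2 * δ ≤ Real.exp (-(r ^ 2 * δ)) := by
        linarith [Real.add_one_le_exp (-(r ^ 2 * δ))]
      refine (pow_le_pow_left₀ (by linarith) this N).trans (le_of_eq ?_)
      rw [← Real.exp_nat_mul, ← Nr2]
      congr 1; ring
    have e3 := mul_le_mul_of_nonneg_right e2 R10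
    rw [e1]
    linarith

end
end SC

namespace SC
set_option maxSynthPendingDepth 3
section
variable {n : ℕ}

lemma lip_subseq (T : ℕ → E n → E n) (hT : ∀ m, LipschitzWith 1 (T m)) (h0 : ∀ m, T m 0 = 0) :
    ∃ (S : E n → E n) (ψ : ℕ → ℕ), StrictMono ψ ∧ LipschitzWith 1 S ∧
      ∀ x, Tendsto (fun m => T (ψ m) x) atTop (𝓝 (S x)) := by
  let K : Set C(E n, E n) := {f | LipschitzWith 1 f ∧ f 0 = 0}
  have hK : IsCompact K := by
    refine ArzelaAscoli.isCompact_of_equicontinuous K ?_ ?_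
    · have e : ContinuousMap.toFun '' K = {f : E n → E n | LipschitzWith 1 f ∧ f 0 = 0} := by
        ext f
        constructor
        · rintro ⟨g, hg, rfl⟩; exact hg
        · intro hf; exact ⟨⟨f, hf.1.continuous⟩, hf, rfl⟩
      rw [e]
      refine (isCompact_univ_pi (s := fun x : E n => Metric.closedBall (0 : E n) ‖x‖)
        fun x => isCompact_closedBall _ _).of_isClosed_subset ?_ ?_
      · have c1 : IsClosed {f : E n → E n | LipschitzWith 1 f} := isClosed_setOfPred_lipschitzWith 1
        have c2 : IsClosed {f : E n → E n | f 0 = 0} :=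
          isClosed_eq (continuous_apply 0) continuous_const
        exact c1.inter c2
      · rintro f ⟨h1, h2⟩ x -
        have := h1.dist_le_mul x 0
        simpa [h2] using this
    · refine LipschitzWith.uniformEquicontinuous (K := 1) _ (fun f => f.2.1) |>.equicontinuous
  obtain ⟨S, hS, ψ, hψ, hl⟩ := hK.tendsto_subseq (x := fun m => (⟨T m, (hT m).continuous⟩ : C(E n, E n)))
    fun m => ⟨hT m, h0 m⟩
  refine ⟨S, ψ, hψ, hS.1, fun x => ?_⟩
  exact ((ContinuousEvalConst.continuous_eval_const (F := C(E n, E n)) x).tendsto S).comp hl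

theorem limit_tr {r s : ℕ → E n → ℝ} {r' s' D : E n → ℝ} (hD : Integrable D)
    (hrm : ∀ m, Continuous (r m)) (hsm : ∀ m, Continuous (s m))
    (hr : ∀ m x, |r m x| ≤ D x) (hs : ∀ m x, |s m x| ≤ D x)
    (hr' : ∀ x, Tendsto (fun m => r m x) atTop (𝓝 (r' x)))
    (hs' : ∀ x, Tendsto (fun m => s m x) atTop (𝓝 (s' x)))
    (hr0 : ∫ x, r' x ≠ 0) (hs0 : ∫ x, s' x ≠ 0)
    (h : ∀ (m : ℕ) (ε L M : ℝ), 0 < ε → 0 ≤ L → 0 ≤ M → ∃ T : E n → E n, LipschitzWith 1 T ∧ T 0 = 0 ∧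
      ∀ φ : E n → ℝ, Test L M φ → |(∫ x, φ (T x) * r m x) / (∫ x, r m x) -
        (∫ x, φ x * s m x) / (∫ x, s m x)| ≤ ε) :
    ∃ T : E n → E n, LipschitzWith 1 T ∧ ∀ (L M : ℝ) (φ : E n → ℝ), Test L M φ →
      (∫ x, φ (T x) * r' x) / (∫ x, r' x) = (∫ x, φ x * s' x) / (∫ x, s' x) := by
  choose T hT h0 hc using fun m : ℕ => h m (1 / ((m:ℝ) + 1)) m m (by positivity) (by positivity)
    (by positivity)
  obtain ⟨S, ψ, hψ, hS, hl⟩ := lip_subseq T hT h0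
  refine ⟨S, hS, fun L M φ hφ => ?_⟩
  have hψt := hψ.tendsto_atTop
  have key : ∀ (u : ℕ → E n → ℝ) (u' : E n → ℝ) (w : ℕ → E n → ℝ) (w' : E n → ℝ),
      (∀ m, Continuous (u m)) → (∀ m x, |u m x| ≤ D x) →
      (∀ x, Tendsto (fun m => u m x) atTop (𝓝 (u' x))) → (∀ m, Continuous (w m)) →
      (∀ m x, |w m x| ≤ 1) → (∀ x, Tendsto (fun m => w (ψ m) x) atTop (𝓝 (w' x))) →
      Tendsto (fun m => ∫ x, w (ψ m) x * u (ψ m) x) atTop (𝓝 (∫ x, w' x * u' x)) := by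
    intro u u' w w' h1 h2 h3 h4 h5 h6
    refine tendsto_integral_of_dominated_convergence D
      (fun m => ((h4 _).mul (h1 _)).aestronglyMeasurable) hD
      (fun m => Eventually.of_forall fun x => ?_) (Eventually.of_forall fun x => ?_)
    · rw [norm_mul, Real.norm_eq_abs, Real.norm_eq_abs]
      have := mul_le_mul (h5 (ψ m) x) (h2 (ψ m) x) (abs_nonneg _) zero_le_one
      linarith
    · exact (h6 x).mul ((h3 x).comp hψt)
  have a1 := key r r' (fun m x => φ (T m x)) (fun x => φ (S x)) hrm hr hr'
    (fun m => hφ.smooth.continuous.comp (hT m).continuous) (fun m x => hφ.bd _)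
    (fun x => (hφ.smooth.continuous.tendsto _).comp (hl x))
  have a2 := key r r' (fun m x => 1) (fun x => 1) hrm hr hr' (fun m => continuous_const)
    (fun m x => by simp) (fun x => tendsto_const_nhds)
  have a3 := key s s' (fun m x => φ x) φ hsm hs hs' (fun m => hφ.smooth.continuous)
    (fun m x => hφ.bd _) (fun x => tendsto_const_nhds)
  have a4 := key s s' (fun m x => 1) (fun x => 1) hsm hs hs' (fun m => continuous_const)
    (fun m x => by simp) (fun x => tendsto_const_nhds)
  simp only [one_mul] at a2 a4
  have a5 := ((a1.div a2 hr0).sub (a3.div a4 hs0)).abs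
  have a6 : Tendsto (fun m => 1 / ((ψ m : ℝ) + 1)) atTop (𝓝 0) :=
    tendsto_one_div_add_atTop_nhds_zero_nat.comp hψt
  have a7 : ∀ᶠ m in atTop, |(∫ x, φ (T (ψ m) x) * r (ψ m) x) / (∫ x, r (ψ m) x) -
        (∫ x, φ x * s (ψ m) x) / (∫ x, s (ψ m) x)| ≤ 1 / ((ψ m : ℝ) + 1) := by
    obtain ⟨N, hN⟩ := exists_nat_ge (max L M)
    filter_upwards [hψt.eventually (eventually_ge_atTop N)] with m hm
    have hm' : (N:ℝ) ≤ ψ m := by exact_mod_cast hm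
    exact hc (ψ m) φ (hφ.mono ((le_max_left _ _).trans (hN.trans hm'))
      ((le_max_right _ _).trans (hN.trans hm')))
  have a8 := le_of_tendsto_of_tendsto a5 a6 a7
  exact sub_eq_zero.1 (abs_eq_zero.1 (le_antisymm a8 (abs_nonneg _)))

lemma test_of_real {g g' : ℝ → ℝ} (hg : ∀ t, HasDerivAt g (g' t) t) (h0 : ∀ t, |g t| ≤ 1)
    (h1 : ∀ t, |g' t| ≤ 1) (h2 : ∀ s t, |g' s - g' t| ≤ |s - t|) (l : E n →L[ℝ] ℝ) :
    Test ‖l‖ (‖l‖ * ‖l‖) (fun x => g (l x)) := by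
  have hd : ∀ x, HasFDerivAt (fun x => g (l x)) (g' (l x) • l) x := fun x =>
    (hg (l x)).comp_hasFDerivAt x l.hasFDerivAt
  have hc : Continuous g' := by
    refine (LipschitzWith.of_dist_le_mul (K := 1) fun s t => ?_).continuous
    simpa [Real.dist_eq] using h2 s t
  refine ⟨?_, fun x => h0 _, fun x => ?_, fun x y => ?_⟩
  · rw [contDiff_one_iff_fderiv]
    refine ⟨fun x => (hd x).differentiableAt, ?_⟩
    have : fderiv ℝ (fun x => g (l x)) = fun x => g' (l x) • l := funext fun x => (hd x).fderiv
    rw [this]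
    fun_prop
  · rw [(hd x).fderiv, norm_smul, Real.norm_eq_abs]
    exact (mul_le_mul_of_nonneg_right (h1 _) (norm_nonneg _)).trans (by rw [one_mul])
  · rw [(hd x).fderiv, (hd y).fderiv, ← sub_smul, norm_smul, Real.norm_eq_abs]
    have a := h2 (l x) (l y)
    rw [← map_sub, ← Real.norm_eq_abs (l (x - y))] at a
    have := mul_le_mul_of_nonneg_right (a.trans (l.le_opNorm _)) (norm_nonneg l)
    linarith

theorem map_eq_of_test {ν μ : Measure (E n)} [IsFiniteMeasure ν] [IsFiniteMeasure μ]
    {T : E n → E n} (hT : Continuous T)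
    (h : ∀ (L M : ℝ) (φ : E n → ℝ), Test L M φ → ∫ x, φ (T x) ∂ν = ∫ x, φ x ∂μ) :
    ν.map T = μ := by
  refine Measure.ext_of_charFun (funext fun ξ => ?_)
  have key : ∀ m : Measure (E n), IsFiniteMeasure m → charFun m ξ =
      ((∫ x, Real.cos (innerSL ℝ ξ x) ∂m : ℝ) : ℂ) + ((∫ x, Real.sin (innerSL ℝ ξ x) ∂m : ℝ) : ℂ) * Complex.I := by
    intro m _
    rw [charFun_apply, ← integral_complex_ofReal, ← integral_complex_ofReal, ← integral_mul_const,
      ← integral_add]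
    · refine integral_congr_ae (Eventually.of_forall fun x => ?_)
      simp only [innerSL_apply_apply]
      rw [Complex.exp_mul_I, real_inner_comm]
      simp
    · refine Integrable.of_bound (C := 1) (by fun_prop) (Eventually.of_forall fun x => ?_)
      rw [Complex.norm_real]; exact Real.abs_cos_le_one _
    · refine Integrable.of_bound (C := 1) (by fun_prop) (Eventually.of_forall fun x => ?_)
      rw [norm_mul, Complex.norm_real, Complex.norm_I, mul_one]; exact Real.abs_sin_le_one _
  have : IsFiniteMeasure (ν.map T) := Measure.isFiniteMeasure_map ν T
  rw [key _ this, key μ inferInstance, integral_map hT.aemeasurable, integral_map hT.aemeasurable]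
  · rw [h _ _ _ (test_of_real (g' := fun t => -Real.sin t) Real.hasDerivAt_cos
        Real.abs_cos_le_one (fun t => by rw [abs_neg]; exact Real.abs_sin_le_one t)
        (fun s t => by
          rw [neg_sub_neg, abs_sub_comm]; exact Real.abs_sin_sub_sin_le s t) (innerSL ℝ ξ)),
      h _ _ _ (test_of_real Real.hasDerivAt_sin
        Real.abs_sin_le_one Real.abs_cos_le_one Real.abs_cos_sub_cos_le (innerSL ℝ ξ))]
  · exact (by fun_prop : Continuous _).aestronglyMeasurable
  · exact (by fun_prop : Continuous _).aestronglyMeasurable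

end
end SC

namespace SC
set_option maxSynthPendingDepth 3
section

/-- powers of `x^2+d` -/
noncomputable def qq (d s x : ℝ) : ℝ := (x ^ 2 + d) ^ s

/-- bounded functions -/
def Bd (f : ℝ → ℝ) : Prop := ∃ C, ∀ x, |f x| ≤ C

lemma Bd.add {f g : ℝ → ℝ} (hf : Bd f) (hg : Bd g) : Bd fun x => f x + g x := by
  obtain ⟨C, hC⟩ := hf
  obtain ⟨D, hD⟩ := hg
  exact ⟨C + D, fun x => (abs_add_le _ _).trans (add_le_add (hC x) (hD x))⟩

lemma Bd.cmul {f : ℝ → ℝ} (hf : Bd f) (c : ℝ) : Bd fun x => c * f x := by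
  obtain ⟨C, hC⟩ := hf
  exact ⟨|c| * C, fun x => by rw [abs_mul]; exact mul_le_mul_of_nonneg_left (hC x) (abs_nonneg _)⟩

lemma Bd.sub {f g : ℝ → ℝ} (hf : Bd f) (hg : Bd g) : Bd fun x => f x - g x := by
  have := hf.add (hg.cmul (-1))
  simpa [sub_eq_add_neg] using this

lemma Bd.congr {f g : ℝ → ℝ} (hf : Bd f) (h : ∀ x, g x = f x) : Bd g := by
  rwa [show g = f from funext h]

variable {d : ℝ}

lemma qq_w (hd : 0 < d) (x : ℝ) : 0 < x ^ 2 + d := by positivity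

lemma qq_pos (hd : 0 < d) (s x : ℝ) : 0 < qq d s x := Real.rpow_pos_of_pos (qq_w hd x) s

lemma qq_mul (hd : 0 < d) (s x : ℝ) : x ^ 2 * qq d (s - 1) x = qq d s x - d * qq d (s - 1) x := by
  have : qq d s x = qq d (s - 1) x * (x ^ 2 + d) := by
    unfold qq
    nth_rw 3 [← Real.rpow_one (x ^ 2 + d)]
    rw [← Real.rpow_add (qq_w hd x)]
    simp
  rw [this]; ring

lemma qq_der (hd : 0 < d) (s x : ℝ) : HasDerivAt (qq d s) (2 * s * x * qq d (s - 1) x) x := by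
  have h1 : HasDerivAt (fun x : ℝ => x ^ 2 + d) (2 * x) x := by
    simpa using (hasDerivAt_pow 2 x).add_const d
  have h2 := h1.rpow_const (p := s) (Or.inl (qq_w hd x).ne')
  convert! h2 using 1
  unfold qq; ring

lemma qq_anti (hd : 0 < d) {s : ℝ} (hs : s ≤ 0) : AntitoneOn (qq d s) (Set.Ici 0) := by
  intro x hx y hy hxy
  refine Real.rpow_le_rpow_of_nonpos (qq_w hd x) ?_ hs
  have := pow_le_pow_left₀ hx hxy 2
  linarith

lemma qq_bd (hd : 0 < d) {s : ℝ} (hs : s ≤ 0) : Bd (qq d s) := by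
  refine ⟨d ^ s, fun x => ?_⟩
  rw [abs_of_pos (qq_pos hd s x)]
  exact Real.rpow_le_rpow_of_nonpos hd (by nlinarith) hs

lemma qq_bd2 (hd : 0 < d) {s : ℝ} (hs : s ≤ 0) : Bd fun x => x ^ 2 * qq d (s - 1) x := by
  refine Bd.congr ((qq_bd hd hs).sub ((qq_bd hd (show s - 1 ≤ 0 by linarith)).cmul d)) fun x => ?_
  exact qq_mul hd s x

lemma qq_bd1 (hd : 0 < d) {s : ℝ} (hs : s ≤ 0) : Bd fun x => x * qq d (s - 1) x := by
  obtain ⟨C, hC⟩ := (qq_bd2 hd hs).add (qq_bd hd (show s - 1 ≤ 0 by linarith))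
  refine ⟨C, fun x => ?_⟩
  have h0 := (le_abs_self _).trans (hC x)
  have := qq_pos hd (s - 1) x
  rw [abs_mul, abs_of_pos this]
  have : |x| ≤ x ^ 2 + 1 := by rw [← sq_abs]; nlinarith [sq_nonneg (|x| - 1)]
  nlinarith

lemma drift_ex (hd : 0 < d) {r : ℝ} (hr : -(1/2) ≤ r) (hr0 : r ≤ 0) :
    ∃ β, Drift (fun x => x * qq d r x + d * x) d β := by
  set b : ℝ → ℝ := fun x => x * qq d r x + d * x with hb
  let D1 : ℝ → ℝ := fun x => (1 + 2 * r) * qq d r x - 2 * r * d * qq d (r - 1) x + d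
  let D2 : ℝ → ℝ := fun x => (1 + 2 * r) * (2 * r) * (x * qq d (r - 1) x)
    - 4 * r * d * (r - 1) * (x * qq d (r - 1 - 1) x)
  let D3 : ℝ → ℝ := fun x => (1 + 2 * r) * (2 * r) * (qq d (r - 1) x + 2 * (r - 1) * (x ^ 2 * qq d (r - 1 - 1) x))
    - 4 * r * d * (r - 1) * (qq d (r - 1 - 1) x + 2 * (r - 1 - 1) * (x ^ 2 * qq d (r - 1 - 1 - 1) x))
  have h1 : ∀ x, HasDerivAt b (D1 x) x := fun x => by
    have := ((hasDerivAt_id x).mul (qq_der hd r x)).add ((hasDerivAt_id x).const_mul d)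
    refine this.congr_deriv ?_
    have e := qq_mul hd r x
    simp only [D1, id]
    linear_combination 2 * r * e
  have h2 : ∀ x, HasDerivAt D1 (D2 x) x := fun x => by
    have := (((qq_der hd r x).const_mul (1 + 2 * r)).sub
      ((qq_der hd (r - 1) x).const_mul (2 * r * d))).add_const d
    refine this.congr_deriv ?_
    simp only [D2]; ring
  have h3 : ∀ x, HasDerivAt D2 (D3 x) x := fun x => by
    have := ((((hasDerivAt_id x).mul (qq_der hd (r - 1) x))).const_mul ((1 + 2 * r) * (2 * r))).sub
      ((((hasDerivAt_id x).mul (qq_der hd (r - 1 - 1) x))).const_mul (4 * r * d * (r - 1)))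
    refine this.congr_deriv ?_
    simp only [D3, id]; ring
  have e1 : deriv b = D1 := funext fun x => (h1 x).deriv
  have e2 : deriv D1 = D2 := funext fun x => (h2 x).deriv
  have e3 : deriv D2 = D3 := funext fun x => (h3 x).deriv
  have i2 : iteratedDeriv 2 b = D2 := by
    rw [iteratedDeriv_succ, iteratedDeriv_one, e1, e2]
  have i3 : iteratedDeriv 3 b = D3 := by rw [iteratedDeriv_succ, i2, e3]
  have b1 : Bd D1 := (((qq_bd hd hr0).cmul _).sub ((qq_bd hd (by linarith)).cmul _)).add ⟨|d|, fun _ => le_rfl⟩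
  have b2 : Bd D2 := ((qq_bd1 hd hr0).cmul _).sub ((qq_bd1 hd (by linarith)).cmul _)
  have b3 : Bd D3 := (((qq_bd hd (by linarith)).add ((qq_bd2 hd (by linarith)).cmul _)).cmul _).sub
    (((qq_bd hd (by linarith)).add ((qq_bd2 hd (by linarith)).cmul _)).cmul _)
  obtain ⟨C1, hC1⟩ := b1
  obtain ⟨C2, hC2⟩ := b2
  obtain ⟨C3, hC3⟩ := b3
  refine ⟨max C1 (max C2 C3), ?_, ?_, hd, ?_, ?_, ?_, ?_, ?_⟩
  · have : ContDiff ℝ 3 (qq d r) := by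
      unfold qq
      exact ContDiff.rpow_const_of_ne (by fun_prop) fun x => (qq_w hd x).ne'
    rw [hb]
    fun_prop
  · intro x
    simp only [hb, qq]
    ring_nf
  · intro x
    rw [e1]
    simp only [D1]
    have p1 := qq_pos hd r x
    have p2 := qq_pos hd (r - 1) x
    have : 0 ≤ (1 + 2 * r) * qq d r x := mul_nonneg (by linarith) p1.le
    have : 0 ≤ (- r) * d * qq d (r - 1) x := mul_nonneg (mul_nonneg (by linarith) hd.le) p2.le
    linarith
  · intro x
    rw [e1]
    exact (le_abs_self _).trans ((hC1 x).trans (le_max_left _ _))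
  · intro x
    rw [norm_iteratedFDeriv_eq_norm_iteratedDeriv, i2]
    exact (hC2 x).trans ((le_max_left _ _).trans (le_max_right _ _))
  · intro x
    rw [norm_iteratedFDeriv_eq_norm_iteratedDeriv, i3]
    exact (hC3 x).trans ((le_max_right _ _).trans (le_max_right _ _))
  · refine AntitoneOn.concaveOn_of_deriv (convex_Ici 0)
      (continuous_iff_continuousAt.2 fun x => (h1 x).continuousAt).continuousOn
      (fun x _ => (h1 x).differentiableAt.differentiableWithinAt) ?_
    rw [e1]
    intro x hx y hy hxy
    rw [interior_Ici, Set.mem_Ioi] at hx hy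
    have a1 := qq_anti hd hr0 (Set.mem_Ici.2 hx.le) (Set.mem_Ici.2 hy.le) hxy
    have a2 := qq_anti hd (show r - 1 ≤ 0 by linarith) (Set.mem_Ici.2 hx.le) (Set.mem_Ici.2 hy.le) hxy
    have := mul_le_mul_of_nonneg_left a1 (show 0 ≤ 1 + 2 * r by linarith)
    have := mul_le_mul_of_nonneg_left a2 (show 0 ≤ (-r) * d from mul_nonneg (by linarith) hd.le)
    simp only [D1]
    linarith

/-- the regularized one-dimensional potential -/
noncomputable def vd (p d x : ℝ) : ℝ := qq d (p / 2) x / p + d / 2 * x ^ 2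

lemma vd_pot {p : ℝ} (hp1 : 1 ≤ p) (hd : 0 < d) :
    Pot (vd p d) (fun x => x * qq d (p / 2 - 1) x + d * x) d := by
  refine ⟨fun x => ?_, fun x => ?_⟩
  · have h1 : HasDerivAt (fun x : ℝ => x ^ 2) (2 * x) x := by simpa using hasDerivAt_pow 2 x
    have := ((qq_der hd (p / 2) x).div_const p).add (h1.const_mul (d / 2))
    refine this.congr_deriv ?_
    have : p ≠ 0 := by linarith
    field_simp
  · have := qq_pos hd (p / 2) x
    have : 0 ≤ qq d (p / 2) x / p := by positivity
    unfold vd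
    linarith

lemma abs_rpow_sq (p x : ℝ) : |x| ^ p = (x ^ 2) ^ (p / 2) := by
  rw [← sq_abs, ← Real.rpow_natCast, ← Real.rpow_mul (abs_nonneg x)]
  congr 1
  push_cast; ring

lemma vd_ge {p : ℝ} (hp1 : 1 ≤ p) (hd : 0 < d) (x : ℝ) : |x| ^ p / p ≤ vd p d x := by
  unfold vd
  have h1 : |x| ^ p ≤ qq d (p / 2) x := by
    rw [abs_rpow_sq]
    exact Real.rpow_le_rpow (sq_nonneg x) (by linarith) (by linarith)
  have h2 : |x| ^ p / p ≤ qq d (p / 2) x / p := div_le_div_of_nonneg_right h1 (by linarith)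
  have : 0 ≤ d / 2 * x ^ 2 := by positivity
  linarith

lemma vd_lim {p : ℝ} (hp1 : 1 ≤ p) {dm : ℕ → ℝ} (h : Tendsto dm atTop (𝓝 0)) (x : ℝ) :
    Tendsto (fun m => vd p (dm m) x) atTop (𝓝 (|x| ^ p / p)) := by
  have h1 : Tendsto (fun m => x ^ 2 + dm m) atTop (𝓝 (x ^ 2)) := by
    simpa using h.const_add (x ^ 2)
  have h2 := (h1.rpow_const (p := p / 2) (Or.inr (by linarith))).div_const p
  have h3 := ((h.div_const 2).mul_const (x ^ 2))
  have := h2.add h3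
  rw [← abs_rpow_sq] at this
  simpa [vd, qq, div_mul_eq_mul_div] using this

lemma rho_vd_le {n : ℕ} {p : ℝ} (hp1 : 1 ≤ p) (hd : 0 < d) (x : E n) :
    rho (vd p d) x ≤ rho (fun t => |t| ^ p / p) x :=
  Real.exp_le_exp.2 (neg_le_neg (Finset.sum_le_sum fun i _ => vd_ge hp1 hd _))

lemma rho_vd_lim {n : ℕ} {p : ℝ} (hp1 : 1 ≤ p) {dm : ℕ → ℝ} (h : Tendsto dm atTop (𝓝 0)) (x : E n) :
    Tendsto (fun m => rho (vd p (dm m)) x) atTop (𝓝 (rho (fun t => |t| ^ p / p) x)) := by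
  unfold rho
  exact (Real.continuous_exp.tendsto _).comp
    (tendsto_finsetSum _ fun i _ => vd_lim hp1 h (x i)).neg

/-- integrability of the limit density -/
lemma rho0_int {n : ℕ} {p : ℝ} (hp1 : 1 ≤ p) :
    Integrable fun x : E n => rho (fun t => |t| ^ p / p) x := by
  have hb : ∀ t : ℝ, |t| - 1 ≤ |t| ^ p / p := fun t => by
    have h := one_add_mul_self_le_rpow_one_add (s := |t| - 1) (by linarith [abs_nonneg t]) hp1
    rw [add_sub_cancel] at h
    rw [le_div_iff₀ (by linarith)]
    linarith
  have h1 : Integrable fun t : ℝ => Real.exp (-(|t| ^ p / p)) := by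
    have h2 : Integrable fun t : ℝ => Real.exp 1 * Real.exp (-|t|) := by
      refine Integrable.const_mul ?_ _
      rw [← integrableOn_univ, ← Set.Iic_union_Ioi (a := (0:ℝ))]
      refine IntegrableOn.union ?_ ?_
      · exact (integrableOn_exp_Iic 0).congr_fun (fun x hx => by
          rw [Set.mem_Iic] at hx; simp [abs_of_nonpos hx]) measurableSet_Iic
      · exact (integrableOn_exp_neg_Ioi 0).congr_fun (fun x hx => by
          rw [Set.mem_Ioi] at hx; simp [abs_of_pos hx]) measurableSet_Ioi
    refine h2.mono' ?_ (Eventually.of_forall fun t => ?_)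
    · have : Continuous fun t : ℝ => |t| ^ p := continuous_abs.rpow_const fun _ => Or.inr (by linarith)
      exact (by fun_prop : Continuous _).aestronglyMeasurable
    · rw [Real.norm_of_nonneg (Real.exp_pos _).le, ← Real.exp_add]
      exact Real.exp_le_exp.2 (by linarith [hb t])
  have h3 := Integrable.fintype_prod (ι := Fin n) (f := fun _ (t : ℝ) => Real.exp (-(|t| ^ p / p)))
    (μ := fun _ => volume) fun _ => h1
  have h4 := (PiLp.volume_preserving_ofLp (Fin n)).integrable_comp_of_integrable h3
  refine h4.congr (Eventually.of_forall fun x => ?_)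
  simp [rho, Real.exp_sum, ← Finset.sum_neg_distrib]

end
end SC

namespace SC
set_option maxSynthPendingDepth 3
section
variable {n : ℕ} {ι : Type} [Fintype ι]

/-- sum of exponentials of affine functions -/
noncomputable def lse (l : ι → E n →L[ℝ] ℝ) (c : ι → ℝ) (x : E n) : ℝ := ∑ i, Real.exp (l i x + c i)

/-- the associated density -/
noncomputable def lsf (K : ℝ) (l : ι → E n →L[ℝ] ℝ) (c : ι → ℝ) (x : E n) : ℝ :=
  Real.exp (-(1 / K) * Real.log (lse l c x))

lemma lse_pos [Nonempty ι] (l : ι → E n →L[ℝ] ℝ) (c : ι → ℝ) (x : E n) : 0 < lse l c x :=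
  Finset.sum_pos (fun _ _ => Real.exp_pos _) Finset.univ_nonempty

lemma lse_smooth (l : ι → E n →L[ℝ] ℝ) (c : ι → ℝ) : ContDiff ℝ 3 (lse l c) := by
  unfold lse
  fun_prop

lemma aff_iter (l : E n →L[ℝ] ℝ) (c : ℝ) {i : ℕ} (h1 : 1 ≤ i) (h3 : i ≤ 3) (x : E n) :
    ‖iteratedFDeriv ℝ i (fun y => l y + c) x‖ ≤ ‖l‖ := by
  rw [iter_add_const l.contDiff c h1 h3]
  have hf : fderiv ℝ (fun y => l y) = fun _ => l := funext fun y => l.fderiv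
  obtain ⟨j, rfl⟩ : ∃ j, i = j + 1 := ⟨i - 1, by omega⟩
  rw [← norm_iteratedFDeriv_fderiv, hf]
  rcases Nat.eq_zero_or_pos j with rfl | hj
  · simp
  · rw [iteratedFDeriv_const_of_ne (by omega)]
    simp

lemma lse_RB (l : ι → E n →L[ℝ] ℝ) (c : ι → ℝ) : ∃ A, 1 ≤ A ∧ RB A (lse l c) := by
  set B := 1 + ∑ i, ‖l i‖ with hB
  have hB1 : 1 ≤ B := by
    have : 0 ≤ ∑ i, ‖l i‖ := Finset.sum_nonneg fun i _ => norm_nonneg _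
    linarith
  have hl : ∀ i, ‖l i‖ ≤ B := fun i => by
    have := Finset.single_le_sum (f := fun i => ‖l i‖) (fun i _ => norm_nonneg _) (Finset.mem_univ i)
    linarith
  refine ⟨max 1 (cexp * B ^ 3), le_max_left _ _, fun i h1 h3 x => ?_⟩
  have hs : ∀ j, ContDiff ℝ 3 fun y => Real.exp (l j y + c j) := fun j => by fun_prop
  have e : iteratedFDeriv ℝ i (lse l c) x =
      ∑ j, iteratedFDeriv ℝ i (fun y => Real.exp (l j y + c j)) x := by
    unfold lse
    exact iteratedFDeriv_fun_sum_apply fun j _ => ((hs j).of_le (cast_le3 h3)).contDiffAt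
  rw [e, lse, Finset.mul_sum]
  refine norm_sum_le_of_le _ fun j _ => ?_
  have := exp_bd hB1 (w := fun y => l j y + c j) (by fun_prop)
    (fun i h1 h3 x => (aff_iter (l j) (c j) h1 h3 x).trans (hl j)) i h1 h3 x
  exact this.trans (mul_le_mul_of_nonneg_right (le_max_right _ _) (Real.exp_pos _).le)

lemma lse_lc [Nonempty ι] (l : ι → E n →L[ℝ] ℝ) (c : ι → ℝ) {a b : ℝ} (ha : 0 < a) (hb : 0 < b)
    (hab : a + b = 1) (x y : E n) :
    Real.log (lse l c (a • x + b • y)) ≤ a * Real.log (lse l c x) + b * Real.log (lse l c y) := by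
  have px := lse_pos l c x
  have py := lse_pos l c y
  set X := lse l c x with hX
  set Y := lse l c y with hY
  have h : lse l c (a • x + b • y) ≤ X ^ a * Y ^ b := by
    have h1 : ∀ i, Real.exp (l i (a • x + b • y) + c i) ≤
        (X ^ a * Y ^ b) * (a * (Real.exp (l i x + c i) / X) + b * (Real.exp (l i y + c i) / Y)) := by
      intro i
      have := Real.geom_mean_le_arith_mean2_weighted ha.le hb.le
        (div_pos (Real.exp_pos (l i x + c i)) px).le (div_pos (Real.exp_pos (l i y + c i)) py).le hab
      have h2 := mul_le_mul_of_nonneg_left this (by positivity : 0 ≤ X ^ a * Y ^ b)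
      refine le_trans (le_of_eq ?_) h2
      rw [Real.div_rpow (Real.exp_pos _).le px.le, Real.div_rpow (Real.exp_pos _).le py.le,
        ← Real.exp_mul, ← Real.exp_mul]
      have : X ^ a ≠ 0 := (Real.rpow_pos_of_pos px a).ne'
      have : Y ^ b ≠ 0 := (Real.rpow_pos_of_pos py b).ne'
      field_simp
      rw [← Real.exp_add]
      congr 1
      simp only [map_add, map_smul, smul_eq_mul]
      linear_combination (-c i) * hab
    refine (Finset.sum_le_sum fun i _ => h1 i).trans (le_of_eq ?_)
    rw [← Finset.mul_sum, Finset.sum_add_distrib, ← Finset.mul_sum, ← Finset.mul_sum,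
      ← Finset.sum_div, ← Finset.sum_div]
    change _ * (a * (X / X) + b * (Y / Y)) = _
    rw [div_self px.ne', div_self py.ne', mul_one, mul_one, hab, mul_one]
  refine (Real.log_le_log (lse_pos l c _) h).trans (le_of_eq ?_)
  rw [Real.log_mul (Real.rpow_pos_of_pos px a).ne' (Real.rpow_pos_of_pos py b).ne', Real.log_rpow px,
    Real.log_rpow py]

lemma lsf_Rc [Nonempty ι] {K F : ℝ} (hK : 0 < K) (l : ι → E n →L[ℝ] ℝ) (c : ι → ℝ)
    (hu : UC (lse l c)) (hF : ∀ x, lsf K l c x ≤ F) : ∃ A G, 1 ≤ A ∧ Rc A F G (lsf K l c) := by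
  obtain ⟨A, hA, hrb⟩ := lse_RB l c
  have hp := lse_pos l c
  have hs := lse_smooth l c
  have hls : ContDiff ℝ 3 fun x => Real.log (lse l c x) := hs.log fun x => (hp x).ne'
  have hws : ContDiff ℝ 3 fun x => -(1 / K) * Real.log (lse l c x) := contDiff_const.mul hls
  have hfs : ContDiff ℝ 3 (lsf K l c) := hws.exp
  have hfp : ∀ x, 0 < lsf K l c x := fun x => Real.exp_pos _
  set B := max 1 (1 / K * (clog * A ^ 3)) with hB
  have hR := exp_bd (le_max_left _ _ : 1 ≤ B) hws fun i h1 h3 x => by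
    rw [iter_const_mul hls _ h3, abs_neg, abs_of_pos (by positivity)]
    exact (mul_le_mul_of_nonneg_left (log_bd hA hs hp hrb h1 h3 x) (by positivity)).trans
      (le_max_right _ _)
  set A' := max 1 (cexp * B ^ 3) with hA'
  have hR' : RB A' (lsf K l c) := fun i h1 h3 x =>
    (hR i h1 h3 x).trans (mul_le_mul_of_nonneg_right (le_max_right _ _) (hfp x).le)
  have hA1 : 1 ≤ A' := le_max_left _ _
  refine ⟨A', A' * F, hA1, hfs, hfp, hF, hR', fun x => ?_, ?_, ?_⟩
  · rw [← norm_iteratedFDeriv_one]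
    exact (hR' 1 le_rfl (by norm_num) x).trans (mul_le_mul_of_nonneg_left (hF x) (by linarith))
  · intro x ε hε
    unfold lsf
    rw [hu x ε hε]
  · intro a b ha hb hab x y
    unfold lsf
    rw [← Real.exp_mul, ← Real.exp_mul, ← Real.exp_add, Real.exp_le_exp]
    have := mul_le_mul_of_nonneg_left (lse_lc l c ha hb hab x y) (by positivity : 0 ≤ 1 / K)
    linarith

/-- real signs -/
def sg (u : Fin n → ℤˣ) (i : Fin n) : ℝ := ((u i : ℤ) : ℝ)

lemma sg_pm (u : Fin n → ℤˣ) (i : Fin n) : sg u i = 1 ∨ sg u i = -1 := by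
  rcases Int.units_eq_one_or (u i) with h | h <;> simp [sg, h]

lemma sg_mul (u w : Fin n → ℤˣ) (i : Fin n) : sg (u * w) i = sg u i * sg w i := by simp [sg]

lemma sg_ex {ε : Fin n → ℝ} (hε : ∀ i, ε i = 1 ∨ ε i = -1) : ∃ u : Fin n → ℤˣ, sg u = ε := by
  classical
  refine ⟨fun i => if ε i = 1 then 1 else -1, funext fun i => ?_⟩
  rcases hε i with h | h
  · simp [sg, h]
  · have : ¬ ((-1 : ℝ) = 1) := by norm_num
    simp [sg, h, this]

/-- sign flip, as a continuous linear map -/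
noncomputable def fl (u : Fin n → ℤˣ) : E n →L[ℝ] E n :=
  (signIso (sg u)).toContinuousLinearEquiv.toContinuousLinearMap

lemma fl_apply (u : Fin n → ℤˣ) (x : E n) : fl u x = WithLp.toLp 2 fun i => sg u i * x i :=
  signIso_apply (sg_pm u) x

lemma fl_mul (u w : Fin n → ℤˣ) (x : E n) : fl u (fl w x) = fl (u * w) x := by
  simp only [fl_apply, sg_mul]
  ext i; simp [mul_assoc]

theorem approx_U {U : E n → ℝ} (hU : ConvexOn ℝ Set.univ U)
    (hUu : ∀ (x : E n) (ε : Fin n → ℝ), (∀ i, ε i = 1 ∨ ε i = -1) →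
      U (WithLp.toLp 2 fun i => ε i * x i) = U x) :
    ∃ (f : ℕ → E n → ℝ) (F : ℝ), (∀ m, ∃ A G, 1 ≤ A ∧ Rc A F G (f m)) ∧
      ∀ x, Tendsto (fun m => f m x) atTop (𝓝 (Real.exp (-(U x)))) := by
  have hc : Continuous U := by
    have := hU.continuousOn isOpen_univ
    exact continuousOn_univ.1 this
  obtain ⟨l, c, h1, h2⟩ := ConvexOn.real_univ_sSup_of_nat_affine_eq hc.lowerSemicontinuous hU
  have h1' : ∀ j x, l j x + c j ≤ U x := fun j x => h1 j x
  have h2' : ∀ x, ∀ e > 0, ∃ j, U x - e < l j x + c j := by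
    intro x e he
    have hx := congrFun h2 x
    rw [iSup_apply] at hx
    have : U x - e < ⨆ j, ((l j : E n → ℝ) + Function.const (E n) (c j)) x := by rw [hx]; linarith
    exact exists_lt_of_lt_ciSup this
  let L : (m : ℕ) → Fin (m + 1) × (Fin n → ℤˣ) → E n →L[ℝ] ℝ := fun m i =>
    ((m : ℝ) + 1) • (l i.1).comp (fl i.2)
  let Cc : (m : ℕ) → Fin (m + 1) × (Fin n → ℤˣ) → ℝ := fun m i => ((m : ℝ) + 1) * c i.1
  have hK : ∀ m : ℕ, (0:ℝ) < (m : ℝ) + 1 := fun m => by positivity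
  have hLC : ∀ m i x, L m i x + Cc m i = ((m:ℝ) + 1) * (l i.1 (fl i.2 x) + c i.1) := fun m i x => by
    simp only [L, Cc, smul_apply, ContinuousLinearMap.comp_apply, smul_eq_mul]; ring
  have low : ∀ (m : ℕ) (i : Fin (m + 1) × (Fin n → ℤˣ)) (x : E n), ((m:ℝ) + 1) * (l i.1 (fl i.2 x) + c i.1) ≤ Real.log (lse (L m) (Cc m) x) := by
    intro m i x
    rw [Real.le_log_iff_exp_le (lse_pos _ _ _), ← hLC]
    exact Finset.single_le_sum (f := fun i => Real.exp (L m i x + Cc m i))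
      (fun i _ => (Real.exp_pos _).le) (Finset.mem_univ i)
  have fl1 : ∀ x : E n, fl 1 x = x := fun x => by rw [fl_apply]; ext i; simp [sg]
  have flm : ∀ x : E n, fl (-1) x = -x := fun x => by rw [fl_apply]; ext i; simp [sg]
  have Ufl : ∀ u x, U (fl u x) = U x := fun u x => by rw [fl_apply]; exact hUu x _ (sg_pm u)
  have up : ∀ (m : ℕ) (x : E n), Real.log (lse (L m) (Cc m) x) ≤
      Real.log (((m:ℝ) + 1) * Fintype.card (Fin n → ℤˣ)) + ((m:ℝ) + 1) * U x := by
    intro m x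
    have cp : (0:ℝ) < Fintype.card (Fin n → ℤˣ) := by exact_mod_cast Fintype.card_pos
    rw [Real.log_le_iff_le_exp (lse_pos _ _ _), Real.exp_add, Real.exp_log (mul_pos (hK m) cp)]
    refine (Finset.sum_le_card_nsmul _ _ (Real.exp (((m:ℝ) + 1) * U x)) fun i _ => ?_).trans ?_
    · rw [hLC, Real.exp_le_exp]
      exact mul_le_mul_of_nonneg_left ((h1' _ _).trans (Ufl _ _).le) (hK m).le
    · rw [Finset.card_univ, Fintype.card_prod, Fintype.card_fin, nsmul_eq_mul]
      push_cast
      exact le_rfl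
  refine ⟨fun m => lsf ((m:ℝ) + 1) (L m) (Cc m), Real.exp (-(c 0)), fun m => ?_, fun x => ?_⟩
  · refine lsf_Rc (hK m) _ _ ?_ ?_
    · intro x ε hε
      obtain ⟨w, rfl⟩ := sg_ex hε
      rw [← fl_apply]
      unfold lse
      let e : Fin (m + 1) × (Fin n → ℤˣ) ≃ Fin (m + 1) × (Fin n → ℤˣ) :=
        (Equiv.refl _).prodCongr (Equiv.mulRight w)
      refine Fintype.sum_equiv e _ _ fun i => ?_
      rw [hLC, hLC, fl_mul]
      rfl
    · intro x
      refine Real.exp_le_exp.2 ?_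
      have key : ((m:ℝ) + 1) * c 0 ≤ Real.log (lse (L m) (Cc m) x) := by
        rcases le_total 0 (l 0 x) with h | h
        · refine le_trans ?_ (low m (0, 1) x)
          rw [fl1]
          exact mul_le_mul_of_nonneg_left (by simpa using h) (hK m).le
        · refine le_trans ?_ (low m (0, -1) x)
          rw [flm]
          exact mul_le_mul_of_nonneg_left (by simpa using h) (hK m).le
      have : c 0 ≤ 1 / ((m:ℝ) + 1) * Real.log (lse (L m) (Cc m) x) := by
        rw [one_div, inv_mul_eq_div, le_div_iff₀ (hK m)]; linarith
      linarith
  · unfold lsf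
    refine (Real.continuous_exp.tendsto _).comp ?_
    have e : ∀ m : ℕ, -(1 / ((m:ℝ) + 1)) * Real.log (lse (L m) (Cc m) x) =
      -(Real.log (lse (L m) (Cc m) x) / ((m:ℝ) + 1)) := fun m => by ring
    simp_rw [e]
    refine Tendsto.neg ?_
    rw [Metric.tendsto_atTop']
    intro η hη
    have lim : Tendsto (fun m : ℕ => Real.log (((m:ℝ) + 1) * Fintype.card (Fin n → ℤˣ)) / ((m:ℝ) + 1))
        atTop (𝓝 0) := by
      have cp : (0:ℝ) < Fintype.card (Fin n → ℤˣ) := by exact_mod_cast Fintype.card_pos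
      have t1 : Tendsto (fun m : ℕ => (m:ℝ) + 1) atTop atTop :=
        tendsto_atTop_add_const_right _ _ tendsto_natCast_atTop_atTop
      have t2 := (Real.isLittleO_log_id_atTop.tendsto_div_nhds_zero).comp t1
      have t3 := (tendsto_const_nhds (x := Real.log (Fintype.card (Fin n → ℤˣ)))).div_atTop t1
      have := t2.add t3
      rw [add_zero] at this
      refine this.congr fun m => ?_
      rw [Real.log_mul (hK m).ne' cp.ne', add_div]
      rfl
    obtain ⟨j, hj⟩ := h2' x η hη
    obtain ⟨N, hN⟩ := eventually_atTop.1 (lim.eventually (gt_mem_nhds hη))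
    refine ⟨max j N, fun m hm => ?_⟩
    have hmj : j < m + 1 := by have := le_max_left j N; omega
    have a1 := low m (⟨j, hmj⟩, 1) x
    rw [fl1] at a1
    have a2 := up m x
    have a3 := hN m ((le_max_right j N).trans hm.le)
    rw [div_lt_iff₀ (hK m)] at a3
    rw [Real.dist_eq, abs_lt, lt_sub_iff_add_lt, sub_lt_iff_lt_add, lt_div_iff₀ (hK m),
      div_lt_iff₀ (hK m)]
    have := mul_lt_mul_of_pos_right hj (hK m)
    constructor
    · linarith
    · linarith

end
end SC

namespace SC
set_option maxSynthPendingDepth 3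
section
variable {n : ℕ}

/-- bounded Lipschitz functions are in the metric Sobolev space of a finite measure -/
lemma memW_of_bdd_lip {Ω : Type*} [MetricSpace Ω] [MeasurableSpace Ω] [BorelSpace Ω]
    [∀ x : Ω, (𝓝[≠] x).NeBot] {μ : Measure Ω} [IsFiniteMeasure μ] {f : Ω → ℝ} {C : ℝ}
    {K : NNReal} (hC : ∀ x, |f x| ≤ C) (hK : LipschitzWith K f) : memW12Lip μ f := by
  refine ⟨hK.locallyLipschitz, ENNReal.add_lt_top.2 ⟨?_, ?_⟩⟩
  · refine lt_of_le_of_lt (lintegral_mono (g := fun _ => ENNReal.ofReal (C ^ 2)) fun x => ?_) ?_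
    · exact ENNReal.ofReal_le_ofReal (by rw [← sq_abs]; exact pow_le_pow_left₀ (abs_nonneg _) (hC x) 2)
    · rw [lintegral_const]
      exact ENNReal.mul_lt_top ENNReal.ofReal_lt_top (measure_lt_top _ _)
  · refine lt_of_le_of_lt (lintegral_mono (g := fun _ => ENNReal.ofReal ((K : ℝ) ^ 2)) fun x => ?_) ?_
    · refine ENNReal.ofReal_le_ofReal (pow_le_pow_left₀ (localLip_nonneg hK.locallyLipschitz x) ?_ 2)
      exact localLip_le K.2 (Eventually.of_forall fun y => by
        simpa [Real.dist_eq] using hK.dist_le_mul y x)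
    · rw [lintegral_const]
      exact ENNReal.mul_lt_top ENNReal.ofReal_lt_top (measure_lt_top _ _)

lemma exists_subspace (hn : 1 ≤ n) [∀ x : E n, (𝓝[≠] x).NeBot] (μ : Measure (E n)) [IsFiniteMeasure μ]
    (k : ℕ) : ∃ F : Submodule ℝ (E n → ℝ), Module.finrank ℝ F = k ∧ (∀ f ∈ F, memW12Lip μ f) := by
  let a : Fin k → E n := fun j => EuclideanSpace.single ⟨0, hn⟩ ((j : ℕ) : ℝ)
  let g : Fin k → E n → ℝ := fun j x => max 0 (1 - dist x (a j))
  have hga : ∀ i j, g j (a i) = if i = j then 1 else 0 := by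
    intro i j
    have hd : dist (a i) (a j) = |((i : ℕ) : ℝ) - ((j : ℕ) : ℝ)| := by
      simp [a, Real.dist_eq]
    split_ifs with h
    · subst h; simp [g]
    · have h1 : (1 : ℝ) ≤ |((i : ℕ) : ℝ) - ((j : ℕ) : ℝ)| := by
        have h2 : ((i : ℕ) : ℤ) - ((j : ℕ) : ℤ) ≠ 0 := by
          intro h3; exact h (Fin.ext (by omega))
        have := Int.one_le_abs h2
        exact_mod_cast this
      simp only [g, hd]
      exact max_eq_left (by linarith)
  have hli : LinearIndependent ℝ g := by
    rw [Fintype.linearIndependent_iff]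
    intro c hc i
    have := congrFun hc (a i)
    simpa [Finset.sum_apply, hga] using this
  refine ⟨Submodule.span ℝ (Set.range g), ?_, ?_⟩
  · rw [finrank_span_eq_card hli, Fintype.card_fin]
  · intro f hf
    have : ∃ (C : ℝ) (K : NNReal), (∀ x, |f x| ≤ C) ∧ LipschitzWith K f := by
      induction hf using Submodule.span_induction with
      | mem f hf =>
        obtain ⟨j, rfl⟩ := hf
        refine ⟨1, 1, fun x => ?_, ?_⟩
        · have := dist_nonneg (x := x) (y := a j)
          rw [abs_of_nonneg (le_max_left _ _)]
          exact max_le zero_le_one (by linarith)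
        · refine LipschitzWith.of_dist_le_mul fun x y => ?_
          rw [Real.dist_eq, NNReal.coe_one, one_mul]
          refine (abs_max_sub_max_le_max _ _ _ _).trans (max_le (by simp) ?_)
          rw [show (1 - dist x (a j)) - (1 - dist y (a j)) = -(dist x (a j) - dist y (a j)) by ring, abs_neg]
          exact abs_dist_sub_le x y (a j)
      | zero => exact ⟨0, 0, by simp, LipschitzWith.const 0⟩
      | add f g _ _ hf hg =>
        obtain ⟨C, K, h1, h2⟩ := hf
        obtain ⟨C', K', h3, h4⟩ := hg
        exact ⟨C + C', K + K', fun x => (abs_add_le _ _).trans (add_le_add (h1 x) (h3 x)), h2.add h4⟩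
      | smul c f _ h1 =>
        obtain ⟨C, K, h1, h2⟩ := h1
        refine ⟨|c| * C, ‖c‖₊ * K, fun x => ?_, ?_⟩
        · rw [Pi.smul_apply, smul_eq_mul, abs_mul]
          exact mul_le_mul_of_nonneg_left (h1 x) (abs_nonneg _)
        · refine LipschitzWith.of_dist_le_mul fun x y => ?_
          have := mul_le_mul_of_nonneg_left (h2.dist_le_mul x y) (abs_nonneg c)
          simp only [Real.dist_eq, Pi.smul_apply, smul_eq_mul, ← mul_sub, abs_mul, NNReal.coe_mul, coe_nnnorm,
            Real.norm_eq_abs, mul_assoc] at this ⊢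
          exact this
    obtain ⟨C, K, h1, h2⟩ := this
    exact memW_of_bdd_lip h1 h2

/-- the reference density of `nuP` -/
noncomputable def r0 (p : ℝ) (x : E n) : ℝ := rho (fun t => |t| ^ p / p) x

lemma r0_cont {p : ℝ} (hp1 : 1 ≤ p) : Continuous (r0 p : E n → ℝ) := by
  have : Continuous fun t : ℝ => |t| ^ p / p :=
    (continuous_abs.rpow_const fun x => Or.inr (by linarith)).div_const p
  unfold r0 rho
  exact Real.continuous_exp.comp (continuous_finsetSum _ fun i _ =>
    this.comp ((EuclideanSpace.proj i : E n →L[ℝ] ℝ).continuous)).neg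

lemma r0_pos (p : ℝ) (x : E n) : 0 < r0 p x := rho_pos x

lemma int_r0_pos {p : ℝ} (hp1 : 1 ≤ p) : 0 < ∫ x : E n, r0 p x := by
  rw [integral_pos_iff_support_of_nonneg (fun x => (r0_pos p x).le) (rho0_int hp1)]
  have : (Function.support fun x : E n => r0 p x) = Set.univ := by
    ext x; simp [(r0_pos p x).ne']
  rw [this]
  exact isOpen_univ.measure_pos _ Set.univ_nonempty

lemma nuP_eq {p : ℝ} (hp1 : 1 ≤ p) : nuP n p =
    (ENNReal.ofReal (∫ x : E n, r0 p x))⁻¹ • (volume : Measure (E n)).withDensity fun x => ENNReal.ofReal (r0 p x) := by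
  have h : (fun x : E n => ENNReal.ofReal (Real.exp (-(∑ i, |x i| ^ p) / p))) =
      fun x => ENNReal.ofReal (r0 p x) := by
    funext x
    rw [r0, rho, neg_div, Finset.sum_div]
  unfold nuP
  rw [h, withDensity_apply _ MeasurableSet.univ, Measure.restrict_univ,
    ← ofReal_integral_eq_lintegral_ofReal (f := fun x : E n => r0 p x) (rho0_int hp1)
      (Eventually.of_forall fun x => (r0_pos p x).le)]

lemma nuP_integral {p : ℝ} (hp1 : 1 ≤ p) (g : E n → ℝ) :
    ∫ x, g x ∂(nuP n p) = (∫ x, g x * r0 p x) / ∫ x : E n, r0 p x := by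
  rw [nuP_eq hp1, integral_smul_measure, integral_withDensity_eq_integral_toReal_smul
    (r0_cont hp1).measurable.ennreal_ofReal (Eventually.of_forall fun x => ENNReal.ofReal_lt_top),
    ENNReal.toReal_inv, ENNReal.toReal_ofReal (int_r0_pos hp1).le, smul_eq_mul, div_eq_inv_mul]
  congr 1
  refine integral_congr_ae (Eventually.of_forall fun x => ?_)
  simp only [ENNReal.toReal_ofReal (r0_pos p x).le, smul_eq_mul, mul_comm]

lemma nuP_fin {p : ℝ} (hp1 : 1 ≤ p) : IsFiniteMeasure (nuP n p) := by
  rw [nuP_eq hp1]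
  have h1 : IsFiniteMeasure ((volume : Measure (E n)).withDensity fun x => ENNReal.ofReal (r0 p x)) :=
    isFiniteMeasure_withDensity_ofReal (rho0_int hp1).2
  have h2 : (ENNReal.ofReal (∫ x : E n, r0 p x))⁻¹ ≠ ⊤ :=
    ENNReal.inv_ne_top.2 (ENNReal.ofReal_pos.2 (int_r0_pos hp1)).ne'
  exact Measure.smul_finite _ h2

lemma vol_ac_nuP {p : ℝ} (hp1 : 1 ≤ p) : (volume : Measure (E n)) ≪ nuP n p := by
  rw [nuP_eq hp1]
  refine Measure.AbsolutelyContinuous.trans (μ₂ := (volume : Measure (E n)).withDensity fun x => ENNReal.ofReal (r0 p x)) ?_ ?_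
  · refine withDensity_absolutelyContinuous' (r0_cont hp1).measurable.ennreal_ofReal.aemeasurable
      (Eventually.of_forall fun x => (ENNReal.ofReal_pos.2 (r0_pos p x)).ne')
  · exact Measure.absolutelyContinuous_smul (ENNReal.inv_ne_zero.2 ENNReal.ofReal_ne_top)

theorem transport {p : ℝ} (hp1 : 1 ≤ p) (hp2 : p ≤ 2) {U : E n → ℝ}
    (hUconv : ConvexOn ℝ Set.univ U)
    (hUuncond : ∀ (x : E n) (ε : Fin n → ℝ),
      (∀ i, ε i = 1 ∨ ε i = -1) → U (WithLp.toLp 2 (fun i => ε i * x i)) = U x)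
    {μ : Measure (E n)}
    (hμ : μ = (nuP n p).withDensity fun x => ENNReal.ofReal (Real.exp (-(U x))))
    [IsProbabilityMeasure μ] : ∃ T : E n → E n, LipschitzWith 1 T ∧ (nuP n p).map T = μ := by
  have hUc : Continuous U := continuousOn_univ.1 (hUconv.continuousOn isOpen_univ)
  have hZ := int_r0_pos (n := n) hp1
  have hμi : ∀ g : E n → ℝ, ∫ x, g x ∂μ = (∫ x, g x * (Real.exp (-(U x)) * r0 p x)) / ∫ x : E n, r0 p x := by
    intro g
    rw [hμ, integral_withDensity_eq_integral_toReal_smul (by fun_prop)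
      (Eventually.of_forall fun x => ENNReal.ofReal_lt_top), nuP_integral hp1]
    congr 1
    refine integral_congr_ae (Eventually.of_forall fun x => ?_)
    simp only [ENNReal.toReal_ofReal (Real.exp_pos _).le, smul_eq_mul]
    ring
  have hs : ∫ x, Real.exp (-(U x)) * r0 p x = ∫ x : E n, r0 p x := by
    have h := hμi (fun _ => 1)
    simp only [integral_const, probReal_univ, smul_eq_mul, one_mul] at h
    rw [eq_div_iff hZ.ne'] at h
    linarith
  obtain ⟨f, F, hf, hlim⟩ := approx_U hUconv hUuncond
  have hdm : ∀ m : ℕ, 0 < 1 / ((m : ℝ) + 1) := fun m => by positivity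
  have hl0 : Tendsto (fun m : ℕ => 1 / ((m : ℝ) + 1)) atTop (𝓝 0) := tendsto_one_div_add_atTop_nhds_zero_nat
  have hpot := fun m : ℕ => vd_pot hp1 (hdm m)
  have hfc : ∀ m, Continuous (f m) := fun m => by
    obtain ⟨A, G, _, h⟩ := hf m
    exact h.smooth.continuous
  have key := limit_tr (n := n) (r := fun m => rho (vd p (1 / ((m : ℝ) + 1))))
    (s := fun m x => f m x * rho (vd p (1 / ((m : ℝ) + 1))) x) (r' := r0 p)
    (s' := fun x => Real.exp (-(U x)) * r0 p x) (D := fun x => (1 + |F|) * r0 p x)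
    ((rho0_int hp1).const_mul _) (fun m => rho_cont (hpot m))
    (fun m => (hfc m).mul (rho_cont (hpot m)))
    (fun m x => by
      have h1 := rho_vd_le hp1 (hdm m) x
      have h2 := r0_pos p x
      rw [abs_of_pos (rho_pos x)]
      have h3 : rho (vd p (1 / ((m : ℝ) + 1))) x ≤ r0 p x := h1
      nlinarith [abs_nonneg F])
    (fun m x => by
      obtain ⟨A, G, _, h⟩ := hf m
      have h3 : rho (vd p (1 / ((m : ℝ) + 1))) x ≤ r0 p x := rho_vd_le hp1 (hdm m) x
      rw [abs_of_pos (mul_pos (h.pos x) (rho_pos x))]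
      refine mul_le_mul ?_ h3 (rho_pos x).le (by positivity)
      linarith [h.le x, le_abs_self F])
    (fun x => rho_vd_lim hp1 hl0 x) (fun x => (hlim x).mul (rho_vd_lim hp1 hl0 x))
    hZ.ne' (by rw [hs]; exact hZ.ne')
    (fun m ε L M hε hL hM => by
      obtain ⟨A, G, hA, h⟩ := hf m
      obtain ⟨β, hβ⟩ := drift_ex (hdm m) (r := p / 2 - 1) (by linarith) (by linarith)
      exact approx_tr hβ (hpot m) hA h hε hL hM)
  obtain ⟨T, hT, h⟩ := key
  have := nuP_fin (n := n) hp1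
  refine ⟨T, hT, map_eq_of_test hT.continuous fun L M φ hφ => ?_⟩
  rw [nuP_integral hp1, hμi, h L M φ hφ, hs]

end
end SC

/-- **Spectral comparison for unconditional log-concave perturbations of `ν_pⁿ`**
(Kim–Milman + Contraction Principle): for `p ∈ [1,2]` and `μ = exp(-U)·ν_pⁿ` a
probability measure with `U` convex and unconditional,
`λ_k^Lip(ℝⁿ,|·|,μ) ≥ λ_k^Lip(ℝⁿ,|·|,ν_pⁿ)` for all `k ≥ 1`. -/
theorem spectral_comparison_unconditional_perturbation
    (n : ℕ) (hn : 1 ≤ n) (p : ℝ) (hp1 : 1 ≤ p) (hp2 : p ≤ 2)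
    (U : EuclideanSpace ℝ (Fin n) → ℝ)
    (hUconv : ConvexOn ℝ Set.univ U)
    (hUuncond : ∀ (x : EuclideanSpace ℝ (Fin n)) (ε : Fin n → ℝ),
      (∀ i, ε i = 1 ∨ ε i = -1) →
        U (WithLp.toLp 2 (fun i => ε i * x i)) = U x)
    (μ : Measure (EuclideanSpace ℝ (Fin n)))
    (hμ : μ = (nuP n p).withDensity fun x => ENNReal.ofReal (Real.exp (-(U x))))
    [IsProbabilityMeasure μ]
    (k : ℕ) (hk : 1 ≤ k) :
    lambdaLip (nuP n p) k ≤ lambdaLip μ k := by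
  obtain ⟨T, hT, hmap⟩ := SC.transport hp1 hp2 hUconv hUuncond hμ
  have hUc : Continuous U := continuousOn_univ.1 (hUconv.continuousOn isOpen_univ)
  have hac : (volume : Measure (EuclideanSpace ℝ (Fin n))) ≪ μ := by
    refine (SC.vol_ac_nuP hp1).trans ?_
    rw [hμ]
    exact withDensity_absolutelyContinuous' (by fun_prop)
      (Eventually.of_forall fun x => (ENNReal.ofReal_pos.2 (Real.exp_pos _)).ne')
  have : μ.IsOpenPosMeasure := hac.isOpenPosMeasure
  have : Nonempty (Fin n) := ⟨⟨0, hn⟩⟩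
  have : Nontrivial (EuclideanSpace ℝ (Fin n)) := inferInstance
  have : ∀ x : EuclideanSpace ℝ (Fin n), (𝓝[≠] x).NeBot := fun x => Module.punctured_nhds_neBot ℝ _ x
  exact SC.spectral_of_contraction hT hmap k hk (SC.exists_subspace hn μ k)
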